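/- arXiv:2211.11241 — 2 statements merged into one kernel-verified Lean document; each statement's English description precedes it below -/
import Mathlib

section
/- For every t ∈ (0,1), the Hausdorff dimension of C_t is strictly less than 1 if and only if C_t has an exact overlap. -/
open Filter Topology

/-- The digit set `Ω_t = {0, 3t, 3, 3t+3}`. -/
def Omega (t : ℝ) : Set ℝ := {0, 3*t, 3, 3*t+3}

/-- The projection `C_t` of the four corner Cantor set:
the set of sums `∑_{i≥1} d_i 4^{-i}` with all digits `d_i ∈ Ω_t`. -/
noncomputable def cornerC (t : ℝ) : Set ℝ :=
  {x | ∃ d : ℕ → ℝ, (∀ i, d i ∈ Omega t) ∧ x = ∑' i : ℕ, d i / 4^(i+1)}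

/-- `C_t` has an exact overlap: two distinct finite digit sequences of the same
length `k ≥ 1` with equal weighted sums. -/
def HasExactOverlap (t : ℝ) : Prop :=
  ∃ k : ℕ, 0 < k ∧ ∃ c d : Fin k → ℝ,
    (∀ n, c n ∈ Omega t) ∧ (∀ n, d n ∈ Omega t) ∧ c ≠ d ∧
    ∑ n : Fin k, c n / 4^((n : ℕ)+1) = ∑ n : Fin k, d n / 4^((n : ℕ)+1)


namespace FC
open AddMonoidAlgebra Real

abbrev Ms := AddMonoidAlgebra NNReal ℤ

noncomputable def sg (x : ℤ) (c : NNReal) : Ms := single x c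

theorem coeff_sg (x : ℤ) (c : NNReal) : (sg x c).coeff = Finsupp.single x c := rfl

theorem sg_mul (x y : ℤ) (c d : NNReal) : sg x c * sg y d = sg (x + y) (c * d) :=
  AddMonoidAlgebra.single_mul_single x y c d

theorem sg_zero_one : sg 0 1 = 1 := rfl

theorem Ms.ind {motive : Ms → Prop} (x : Ms) (zero : motive 0)
    (add : ∀ f g : Ms, motive f → motive g → motive (f + g))
    (single : ∀ a b, motive (sg a b)) : motive x :=
  AddMonoidAlgebra.induction_linear x zero add single

noncomputable def ent (μ : Ms) : ℝ := μ.coeff.sum (fun _ r => negMulLog (r : ℝ))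

noncomputable def mass (μ : Ms) : NNReal := μ.coeff.sum (fun _ r => r)

noncomputable def hh (a b : NNReal) : ℝ :=
  negMulLog (a : ℝ) + negMulLog (b : ℝ) - negMulLog ((a + b : NNReal) : ℝ)

theorem log_sum_aux {a s A S : ℝ} (ha : 0 ≤ a) (hs : a ≤ s) (hA : 0 < A) (hS : A ≤ S) :
    a * log s - a * log a ≤ a * log S - a * log A + s * A / S - a := by
  rcases ha.eq_or_lt with rfl | ha
  · have : 0 ≤ s * A / S := div_nonneg (mul_nonneg hs hA.le) (hA.le.trans hS)
    simpa using this
  have hs' : 0 < s := by linarith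
  have hS' : 0 < S := by linarith
  have h1 : log ((s * A) / (a * S)) ≤ (s * A) / (a * S) - 1 :=
    log_le_sub_one_of_pos (by positivity)
  rw [log_div (by positivity) (by positivity), log_mul (by positivity) (by positivity),
    log_mul (by positivity) (by positivity)] at h1
  have h2 := mul_le_mul_of_nonneg_left h1 ha.le
  have h3 : a * (s * A / (a * S) - 1) = s * A / S - a := by field_simp
  rw [h3] at h2
  nlinarith

theorem hh_eq (a b : NNReal) : hh a b = ((a:ℝ) * log (a + b) - a * log a) +
    ((b:ℝ) * log (a + b) - b * log b) := by
  simp [hh, negMulLog]; ring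

theorem log_sum_aux2 {a s a' s' : ℝ} (ha : 0 ≤ a) (hs : a ≤ s) (ha' : 0 ≤ a') (hs' : a' ≤ s') :
    (a * log s - a * log a) + (a' * log s' - a' * log a') ≤
      (a + a') * log (s + s') - (a + a') * log (a + a') := by
  rcases (add_nonneg ha ha').eq_or_lt with h | h
  · have h1 : a = 0 := by linarith
    have h2 : a' = 0 := by linarith
    simp [h1, h2]
  have e1 := log_sum_aux ha hs h (add_le_add hs hs')
  have e2 := log_sum_aux ha' hs' h (add_le_add hs hs')
  have e3 : s * (a + a') / (s + s') + s' * (a + a') / (s + s') = a + a' := by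
    have : s + s' ≠ 0 := by intro h0; linarith
    field_simp
  linarith

theorem hh_add (a b a' b' : NNReal) : hh a b + hh a' b' ≤ hh (a + a') (b + b') := by
  rw [hh_eq, hh_eq, hh_eq]
  have e1 := log_sum_aux2 (a := a) (s := a + b) (a' := a') (s' := a' + b') (by simp) (by simp)
    (by simp) (by simp)
  have e2 := log_sum_aux2 (a := b) (s := a + b) (a' := b') (s' := a' + b') (by simp) (by simp)
    (by simp) (by simp)
  push_cast
  have : (a:ℝ) + a' + (b + b') = a + b + (a' + b') := by ring
  rw [this]
  linarith

theorem hh_smul (c a b : NNReal) : hh (c * a) (c * b) = c * hh a b := by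
  have : (c * a + c * b : NNReal) = c * (a + b) := by ring
  simp only [hh, this]
  push_cast
  rw [negMulLog_mul, negMulLog_mul, negMulLog_mul]
  ring

@[simp] theorem hh_zero_right (a : NNReal) : hh a 0 = 0 := by simp [hh]
@[simp] theorem hh_zero_left (a : NNReal) : hh 0 a = 0 := by simp [hh]

theorem ent_eq_sum (μ : Ms) (S : Finset ℤ) (h : μ.coeff.support ⊆ S) :
    ent μ = ∑ x ∈ S, negMulLog (μ.coeff x : ℝ) := by
  unfold ent
  rw [Finsupp.sum_of_support_subset _ h _ (by simp)]

theorem mass_eq_sum (μ : Ms) (S : Finset ℤ) (h : μ.coeff.support ⊆ S) :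
    mass μ = ∑ x ∈ S, μ.coeff x := by
  unfold mass
  rw [Finsupp.sum_of_support_subset _ h _ (by simp)]

theorem supp_add (μ ν : Ms) : (μ + ν).coeff.support ⊆ μ.coeff.support ∪ ν.coeff.support := by
  rw [coeff_add]; exact Finsupp.support_add

@[simp] theorem mass_add (μ ν : Ms) : mass (μ + ν) = mass μ + mass ν := by
  rw [mass_eq_sum _ _ (supp_add μ ν), mass_eq_sum μ _ Finset.subset_union_left,
    mass_eq_sum ν _ Finset.subset_union_right, ← Finset.sum_add_distrib]
  simp

@[simp] theorem mass_zero : mass 0 = 0 := by simp [mass]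
@[simp] theorem ent_zero : ent 0 = 0 := by simp [ent]

@[simp] theorem mass_single (x : ℤ) (c : NNReal) : mass (sg x c) = c := by
  simp [mass, coeff_sg]

@[simp] theorem ent_single (x : ℤ) (c : NNReal) : ent (sg x c) = negMulLog (c : ℝ) := by
  simp [ent, coeff_sg]

noncomputable def JJ (μ ν : Ms) : ℝ := ent μ + ent ν - ent (μ + ν)

theorem JJ_eq_sum (μ ν : Ms) (S : Finset ℤ) (h : μ.coeff.support ⊆ S) (h' : ν.coeff.support ⊆ S) :
    JJ μ ν = ∑ x ∈ S, hh (μ.coeff x) (ν.coeff x) := by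
  unfold JJ hh
  rw [ent_eq_sum μ S h, ent_eq_sum ν S h',
    ent_eq_sum (μ + ν) S ((supp_add μ ν).trans (Finset.union_subset h h')),
    ← Finset.sum_add_distrib, ← Finset.sum_sub_distrib]
  simp

theorem JJ_add (μ ν μ' ν' : Ms) : JJ μ ν + JJ μ' ν' ≤ JJ (μ + μ') (ν + ν') := by
  classical
  set S := μ.coeff.support ∪ ν.coeff.support ∪ (μ'.coeff.support ∪ ν'.coeff.support)
  have h1 : μ.coeff.support ⊆ S := by intro x hx; simp only [S, Finset.mem_union]; tauto
  have h2 : ν.coeff.support ⊆ S := by intro x hx; simp only [S, Finset.mem_union]; tauto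
  have h3 : μ'.coeff.support ⊆ S := by intro x hx; simp only [S, Finset.mem_union]; tauto
  have h4 : ν'.coeff.support ⊆ S := by intro x hx; simp only [S, Finset.mem_union]; tauto
  rw [JJ_eq_sum μ ν S h1 h2, JJ_eq_sum μ' ν' S h3 h4,
    JJ_eq_sum _ _ S ((supp_add _ _).trans (Finset.union_subset h1 h3))
      ((supp_add _ _).trans (Finset.union_subset h2 h4)), ← Finset.sum_add_distrib]
  apply Finset.sum_le_sum
  intro x _
  simpa using hh_add _ _ _ _

theorem coeff_shift (μ : Ms) (y : ℤ) (c : NNReal) (z : ℤ) :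
    (μ * sg y c).coeff z = μ.coeff (z - y) * c := by
  have := AddMonoidAlgebra.coeff_mul_single_apply μ c y z
  rw [sub_eq_add_neg]
  exact this

theorem ent_shift (μ : Ms) (y : ℤ) (c : NNReal) :
    ent (μ * sg y c) = c * ent μ + mass μ * negMulLog (c : ℝ) := by
  classical
  have hs : (μ * sg y c).coeff.support ⊆ μ.coeff.support.map (addRightEmbedding y) := by
    intro z hz
    rw [Finsupp.mem_support_iff, coeff_shift] at hz
    rw [Finset.mem_map]
    exact ⟨z - y, by rw [Finsupp.mem_support_iff]; exact left_ne_zero_of_mul hz, by simp⟩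
  rw [ent_eq_sum _ _ hs, Finset.sum_map, ent_eq_sum μ _ subset_rfl, mass_eq_sum μ _ subset_rfl]
  push_cast
  rw [Finset.mul_sum, Finset.sum_mul, ← Finset.sum_add_distrib]
  apply Finset.sum_congr rfl
  intro x _
  simp only [coeff_shift, addRightEmbedding_apply, add_sub_cancel_right]
  push_cast
  rw [negMulLog_mul]

theorem mass_shift (μ : Ms) (y : ℤ) (c : NNReal) :
    mass (μ * sg y c) = mass μ * c := by
  classical
  have hs : (μ * sg y c).coeff.support ⊆ μ.coeff.support.map (addRightEmbedding y) := by
    intro z hz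
    rw [Finsupp.mem_support_iff, coeff_shift] at hz
    rw [Finset.mem_map]
    exact ⟨z - y, by rw [Finsupp.mem_support_iff]; exact left_ne_zero_of_mul hz, by simp⟩
  rw [mass_eq_sum _ _ hs, Finset.sum_map, mass_eq_sum μ _ subset_rfl, Finset.sum_mul]
  apply Finset.sum_congr rfl
  intro x _
  simp [coeff_shift]

@[simp] theorem mass_mul (μ ν : Ms) : mass (μ * ν) = mass μ * mass ν := by
  induction ν using Ms.ind with
  | zero => simp
  | add f g hf hg => rw [mul_add, mass_add, hf, hg, mass_add, mul_add]
  | single a b => simp [mass_shift]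

@[simp] theorem mass_one : mass 1 = 1 := by rw [← sg_zero_one, mass_single]
@[simp] theorem ent_one : ent 1 = 0 := by rw [← sg_zero_one, ent_single]; simp

theorem mass_prod {ι : Type*} (s : Finset ι) (f : ι → Ms) :
    mass (∏ i ∈ s, f i) = ∏ i ∈ s, mass (f i) := by
  classical
  induction s using Finset.induction_on with
  | empty => simp
  | insert a s ha ih => rw [Finset.prod_insert ha, Finset.prod_insert ha, mass_mul, ih]

@[simp] theorem mass_pow (μ : Ms) (n : ℕ) : mass (μ ^ n) = mass μ ^ n := by
  induction n with
  | zero => simp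
  | succ n ih => rw [pow_succ, mass_mul, ih, pow_succ]

theorem mass_sum {ι : Type*} (s : Finset ι) (f : ι → Ms) :
    mass (∑ i ∈ s, f i) = ∑ i ∈ s, mass (f i) := by
  classical
  induction s using Finset.induction_on with
  | empty => simp
  | insert a s ha ih => rw [Finset.sum_insert ha, Finset.sum_insert ha, mass_add, ih]

theorem JJ_mul (μ ν ρ : Ms) : mass ρ * JJ μ ν ≤ JJ (μ * ρ) (ν * ρ) := by
  induction ρ using Ms.ind with
  | zero => simp [JJ]
  | add f g hf hg =>
    rw [mul_add, mul_add]
    refine le_trans ?_ (JJ_add _ _ _ _)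
    rw [mass_add]; push_cast; linarith
  | single a b =>
    rw [mass_single]
    unfold JJ
    rw [← add_mul, ent_shift, ent_shift, ent_shift, mass_add]
    push_cast
    apply le_of_eq; ring

theorem key_superadd (μ ν ρ : Ms) (h : mass ρ = 1) :
    (ent μ - ent (μ * ρ)) + (ent ν - ent (ν * ρ)) ≤ ent (μ + ν) - ent ((μ + ν) * ρ) := by
  have := JJ_mul μ ν ρ
  rw [h] at this
  unfold JJ at this
  rw [← add_mul] at this
  push_cast at this
  linarith

theorem JJ_le (μ ν : Ms) : JJ μ ν ≤ hh (mass μ) (mass ν) := by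
  classical
  set S := μ.coeff.support ∪ ν.coeff.support
  rw [JJ_eq_sum μ ν S Finset.subset_union_left Finset.subset_union_right,
    mass_eq_sum μ S Finset.subset_union_left, mass_eq_sum ν S Finset.subset_union_right]
  generalize S = S
  induction S using Finset.induction_on with
  | empty => simp
  | insert a s ha ih =>
    rw [Finset.sum_insert ha, Finset.sum_insert ha, Finset.sum_insert ha]
    exact le_trans (add_le_add_right ih _) (hh_add _ _ _ _)

theorem ent_mul_aux (ν ρ : Ms) : mass ρ * (ent ν - negMulLog (mass ν)) ≤
    ent (ν * ρ) - negMulLog (mass (ν * ρ)) := by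
  induction ρ using Ms.ind with
  | zero => simp
  | add f g hf hg =>
    rw [mul_add]
    have := JJ_le (ν * f) (ν * g)
    unfold JJ hh at this
    rw [mass_add, mass_add]
    push_cast at *
    linarith
  | single a b =>
    rw [ent_shift, mass_shift, mass_single]
    push_cast
    rw [negMulLog_mul]
    apply le_of_eq; ring

theorem ent_mul_ge (ν ρ : Ms) (h : mass ρ = 1) (h' : mass ν = 1) : ent ν ≤ ent (ν * ρ) := by
  have := ent_mul_aux ν ρ
  simp [h, h'] at this
  exact this

theorem gibbs (μ : Ms) (S : Finset ℤ) (hS : μ.coeff.support ⊆ S) (hm : mass μ = 1) (q : ℤ → ℝ)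
    (hq : ∀ x ∈ S, 0 < q x) (hq1 : ∑ x ∈ S, q x ≤ 1) :
    ent μ ≤ ∑ x ∈ S, (μ.coeff x : ℝ) * (- log (q x)) := by
  rw [ent_eq_sum μ S hS]
  have h1 : ∑ x ∈ S, (μ.coeff x : ℝ) = 1 := by
    rw [mass_eq_sum μ S hS] at hm; exact_mod_cast hm
  have : ∀ x ∈ S, negMulLog (μ.coeff x : ℝ) ≤ (μ.coeff x : ℝ) * (- log (q x)) +
      (q x - μ.coeff x) := by
    intro x hx
    have hq' := hq x hx
    set m : ℝ := (μ.coeff x : ℝ) with hm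
    have hm0 : 0 ≤ m := by simp [hm]
    rcases hm0.eq_or_lt with h | h
    · rw [← h]; simp [hq'.le]
    · have := log_le_sub_one_of_pos (div_pos hq' h)
      rw [log_div hq'.ne' h.ne'] at this
      have h2 := mul_le_mul_of_nonneg_left this hm0
      have h3 : m * (q x / m - 1) = q x - m := by field_simp
      rw [h3] at h2
      unfold negMulLog
      nlinarith
  refine (Finset.sum_le_sum this).trans ?_
  rw [Finset.sum_add_distrib, Finset.sum_sub_distrib, h1]
  linarith

theorem ent_le_log_card (μ : Ms) (S : Finset ℤ) (hS : μ.coeff.support ⊆ S) (hm : mass μ = 1) :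
    ent μ ≤ log (S.card) := by
  have hne : S.Nonempty := by
    by_contra h
    rw [Finset.not_nonempty_iff_eq_empty] at h
    rw [mass_eq_sum μ S hS, h] at hm
    simp at hm
  have hc : (0:ℝ) < S.card := by exact_mod_cast hne.card_pos
  have := gibbs μ S hS hm (fun _ => 1 / (S.card : ℝ)) (by intros; positivity)
    (by rw [Finset.sum_const, nsmul_eq_mul]; field_simp; rfl)
  refine this.trans (le_of_eq ?_)
  rw [← Finset.sum_mul]
  have h1 : ∑ x ∈ S, (μ.coeff x : ℝ) = 1 := by
    rw [mass_eq_sum μ S hS] at hm; exact_mod_cast hm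
  rw [h1]; simp

theorem ent_ge_of_le (μ : Ms) (M : ℝ) (hm : mass μ = 1)
    (h : ∀ x, (μ.coeff x : ℝ) ≤ M) : - log M ≤ ent μ := by
  rw [ent_eq_sum μ _ subset_rfl]
  have h1 : ∑ x ∈ μ.coeff.support, (μ.coeff x : ℝ) = 1 := by
    rw [mass_eq_sum μ _ subset_rfl] at hm; exact_mod_cast hm
  calc - log M = ∑ x ∈ μ.coeff.support, (μ.coeff x : ℝ) * (- log M) := by
        rw [← Finset.sum_mul, h1, one_mul]
    _ ≤ _ := by
        apply Finset.sum_le_sum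
        intro x hx
        have hx' : (0:ℝ) < μ.coeff x := by
          have := Finsupp.mem_support_iff.1 hx
          exact_mod_cast pos_iff_ne_zero.2 this
        have := log_le_log hx' (h x)
        unfold negMulLog
        nlinarith

end FC


namespace FC
open AddMonoidAlgebra Real

noncomputable def DD (k : ℕ) : Ms := ∑ j ∈ Finset.range 4, sg ((j : ℤ) * 4 ^ k) (1/4)
noncomputable def ZZ (k : ℕ) : Ms := ∏ j ∈ Finset.range k, DD j
noncomputable def aa (μ : Ms) (k : ℕ) : ℝ :=
  ent (μ * ZZ k) - ent (μ * ZZ (k+1)) + mass μ * log 4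

@[simp] theorem mass_DD (k : ℕ) : mass (DD k) = 1 := by
  rw [DD, mass_sum]; simp
@[simp] theorem mass_ZZ (k : ℕ) : mass (ZZ k) = 1 := by
  rw [ZZ, mass_prod]; simp
theorem ZZ_succ (k : ℕ) : ZZ (k+1) = ZZ k * DD k := by
  rw [ZZ, Finset.prod_range_succ, ← ZZ]

noncomputable def Ph (ρ ν : Ms) : ℝ := ent ν - ent (ν * ρ)

theorem Ph_add (ρ μ ν : Ms) (h : mass ρ = 1) : Ph ρ μ + Ph ρ ν ≤ Ph ρ (μ + ν) :=
  key_superadd μ ν ρ h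

theorem Ph_shift (ρ μ : Ms) (h : mass ρ = 1) (y : ℤ) (c : NNReal) :
    Ph ρ (μ * sg y c) = c * Ph ρ μ := by
  unfold Ph
  rw [mul_right_comm, ent_shift, ent_shift, mass_mul, h]
  push_cast; ring

theorem Ph_mul (ρ ν μ : Ms) (h : mass ρ = 1) : mass μ * Ph ρ ν ≤ Ph ρ (ν * μ) := by
  induction μ using Ms.ind with
  | zero => simp [Ph]
  | add f g hf hg =>
    rw [mul_add]
    refine le_trans ?_ (Ph_add _ _ _ h)
    rw [mass_add]; push_cast; linarith
  | single a b => rw [Ph_shift _ _ h, mass_single]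

theorem ent_mul_pow (X U : Ms) (hU : mass U = 1) (m : ℕ) :
    ent (X * U ^ m) - ent X ≤ m * (ent (X * U) - ent X) := by
  induction m with
  | zero => simp
  | succ m ih =>
    have := Ph_mul U X (U ^ m) hU
    rw [mass_pow, hU] at this
    unfold Ph at this
    rw [pow_succ, ← mul_assoc]
    push_cast at *
    simp at this
    linarith

theorem aa_eq (μ : Ms) (k : ℕ) : aa μ k = Ph (DD k) (μ * ZZ k) + mass μ * log 4 := by
  rw [aa, Ph, ZZ_succ, mul_assoc]

theorem aa_add (μ ν : Ms) (k : ℕ) : aa μ k + aa ν k ≤ aa (μ + ν) k := by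
  rw [aa_eq, aa_eq, aa_eq, add_mul, mass_add]
  have := Ph_add (DD k) (μ * ZZ k) (ν * ZZ k) (mass_DD k)
  push_cast; linarith

theorem aa_zero (k : ℕ) : aa 0 k = 0 := by simp [aa]

theorem aa_sum {ι : Type*} (s : Finset ι) (f : ι → Ms) (k : ℕ) :
    ∑ i ∈ s, aa (f i) k ≤ aa (∑ i ∈ s, f i) k := by
  classical
  induction s using Finset.induction_on with
  | empty => simp [aa_zero]
  | insert a s ha ih =>
    rw [Finset.sum_insert ha, Finset.sum_insert ha]
    exact le_trans (by linarith) (aa_add _ _ _)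

theorem aa_shift (μ : Ms) (y : ℤ) (c : NNReal) (k : ℕ) : aa (μ * sg y c) k = c * aa μ k := by
  rw [aa_eq, aa_eq, mul_right_comm, Ph_shift _ _ (mass_DD k), mass_mul, mass_single]
  push_cast; ring

theorem aa_mul (μ ρ : Ms) (k : ℕ) : mass ρ * aa μ k ≤ aa (μ * ρ) k := by
  induction ρ using Ms.ind with
  | zero => simp [aa_zero]
  | add f g hf hg =>
    rw [mul_add]
    refine le_trans ?_ (aa_add _ _ _)
    rw [mass_add]; push_cast; linarith
  | single a b => rw [aa_shift, mass_single]

theorem ZZ_eq (k : ℕ) : ZZ k = ∑ i ∈ Finset.range (4 ^ k), sg (i : ℤ) (1 / 4 ^ k) := by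
  induction k with
  | zero => simp [ZZ, sg_zero_one]
  | succ k ih =>
    rw [ZZ_succ, ih, DD, Finset.sum_mul_sum, pow_succ]
    simp_rw [sg_mul]
    rw [Finset.sum_comm]
    have h4 : (0:ℕ) < 4 ^ k := by positivity
    have : Finset.range (4 ^ k * 4) = (Finset.range 4 ×ˢ Finset.range (4 ^ k)).image
        (fun p => p.2 + p.1 * 4 ^ k) := by
      ext x
      simp only [Finset.mem_range, Finset.mem_image, Finset.mem_product, Prod.exists]
      constructor
      · intro hx
        exact ⟨x / 4 ^ k, x % 4 ^ k, ⟨Nat.div_lt_of_lt_mul hx, Nat.mod_lt _ h4⟩,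
          by rw [mul_comm]; exact Nat.mod_add_div x (4 ^ k)⟩
      · rintro ⟨a, b, ⟨ha, hb⟩, rfl⟩
        have : a * 4 ^ k ≤ 3 * 4 ^ k := Nat.mul_le_mul_right _ (by omega)
        omega
    rw [this, Finset.sum_image, Finset.sum_product]
    · refine Finset.sum_congr rfl fun a _ => Finset.sum_congr rfl fun b _ => ?_
      push_cast
      congr 1
      rw [one_div, one_div, one_div, ← mul_inv, pow_succ]
    · rintro ⟨a, b⟩ h ⟨a', b'⟩ h' he
      simp only [Finset.coe_product, Finset.coe_range, Set.mem_prod, Set.mem_Iio] at h h' he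
      have h1 : (b + a * 4 ^ k) / 4 ^ k = a := by
        rw [Nat.add_mul_div_right _ _ h4, Nat.div_eq_of_lt h.2, zero_add]
      have h2 : (b' + a' * 4 ^ k) / 4 ^ k = a' := by
        rw [Nat.add_mul_div_right _ _ h4, Nat.div_eq_of_lt h'.2, zero_add]
      have : a = a' := by rw [← h1, he, h2]
      subst this
      simp at he
      simp [he]

theorem coeff_sum' {ι : Type*} (s : Finset ι) (f : ι → Ms) (z : ℤ) :
    (∑ i ∈ s, f i).coeff z = ∑ i ∈ s, (f i).coeff z := by
  classical
  induction s using Finset.induction_on with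
  | empty => simp
  | insert a s ha ih =>
    rw [Finset.sum_insert ha, Finset.sum_insert ha, coeff_add, Finsupp.add_apply, ih]

theorem coeff_mul_ZZ (μ : Ms) (k : ℕ) (z : ℤ) :
    (μ * ZZ k).coeff z = (∑ i ∈ Finset.range (4 ^ k), μ.coeff (z - i)) * (1 / 4 ^ k) := by
  rw [ZZ_eq, Finset.mul_sum, coeff_sum', Finset.sum_mul]
  simp_rw [coeff_shift]

theorem ent_ZZ (k : ℕ) : ent (ZZ k) = k * log 4 := by
  apply le_antisymm
  · have := ent_le_log_card (ZZ k) ((Finset.range (4 ^ k)).map Nat.castEmbedding) (by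
      intro z hz
      rw [Finsupp.mem_support_iff, ZZ_eq, coeff_sum'] at hz
      obtain ⟨i, hi, h⟩ := Finset.exists_ne_zero_of_sum_ne_zero hz
      rw [Finset.mem_map]
      refine ⟨i, hi, ?_⟩
      rw [coeff_sg, Finsupp.single_apply] at h
      by_contra hne
      simp at hne
      simp [hne] at h) (mass_ZZ k)
    simpa using this
  · have := ent_ge_of_le (ZZ k) (1 / 4 ^ k) (mass_ZZ k) (by
      intro x
      have h := coeff_mul_ZZ 1 k x
      rw [one_mul] at h
      rw [h]
      push_cast
      have : (∑ i ∈ Finset.range (4 ^ k), ((1:Ms).coeff (x - i) : ℝ)) ≤ 1 := by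
        rw [← sg_zero_one, coeff_sg]
        simp_rw [Finsupp.single_apply]
        have : ∀ i : ℕ, (((if (0:ℤ) = x - i then 1 else 0 : NNReal)) : ℝ)
            = if i = x.toNat ∧ 0 ≤ x then 1 else 0 := by
          intro i
          by_cases h : (0:ℤ) = x - i
          · rw [if_pos h, if_pos (by omega)]; simp
          · rw [if_neg h, if_neg (by omega)]; simp
        simp_rw [this]
        by_cases hx : 0 ≤ x
        · simp only [hx, and_true, Finset.sum_ite_eq']
          split_ifs <;> norm_num
        · simp [hx]
      have h0 : (0:ℝ) ≤ 1 / 4 ^ k := by positivity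
      nlinarith)
    simpa using this

theorem aa_one (k : ℕ) : aa 1 k = 0 := by
  rw [aa, one_mul, one_mul, ent_ZZ, ent_ZZ, mass_one]; push_cast; ring

theorem aa_nonneg (μ : Ms) (k : ℕ) : 0 ≤ aa μ k := by
  have := aa_mul 1 μ k
  rw [aa_one, one_mul, mul_zero] at this
  exact this

theorem aa_le (μ : Ms) (h : mass μ = 1) (k : ℕ) : aa μ k ≤ log 4 := by
  have := ent_mul_ge (μ * ZZ k) (DD k) (mass_DD k) (by simp [h])
  rw [aa, ZZ_succ, ← mul_assoc, h]
  simp; linarith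

theorem aa_tele (μ : Ms) (p d : ℕ) : ∑ j ∈ Finset.range d, aa μ (p + j) =
    ent (μ * ZZ p) - ent (μ * ZZ (p + d)) + d * (mass μ * log 4) := by
  induction d with
  | zero => simp
  | succ d ih =>
    rw [Finset.sum_range_succ, ih, aa, ← add_assoc]
    push_cast; ring

theorem ent_mul_ZZ_ge (μ : Ms) (h : mass μ = 1) (k : ℕ) : k * log 4 ≤ ent (μ * ZZ k) := by
  have := ent_mul_ge (ZZ k) μ h (mass_ZZ k)
  rwa [ent_ZZ, mul_comm (ZZ k)] at this

noncomputable def ph : Ms →+* Ms :=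
  AddMonoidAlgebra.mapDomainRingHom NNReal (AddMonoidHom.mulLeft (4:ℤ))

theorem ph_sg (x : ℤ) (c : NNReal) : ph (sg x c) = sg (4 * x) c := by
  simp only [ph, sg]
  exact AddMonoidAlgebra.mapDomain_single

theorem ph_DD (k : ℕ) : ph (DD k) = DD (k+1) := by
  simp only [DD, map_sum, ph_sg]
  refine Finset.sum_congr rfl fun j _ => ?_
  congr 1; ring

theorem ph_ZZ (k : ℕ) : ph (ZZ k) * DD 0 = ZZ (k+1) := by
  rw [ZZ, ZZ, map_prod, Finset.prod_range_succ']
  simp [ph_DD]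

theorem mass_ph (μ : Ms) : mass (ph μ) = mass μ := by
  induction μ using Ms.ind with
  | zero => simp
  | add f g hf hg => rw [map_add, mass_add, hf, hg, mass_add]
  | single a b => rw [ph_sg, mass_single, mass_single]

theorem coeff_ph_DD (μ : Ms) (x : ℤ) (j : ℕ) (hj : j < 4) :
    (ph μ * DD 0).coeff (4 * x + j) = μ.coeff x * (1/4) := by
  induction μ using Ms.ind with
  | zero => simp
  | add f g hf hg => rw [map_add ph f g, add_mul, coeff_add, Finsupp.add_apply, hf, hg, coeff_add,
      Finsupp.add_apply, add_mul]
  | single a b =>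
    rw [ph_sg, DD, Finset.mul_sum, coeff_sum']
    simp only [sg_mul, coeff_sg, Finsupp.single_apply]
    by_cases h : a = x
    · subst h
      rw [Finset.sum_eq_single_of_mem j (by simpa using hj)]
      · simp
      · intro i _ hi
        rw [if_neg]; simp; omega
    · rw [Finset.sum_eq_zero, if_neg h, zero_mul]
      intro i hi
      rw [Finset.mem_range] at hi
      rw [if_neg]; simp; omega

theorem ent_ph (μ : Ms) : ent (ph μ * DD 0) = ent μ + mass μ * log 4 := by
  classical
  have hs : (ph μ * DD 0).coeff.support ⊆ (μ.coeff.support ×ˢ Finset.range 4).image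
      (fun p => 4 * p.1 + (p.2 : ℤ)) := by
    intro z hz
    rw [Finsupp.mem_support_iff] at hz
    have hz' : z = 4 * (z / 4) + ((z % 4).toNat : ℕ) := by omega
    rw [hz', coeff_ph_DD _ _ _ (by omega)] at hz
    rw [Finset.mem_image]
    refine ⟨(z / 4, (z % 4).toNat), ?_, hz'.symm⟩
    rw [Finset.mem_product, Finsupp.mem_support_iff, Finset.mem_range]
    exact ⟨left_ne_zero_of_mul hz, by omega⟩
  rw [ent_eq_sum _ _ hs, Finset.sum_image, Finset.sum_product, ent_eq_sum μ _ subset_rfl,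
    mass_eq_sum μ _ subset_rfl]
  · push_cast
    rw [Finset.sum_mul, ← Finset.sum_add_distrib]
    refine Finset.sum_congr rfl fun x _ => ?_
    rw [Finset.sum_congr rfl (g := fun _ => negMulLog ((μ.coeff x * (1/4) : NNReal) : ℝ))]
    · rw [Finset.sum_const]
      push_cast
      rw [negMulLog_mul]
      simp [negMulLog]
      ring
    · intro j hj
      rw [coeff_ph_DD _ _ _ (by simpa using hj)]
  · rintro ⟨a, b⟩ h ⟨a', b'⟩ h' he
    simp only [Finset.coe_product, Finset.coe_range, Set.mem_prod, Set.mem_Iio] at h h' he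
    ext <;> simp <;> omega

theorem ent_ph_ZZ (μ : Ms) (k : ℕ) : ent (ph μ * ZZ (k+1)) = ent (μ * ZZ k) + mass μ * log 4 := by
  rw [← ph_ZZ, ← mul_assoc, ← map_mul, ent_ph]; simp

theorem aa_ph (μ : Ms) (k : ℕ) : aa (ph μ) (k+1) = aa μ k := by
  rw [aa, aa, ent_ph_ZZ, ent_ph_ZZ, mass_ph]
  ring

end FC


namespace FC
open AddMonoidAlgebra Real

theorem centralBinom_bound (n : ℕ) : (2 * n + 1) * (n.centralBinom) ^ 2 ≤ 16 ^ n := by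
  induction n with
  | zero => simp
  | succ n ih =>
    have h := Nat.succ_mul_centralBinom_succ n
    have h2 : (n+1)^2 * ((2 * (n + 1) + 1) * ((n+1).centralBinom) ^ 2) ≤ (n+1)^2 * 16 ^ (n+1) := by
      calc (n+1)^2 * ((2 * (n + 1) + 1) * ((n+1).centralBinom) ^ 2)
          = (2*n+3) * ((n+1) * (n+1).centralBinom)^2 := by ring
        _ = (2*n+3) * (2 * (2*n+1) * n.centralBinom)^2 := by rw [h]
        _ = (4 * (2*n+3) * (2*n+1)) * ((2*n+1) * n.centralBinom^2) := by ring
        _ ≤ (4 * (2*n+3) * (2*n+1)) * 16 ^ n := Nat.mul_le_mul_left _ ih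
        _ ≤ (16 * (n+1)^2) * 16 ^ n := Nat.mul_le_mul_right _ (by nlinarith)
        _ = _ := by ring
    exact Nat.le_of_mul_le_mul_left h2 (by positivity)

theorem cb_bound (L : ℕ) : ((16 ^ L).centralBinom) * 4 ^ L ≤ 2 ^ (2 * 16 ^ L) := by
  have h := centralBinom_bound (16 ^ L)
  have h2 : ((16 ^ L).centralBinom * 4 ^ L) ^ 2 ≤ (2 ^ (2 * 16 ^ L)) ^ 2 := by
    calc ((16 ^ L).centralBinom * 4 ^ L) ^ 2 = 16 ^ L * ((16 ^ L).centralBinom) ^ 2 := by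
          rw [mul_pow, ← pow_mul, mul_comm L 2, pow_mul]; norm_num; ring
      _ ≤ (2 * 16 ^ L + 1) * ((16 ^ L).centralBinom) ^ 2 := Nat.mul_le_mul_right _ (by omega)
      _ ≤ _ := h
      _ = _ := by rw [← pow_mul, show 2 * 16 ^ L * 2 = 4 * 16 ^ L by ring, pow_mul]; norm_num
  exact (Nat.pow_le_pow_iff_left (by norm_num)).1 h2

theorem lo_fiber (n : ℕ) (s : Fin (2 * n) → ℤ) (c : ℤ) (hc : 0 < c) (hs : ∀ j, c ≤ s j) (z b : ℤ) :
    (Finset.univ.filter (fun A : Finset (Fin (2*n)) => (z - ∑ j ∈ A, s j) / c = b)).card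
      ≤ n.centralBinom := by
  have : IsAntichain (· ⊆ ·) ((Finset.univ.filter
      (fun A : Finset (Fin (2*n)) => (z - ∑ j ∈ A, s j) / c = b) : Finset (Finset (Fin (2*n)))) :
      Set (Finset (Fin (2*n)))) := by
    intro A hA B hB hne hsub
    simp only [Finset.coe_filter, Finset.mem_univ, true_and, Set.mem_ofPred_eq] at hA hB
    obtain ⟨j, hj, hj'⟩ := Finset.exists_of_ssubset (lt_of_le_of_ne hsub hne)
    have h1 : ∑ i ∈ A, s i + s j ≤ ∑ i ∈ B, s i := by
      rw [add_comm, ← Finset.sum_insert hj']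
      apply Finset.sum_le_sum_of_subset_of_nonneg
      · intro x hx
        rcases Finset.mem_insert.1 hx with rfl | hx
        · exact hj
        · exact hsub hx
      · intro i _ _; linarith [hs i]
    have h2 : (z - ∑ j ∈ B, s j) + 1 * c ≤ z - ∑ j ∈ A, s j := by linarith [hs j]
    have h3 := Int.ediv_le_ediv hc h2
    rw [Int.add_mul_ediv_right _ _ hc.ne'] at h3
    omega
  have h := this.sperner
  rw [Fintype.card_fin, Nat.mul_div_cancel_left _ (by norm_num)] at h
  exact h

noncomputable def pr (s : ℤ) : Ms := sg 0 (1/2) + sg s (1/2)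

@[simp] theorem mass_pr (s : ℤ) : mass (pr s) = 1 := by
  rw [pr, mass_add, mass_single, mass_single]
  exact add_halves 1

theorem prod_sg {ι : Type*} (A : Finset ι) (f : ι → ℤ) (c : ι → NNReal) :
    ∏ i ∈ A, sg (f i) (c i) = sg (∑ i ∈ A, f i) (∏ i ∈ A, c i) := by
  classical
  induction A using Finset.induction_on with
  | empty => simp [sg_zero_one]
  | insert a s ha ih => rw [Finset.prod_insert ha, ih, sg_mul, Finset.sum_insert ha, Finset.prod_insert ha]

theorem prod_pr (n : ℕ) (s : Fin n → ℤ) :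
    ∏ j, pr (s j) = ∑ A : Finset (Fin n), sg (∑ j ∈ A, s j) ((1/2) ^ n) := by
  unfold pr
  simp_rw [add_comm (sg 0 (1/2))]
  rw [Finset.prod_add, Finset.powerset_univ]
  refine Finset.sum_congr rfl fun A _ => ?_
  rw [prod_sg, prod_sg, sg_mul]
  simp only [Finset.sum_const_zero, add_zero, Finset.prod_const]
  rw [← pow_add]
  congr 2
  have := Finset.card_sdiff_add_card_eq_card (Finset.subset_univ A)
  simp at this ⊢
  omega

theorem lo_ent (L k r : ℕ) (s : Fin (2 * 16 ^ L) → ℤ) (hs : ∀ j, 4 ^ k ≤ s j) :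
    ((k + L : ℕ) : ℝ) * log 4 ≤ ent ((∏ j, pr (s j)) * ZZ (k + r)) := by
  have h := ent_ge_of_le ((∏ j, pr (s j)) * ZZ (k + r)) (1 / 4 ^ (k + L)) (by
    rw [mass_mul, mass_ZZ, mass_prod]; simp) (by
    intro z
    rw [coeff_mul_ZZ, prod_pr]
    simp_rw [coeff_sum', coeff_sg]
    rw [Finset.sum_comm]
    have h1 : ∀ A : Finset (Fin (2 * 16 ^ L)), ∑ i ∈ Finset.range (4 ^ (k+r)),
        (Finsupp.single (∑ j ∈ A, s j) ((1/2 : NNReal) ^ (2 * 16 ^ L))) (z - i) =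
        if (0 ≤ z - ∑ j ∈ A, s j ∧ z - ∑ j ∈ A, s j < 4 ^ (k+r))
          then (1/2 : NNReal) ^ (2 * 16 ^ L) else 0 := by
      intro A
      simp_rw [Finsupp.single_apply]
      have : ∀ i : ℕ, (∑ j ∈ A, s j = z - i) ↔ (i = (z - ∑ j ∈ A, s j).toNat ∧ 0 ≤ z - ∑ j ∈ A, s j) := by
        intro i; omega
      simp_rw [this]
      by_cases h0 : 0 ≤ z - ∑ j ∈ A, s j
      · simp only [h0, and_true, true_and, Finset.sum_ite_eq', Finset.mem_range]
        have : ((z - ∑ j ∈ A, s j).toNat < 4 ^ (k+r)) ↔ (z - ∑ j ∈ A, s j < 4 ^ (k+r)) := by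
          zify
          rw [Int.toNat_of_nonneg h0]
        simp only [this]
      · simp only [h0, and_false, false_and, if_false, Finset.sum_const_zero]
    simp_rw [h1]
    rw [← Finset.sum_filter, Finset.sum_const]
    have hc : (Finset.univ.filter (fun A : Finset (Fin (2 * 16 ^ L)) =>
        0 ≤ z - ∑ j ∈ A, s j ∧ z - ∑ j ∈ A, s j < 4 ^ (k+r))).card ≤ (16 ^ L).centralBinom * 4 ^ r := by
      have := Finset.card_le_mul_card_image_of_maps_to (f := fun A : Finset (Fin (2 * 16 ^ L)) =>
        ((z - ∑ j ∈ A, s j) / 4 ^ k)) (s := (Finset.univ.filter (fun A : Finset (Fin (2 * 16 ^ L)) =>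
        0 ≤ z - ∑ j ∈ A, s j ∧ z - ∑ j ∈ A, s j < 4 ^ (k+r)))) (t := Finset.Ico 0 (4 ^ r : ℤ)) (by
          intro A hA
          simp only [Finset.mem_filter, Finset.mem_univ, true_and] at hA
          rw [Finset.mem_Ico]
          refine ⟨Int.ediv_nonneg hA.1 (by positivity), Int.ediv_lt_of_lt_mul (by positivity) ?_⟩
          rw [← pow_add, add_comm r k]; exact hA.2) ((16 ^ L).centralBinom) (by
          intro b _
          refine le_trans (Finset.card_le_card ?_) (lo_fiber (16 ^ L) s (4 ^ k) (by positivity) hs z b)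
          intro A hA
          simp only [Finset.mem_filter, Finset.mem_univ, true_and] at hA ⊢
          exact hA.2)
      refine this.trans (le_of_eq ?_)
      congr 1
      rw [Int.card_Ico, sub_zero]
      norm_cast
    rw [nsmul_eq_mul]
    push_cast
    have hcb := cb_bound L
    have hcb' : (((16 ^ L).centralBinom : ℕ) : ℝ) * 4 ^ L ≤ 2 ^ (2 * 16 ^ L) := by exact_mod_cast hcb
    have hc' : ((Finset.univ.filter (fun A : Finset (Fin (2 * 16 ^ L)) =>
        0 ≤ z - ∑ j ∈ A, s j ∧ z - ∑ j ∈ A, s j < 4 ^ (k+r))).card : ℝ) ≤ (((16 ^ L).centralBinom : ℕ) : ℝ) * 4 ^ r := by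
      exact_mod_cast hc
    generalize ((Finset.univ.filter (fun A : Finset (Fin (2 * 16 ^ L)) =>
        0 ≤ z - ∑ j ∈ A, s j ∧ z - ∑ j ∈ A, s j < 4 ^ (k+r))).card : ℝ) = X at hc'
    generalize (((16 ^ L).centralBinom : ℕ) : ℝ) = Y at hc' hcb'
    rw [one_div, one_div, one_div, inv_pow, ← div_eq_mul_inv, ← div_eq_mul_inv, div_div, ← one_div,
      div_le_div_iff₀ (by positivity) (by positivity), one_mul, pow_add, pow_add]
    generalize hw : (2:ℝ) ^ (2 * 16 ^ L) = w at *
    have e1 : X * (4 ^ k * 4 ^ L) ≤ (Y * 4 ^ r) * (4 ^ k * 4 ^ L) :=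
      mul_le_mul_of_nonneg_right hc' (by positivity)
    have e2 : (Y * 4 ^ L) * (4 ^ k * 4 ^ r) ≤ w * (4 ^ k * 4 ^ r) :=
      mul_le_mul_of_nonneg_right hcb' (by positivity)
    linarith)
  rw [one_div, log_inv, neg_neg, log_pow] at h
  exact h

noncomputable def mom (f : ℤ → ℝ) (μ : Ms) : ℝ := μ.coeff.sum (fun x r => (r:ℝ) * f x)

theorem mom_eq_sum (f : ℤ → ℝ) (μ : Ms) (S : Finset ℤ) (h : μ.coeff.support ⊆ S) :
    mom f μ = ∑ x ∈ S, (μ.coeff x : ℝ) * f x := by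
  unfold mom
  exact Finsupp.sum_of_support_subset _ h _ (by simp)

theorem mom_add (f : ℤ → ℝ) (μ ν : Ms) : mom f (μ + ν) = mom f μ + mom f ν := by
  classical
  rw [mom_eq_sum f _ _ (supp_add μ ν), mom_eq_sum f μ _ Finset.subset_union_left,
    mom_eq_sum f ν _ Finset.subset_union_right, ← Finset.sum_add_distrib]
  refine Finset.sum_congr rfl fun x _ => ?_
  rw [coeff_add, Finsupp.add_apply]; push_cast; ring

@[simp] theorem mom_zero (f : ℤ → ℝ) : mom f 0 = 0 := by simp [mom]

theorem mom_single (f : ℤ → ℝ) (x : ℤ) (c : NNReal) : mom f (sg x c) = c * f x := by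
  rw [mom, coeff_sg, Finsupp.sum_single_index (by simp)]

theorem mom_shift (f : ℤ → ℝ) (μ : Ms) (y : ℤ) (c : NNReal) :
    mom f (μ * sg y c) = c * mom (fun x => f (x + y)) μ := by
  induction μ using Ms.ind with
  | zero => simp
  | add f g hf hg => rw [add_mul, mom_add, mom_add, hf, hg]; ring
  | single a b => rw [sg_mul, mom_single, mom_single]; push_cast; ring

theorem mom_fun_add (f g : ℤ → ℝ) (μ : Ms) : mom (fun x => f x + g x) μ = mom f μ + mom g μ := by
  rw [mom, mom, mom, Finsupp.sum, Finsupp.sum, Finsupp.sum, ← Finset.sum_add_distrib]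
  exact Finset.sum_congr rfl fun x _ => by ring

theorem mom_fun_smul (c : ℝ) (f : ℤ → ℝ) (μ : Ms) : mom (fun x => c * f x) μ = c * mom f μ := by
  rw [mom, mom, Finsupp.sum, Finsupp.sum, Finset.mul_sum]
  exact Finset.sum_congr rfl fun x _ => by ring

theorem mom_const (c : ℝ) (μ : Ms) : mom (fun _ => c) μ = c * mass μ := by
  rw [mom, mass_eq_sum μ _ subset_rfl, Finsupp.sum]
  push_cast
  rw [Finset.mul_sum]
  exact Finset.sum_congr rfl fun x _ => by ring

theorem mom_mono (f g : ℤ → ℝ) (μ : Ms) (h : ∀ x, f x ≤ g x) : mom f μ ≤ mom g μ := by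
  rw [mom, mom, Finsupp.sum, Finsupp.sum]
  exact Finset.sum_le_sum fun x _ => mul_le_mul_of_nonneg_left (h x) (by positivity)

theorem mom_sum {ι : Type*} (f : ℤ → ℝ) (A : Finset ι) (μ : ι → Ms) :
    mom f (∑ i ∈ A, μ i) = ∑ i ∈ A, mom f (μ i) := by
  classical
  induction A using Finset.induction_on with
  | empty => simp
  | insert a s ha ih => rw [Finset.sum_insert ha, mom_add, ih, Finset.sum_insert ha]

theorem mom_pr (μ : Ms) (s : ℤ) (c : ℝ) :
    mom (fun x => ((x:ℝ) - (c + s/2))^2) (μ * pr s) = mom (fun x => ((x:ℝ) - c)^2) μ + (s:ℝ)^2/4 * mass μ := by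
  rw [pr, mul_add, mom_add, mom_shift, mom_shift, ← mom_const, ← mom_fun_add, ← mom_fun_smul,
    ← mom_fun_smul, ← mom_fun_add]
  congr 1
  funext x
  push_cast
  ring

theorem mom_prod_pr {ι : Type*} (A : Finset ι) (s : ι → ℤ) :
    mom (fun x => ((x:ℝ) - ∑ i ∈ A, (s i : ℝ)/2)^2) (∏ i ∈ A, pr (s i)) = ∑ i ∈ A, (s i : ℝ)^2/4 := by
  classical
  induction A using Finset.induction_on with
  | empty => rw [Finset.prod_empty, ← sg_zero_one, mom_single]; simp
  | insert a B ha ih =>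
    rw [Finset.prod_insert ha, mul_comm, Finset.sum_insert ha, Finset.sum_insert ha, add_comm, mom_pr, ih,
      mass_prod]
    simp
    ring

theorem mom_ZZ (μ : Ms) (q : ℕ) (c : ℝ) :
    mom (fun x => ((x:ℝ) - c)^2) (μ * ZZ q) ≤ 2 * mom (fun x => ((x:ℝ) - c)^2) μ + 2 * 16 ^ q * mass μ := by
  rw [ZZ_eq, Finset.mul_sum, mom_sum]
  have : ∀ i ∈ Finset.range (4 ^ q), mom (fun x => ((x:ℝ) - c)^2) (μ * sg (i:ℤ) (1/4^q)) ≤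
      (1/4^q) * (2 * mom (fun x => ((x:ℝ) - c)^2) μ + 2 * 16 ^ q * mass μ) := by
    intro i hi
    rw [mom_shift]
    push_cast
    refine mul_le_mul_of_nonneg_left ?_ (by positivity)
    rw [← mom_fun_smul, ← mom_const, ← mom_fun_add]
    apply mom_mono
    intro x
    have h1 : (i:ℝ) ≤ 4 ^ q := by
      rw [Finset.mem_range] at hi; exact_mod_cast hi.le
    have h2 : (i:ℝ)^2 ≤ 16 ^ q := by
      calc (i:ℝ)^2 ≤ (4^q)^2 := by gcongr
        _ = 16 ^ q := by rw [← pow_mul, mul_comm, pow_mul]; norm_num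
    nlinarith [sq_nonneg ((x:ℝ) - c - i)]
  refine (Finset.sum_le_sum this).trans (le_of_eq ?_)
  rw [Finset.sum_const, nsmul_eq_mul, Finset.card_range]
  push_cast
  field_simp

theorem sum_two_pow (A : Finset ℤ) : ∑ a ∈ A, (1/2:ℝ) ^ a.natAbs ≤ 4 := by
  classical
  obtain ⟨N, hN⟩ : ∃ N : ℕ, ∀ a ∈ A, a.natAbs < N := by
    obtain ⟨N, hN⟩ := (A.image Int.natAbs).bddAbove
    exact ⟨N+1, fun a ha => Nat.lt_succ_of_le (hN (by simp; exact ⟨a, ha, rfl⟩))⟩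
  have hsub : A ⊆ (Finset.range N).image (fun n : ℕ => (n:ℤ)) ∪ (Finset.range N).image (fun n : ℕ => -(n:ℤ)) := by
    intro a ha
    have := hN a ha
    simp only [Finset.mem_union, Finset.mem_image, Finset.mem_range]
    rcases Int.natAbs_eq a with h | h
    · left; exact ⟨_, this, h.symm⟩
    · right; exact ⟨_, this, h.symm⟩
  have hg : ∑ n ∈ Finset.range N, (1/2:ℝ)^n ≤ 2 := by
    have h := (summable_geometric_of_lt_one (r := (1/2:ℝ)) (by norm_num) (by norm_num)).sum_le_tsum
      (Finset.range N) (fun i _ => by positivity)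
    rw [tsum_geometric_of_lt_one (by norm_num) (by norm_num)] at h
    norm_num at h ⊢; exact h
  calc ∑ a ∈ A, (1/2:ℝ) ^ a.natAbs ≤ ∑ a ∈ ((Finset.range N).image (fun n : ℕ => (n:ℤ)) ∪ (Finset.range N).image (fun n : ℕ => -(n:ℤ))), (1/2:ℝ) ^ a.natAbs :=
        Finset.sum_le_sum_of_subset_of_nonneg hsub (fun _ _ _ => by positivity)
    _ ≤ ∑ a ∈ ((Finset.range N).image (fun n : ℕ => (n:ℤ))), (1/2:ℝ) ^ a.natAbs + ∑ a ∈ ((Finset.range N).image (fun n : ℕ => -(n:ℤ))), (1/2:ℝ) ^ a.natAbs := by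
        rw [← Finset.sum_union_inter]
        exact le_add_of_nonneg_right (Finset.sum_nonneg fun _ _ => by positivity)
    _ = ∑ n ∈ Finset.range N, (1/2:ℝ)^n + ∑ n ∈ Finset.range N, (1/2:ℝ)^n := by
        rw [Finset.sum_image (by intro a _ b _ h; simpa using h), Finset.sum_image (by intro a _ b _ h; simpa using h)]
        simp
    _ ≤ 4 := by linarith

theorem ent_var (μ : Ms) (hm : mass μ = 1) (q : ℕ) (c : ℝ) (v : ℝ)
    (hv : mom (fun x => ((x:ℝ) - c)^2) μ ≤ v * 16 ^ q) : ent μ ≤ q * log 4 + v + 4 := by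
  classical
  set S := μ.coeff.support with hS
  let cell : ℤ → ℤ := fun x => ⌊((x:ℝ) - c) / 4 ^ q⌋
  have h4 : (0:ℝ) < 4 ^ q := by positivity
  have hq : ∑ x ∈ S, (1 / 4 ^ q * (1/2:ℝ) ^ (cell x).natAbs * (1/4)) ≤ 1 := by
    rw [← Finset.sum_mul, ← Finset.mul_sum,
      ← Finset.sum_fiberwise_of_maps_to (t := S.image cell) (g := cell) (fun x hx => Finset.mem_image_of_mem _ hx)]
    have : ∀ a ∈ S.image cell, ∑ x ∈ S with cell x = a, (1/2:ℝ) ^ (cell x).natAbs ≤ 4 ^ q * (1/2:ℝ) ^ a.natAbs := by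
      intro a _
      rw [Finset.sum_congr rfl (g := fun _ => (1/2:ℝ) ^ a.natAbs)
        (fun x hx => by rw [(Finset.mem_filter.1 hx).2]), Finset.sum_const, nsmul_eq_mul]
      refine mul_le_mul_of_nonneg_right ?_ (by positivity)
      have hsub : (S.filter (fun x => cell x = a)) ⊆ Finset.Ico ⌈c + a * 4 ^ q⌉ (⌈c + a * 4 ^ q⌉ + 4 ^ q) := by
        intro x hx
        have := (Finset.mem_filter.1 hx).2
        rw [Int.floor_eq_iff, le_div_iff₀ h4, div_lt_iff₀ h4] at this
        rw [Finset.mem_Ico]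
        refine ⟨Int.ceil_le.2 (by linarith), ?_⟩
        have h5 := Int.le_ceil (c + a * 4 ^ q)
        have : (x:ℝ) < ((⌈c + a * 4 ^ q⌉ + 4 ^ q : ℤ) : ℝ) := by push_cast; linarith
        exact_mod_cast this
      have := Finset.card_le_card hsub
      rw [Int.card_Ico] at this
      have h6 : (⌈c + a * 4 ^ q⌉ + 4 ^ q - ⌈c + a * 4 ^ q⌉).toNat = 4 ^ q := by
        rw [add_sub_cancel_left]; norm_cast
      rw [h6] at this
      exact_mod_cast this
    have h1 := Finset.sum_le_sum this
    rw [← Finset.mul_sum] at h1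
    have h2 := sum_two_pow (S.image cell)
    have h3 : 1 / 4 ^ q * ∑ j ∈ S.image cell, ∑ x ∈ S with cell x = j, (1/2:ℝ) ^ (cell x).natAbs ≤ 4 := by
      rw [one_div, inv_mul_le_iff₀ h4]
      nlinarith
    linarith
  have h := gibbs μ S subset_rfl hm _ (fun x _ => by positivity) hq
  refine h.trans ?_
  rw [← mom_eq_sum (fun x => - log (1 / 4 ^ q * (1/2:ℝ) ^ (cell x).natAbs * (1/4))) μ S subset_rfl]
  have hb : ∀ x : ℤ, - log (1 / 4 ^ q * (1/2:ℝ) ^ (cell x).natAbs * (1/4)) ≤ (q * log 4 + 4) + (1/16^q) * ((x:ℝ)-c)^2 := by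
    intro x
    rw [log_mul (by positivity) (by norm_num), log_mul (by positivity) (by positivity), log_pow, one_div, log_inv,
      one_div, log_inv, one_div, log_inv, log_pow]
    set y := ((x:ℝ) - c) / 4 ^ q with hy
    have e1 : (1/16^q) * ((x:ℝ)-c)^2 = y^2 := by
      rw [hy, div_pow, ← pow_mul, mul_comm q 2, pow_mul]; norm_num; ring
    rw [e1]
    have e2 : ((cell x).natAbs : ℝ) ≤ |y| + 1 := by
      rw [Nat.cast_natAbs, Int.cast_abs]
      have h1 := Int.floor_le y
      have h2 := Int.lt_floor_add_one y
      have h3 : ((cell x : ℤ) : ℝ) = ((⌊y⌋ : ℤ) : ℝ) := rfl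
      rw [h3, abs_le]
      constructor
      · linarith [neg_abs_le y]
      · linarith [le_abs_self y]
    have e3 : |y| ≤ y^2 + 1/4 := by nlinarith [sq_abs y, sq_nonneg (|y| - 1/2)]
    have l2 := log_two_lt_d9
    have l2' := log_two_gt_d9
    have l4 : log 4 = 2 * log 2 := by rw [show (4:ℝ) = 2^2 by norm_num, log_pow]; norm_num
    rw [l4]
    nlinarith [sq_nonneg y]
  refine (mom_mono _ _ μ hb).trans ?_
  rw [mom_fun_add, mom_const, mom_fun_smul, hm]
  have : 1 / 16 ^ q * mom (fun x => ((x:ℝ) - c)^2) μ ≤ v := by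
    rw [one_div, inv_mul_le_iff₀ (by positivity)]; linarith
  push_cast
  linarith

theorem pair_aa (L k r : ℕ) (s : Fin (2 * 16 ^ L) → ℤ) (hs : ∀ j, 4 ^ k ≤ s j)
    (hs' : ∀ j, s j ≤ 4 ^ (k + r)) :
    (L:ℝ) * log 4 - r * log 4 - 7 ≤ ∑ l ∈ Finset.range L, aa (∏ j, pr (s j)) (k + r + l) := by
  have hm : mass (∏ j, pr (s j)) = 1 := by rw [mass_prod]; simp
  rw [aa_tele, hm]
  have h1 := lo_ent L k r s hs
  have h2 := ent_var ((∏ j, pr (s j)) * ZZ (k + r + L)) (by simp [hm]) (k + r + L) (∑ j, (s j : ℝ)/2) 3 (by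
    refine (mom_ZZ _ _ _).trans ?_
    rw [mom_prod_pr, hm]
    have : ∑ j, (s j : ℝ)^2/4 ≤ ∑ j : Fin (2 * 16 ^ L), (16:ℝ)^(k+r)/4 := by
      refine Finset.sum_le_sum fun j _ => ?_
      have a1 : (0:ℝ) ≤ s j := by
        have := (hs j); have h0 : (0:ℤ) < 4 ^ k := by positivity
        exact_mod_cast (h0.trans_le this).le
      have a2 : (s j : ℝ) ≤ 4 ^ (k+r) := by exact_mod_cast hs' j
      have a3 : (s j : ℝ)^2 ≤ 16 ^ (k+r) := by
        calc (s j:ℝ)^2 ≤ (4^(k+r))^2 := by gcongr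
          _ = 16 ^ (k+r) := by rw [← pow_mul, mul_comm, pow_mul]; norm_num
      linarith
    rw [Finset.sum_const, nsmul_eq_mul, Finset.card_univ, Fintype.card_fin] at this
    push_cast at this
    rw [pow_add (16:ℝ) (k+r) L]
    have h0 : (0:ℝ) < 16 ^ (k+r) * 16 ^ L := by positivity
    push_cast
    nlinarith)
  push_cast at *
  linarith

end FC


namespace FC
open AddMonoidAlgebra Real

noncomputable def AA (k L : ℕ) (μ : Ms) : ℝ := ∑ l ∈ Finset.range L, aa μ (k + l)

theorem AA_nonneg (k L : ℕ) (μ : Ms) : 0 ≤ AA k L μ := Finset.sum_nonneg fun _ _ => aa_nonneg _ _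

theorem AA_add (k L : ℕ) (μ ν : Ms) : AA k L μ + AA k L ν ≤ AA k L (μ + ν) := by
  rw [AA, AA, AA, ← Finset.sum_add_distrib]
  exact Finset.sum_le_sum fun _ _ => aa_add _ _ _

theorem AA_sum {ι : Type*} (k L : ℕ) (s : Finset ι) (f : ι → Ms) :
    ∑ i ∈ s, AA k L (f i) ≤ AA k L (∑ i ∈ s, f i) := by
  unfold AA
  rw [Finset.sum_comm]
  exact Finset.sum_le_sum fun _ _ => aa_sum _ _ _

theorem AA_shift (k L : ℕ) (μ : Ms) (y : ℤ) (c : NNReal) : AA k L (μ * sg y c) = c * AA k L μ := by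
  unfold AA
  simp_rw [aa_shift]
  rw [Finset.mul_sum]

theorem AA_mul (k L : ℕ) (μ ρ : Ms) : mass ρ * AA k L μ ≤ AA k L (μ * ρ) := by
  unfold AA
  rw [Finset.mul_sum]
  exact Finset.sum_le_sum fun _ _ => aa_mul _ _ _

theorem mix1 {ι : Type*} (k L M : ℕ) (I : Finset ι) (s x : ι → ℤ) (w : ι → NNReal) (B : ℝ)
    (hB : ∀ p : Fin M → ι, (∀ j, p j ∈ I) → B ≤ AA k L (∏ j, pr (s (p j)))) :
    ((∑ i ∈ I, w i : NNReal) : ℝ) ^ M * B ≤ AA k L ((∑ i ∈ I, pr (s i) * sg (x i) (w i)) ^ M) := by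
  classical
  have e : (∑ i ∈ I, pr (s i) * sg (x i) (w i)) ^ M =
      ∑ p ∈ Fintype.piFinset (fun _ : Fin M => I), ∏ j, (pr (s (p j)) * sg (x (p j)) (w (p j))) := by
    rw [← Finset.prod_univ_sum (fun _ : Fin M => I) (fun _ i => pr (s i) * sg (x i) (w i))]; simp
  have e2 : (∑ i ∈ I, w i) ^ M =
      ∑ p ∈ Fintype.piFinset (fun _ : Fin M => I), ∏ j, (w (p j)) := by
    rw [← Finset.prod_univ_sum (fun _ : Fin M => I) (fun _ i => w i)]; simp
  rw [e]
  refine le_trans ?_ (AA_sum _ _ _ _)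
  rw [← NNReal.coe_pow, e2, NNReal.coe_sum, Finset.sum_mul]
  refine Finset.sum_le_sum fun p hp => ?_
  rw [Finset.prod_mul_distrib, prod_sg, AA_shift]
  refine mul_le_mul_of_nonneg_left (hB p ?_) (by positivity)
  intro j
  exact (Fintype.mem_piFinset.1 hp) j

theorem pow_split (F G : Ms) (g : ℕ) : ∃ R : Ms, (F + G) ^ g = G ^ g + F * R := by
  induction g with
  | zero => exact ⟨0, by simp⟩
  | succ g ih =>
    obtain ⟨R, hR⟩ := ih
    refine ⟨G ^ g + R * (F + G), ?_⟩
    rw [pow_succ, hR]; ring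

theorem pow_split' (F G : Ms) (g : ℕ) : ∃ R : Ms, (F + G) ^ g = F ^ g + R := by
  obtain ⟨R, hR⟩ := pow_split G F g
  exact ⟨G * R, by rw [← hR, add_comm]⟩

theorem mix2 (k L M g : ℕ) (F G : Ms) (ε B : ℝ) (hB : 0 ≤ B) (hm : mass (F + G) = 1)
    (hε : ε ≤ mass F) (h0 : 0 ≤ ε)
    (hF : (mass F : ℝ) ^ M * B ≤ AA k L (F ^ M)) :
    (1 - (1 - ε) ^ g) ^ M * B ≤ AA k L ((F + G) ^ (g * M)) := by
  obtain ⟨R, hR⟩ := pow_split F G g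
  obtain ⟨R', hR'⟩ := pow_split' (F * R) (G ^ g) M
  rw [pow_mul, hR, add_comm, hR']
  have h1 := AA_add k L ((F * R) ^ M) R'
  have h2 := AA_nonneg k L R'
  have h3 := AA_mul k L (F ^ M) (R ^ M)
  rw [mul_pow] at h1 ⊢
  refine le_trans ?_ (h3.trans (by linarith))
  · have hm1 : (mass F : ℝ) + mass G = 1 := by
      rw [mass_add] at hm; exact_mod_cast hm
    have hm2 : (1:ℝ) = (mass G : ℝ) ^ g + mass F * mass R := by
      have := congrArg mass hR
      rw [mass_pow, hm, mass_add, mass_mul, mass_pow, one_pow] at this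
      exact_mod_cast this
    rw [mass_pow, NNReal.coe_pow]
    have h4 : (1 - (1 - ε) ^ g) ≤ mass F * mass R := by
      have : (mass G : ℝ) ^ g ≤ (1 - ε) ^ g := by
        apply pow_le_pow_left₀ (by positivity); linarith
      linarith
    have h5 : 0 ≤ (1 - (1 - ε) ^ g) := by
      have : (1 - ε) ^ g ≤ 1 := pow_le_one₀ (by linarith [(mass G).coe_nonneg]) (by linarith)
      linarith
    calc (1 - (1 - ε) ^ g) ^ M * B ≤ (mass F * mass R : ℝ) ^ M * B := by gcongr
      _ = (mass R : ℝ) ^ M * ((mass F : ℝ) ^ M * B) := by rw [mul_pow]; ring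
      _ ≤ _ := mul_le_mul_of_nonneg_left hF (by positivity)

/-- uniform distribution -/
noncomputable def un (E : Finset ℤ) : Ms := ∑ x ∈ E, sg x (1 / (E.card : NNReal))

theorem mass_un (E : Finset ℤ) (h : E.Nonempty) : mass (un E) = 1 := by
  rw [un, mass_sum]
  simp only [mass_single, Finset.sum_const, nsmul_eq_mul]
  have : (E.card : NNReal) ≠ 0 := by exact_mod_cast h.card_pos.ne'
  field_simp

theorem matching (c : NNReal) (k r : ℕ) (E : Finset ℤ) : ∃ F ⊆ E, ∃ I : Finset (ℤ × ℤ),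
    (∑ x ∈ E \ F, sg x c = ∑ i ∈ I, pr i.2 * sg i.1 (2 * c)) ∧
    (∀ i ∈ I, i.1 ∈ E ∧ 4 ^ k ≤ i.2 ∧ i.2 ≤ 4 ^ (k + r)) ∧
    (∀ x ∈ F, ∀ y ∈ F, ¬ (4 ^ k ≤ y - x ∧ y - x ≤ 4 ^ (k + r))) := by
  classical
  induction E using Finset.strongInduction with
  | H E ih =>
    by_cases h : ∀ x ∈ E, ∀ y ∈ E, ¬ ((4:ℤ) ^ k ≤ y - x ∧ y - x ≤ 4 ^ (k + r))
    · exact ⟨E, subset_rfl, ∅, by simp, by simp, h⟩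
    · push Not at h
      obtain ⟨x, hx, y, hy, h1, h2⟩ := h
      have hxy : x ≠ y := by
        rintro rfl
        have : (0:ℤ) < 4 ^ k := by positivity
        linarith
      obtain ⟨F, hF, I, hI1, hI2, hI3⟩ := ih ((E.erase x).erase y)
        (lt_of_le_of_lt (Finset.erase_subset _ _) (Finset.erase_ssubset hx))
      have hxF : x ∉ F := fun hh => by have := hF hh; simp at this
      have hyF : y ∉ F := fun hh => by have := hF hh; simp at this
      have hs : E \ F = insert x (insert y (((E.erase x).erase y) \ F)) := by
        ext z
        simp only [Finset.mem_sdiff, Finset.mem_insert, Finset.mem_erase]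
        by_cases e1 : z = x
        · subst e1; simp [hx, hxF]
        · by_cases e2 : z = y
          · subst e2; simp [hy, hyF]
          · simp [e1, e2]
      refine ⟨F, hF.trans ((Finset.erase_subset _ _).trans (Finset.erase_subset _ _)),
        insert (x, y - x) I, ?_, ?_, hI3⟩
      · rw [hs, Finset.sum_insert (by simp [hxy]), Finset.sum_insert (by simp), hI1, Finset.sum_insert]
        · rw [← add_assoc]
          congr 1
          simp only [pr, add_mul, sg_mul]
          have : (1/2 : NNReal) * (2 * c) = c := by rw [← mul_assoc]; norm_num
          rw [this]; simp
        · intro hh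
          have := (hI2 _ hh).1
          simp at this
      · intro i hi
        rcases Finset.mem_insert.1 hi with rfl | hi
        · exact ⟨hx, h1, h2⟩
        · have := hI2 i hi
          refine ⟨?_, this.2⟩
          have := this.1
          simp at this
          exact this.2.2

theorem block (E : Finset ℤ) (hE : E.Nonempty) (k r : ℕ) : ∃ F ⊆ E,
    (∀ x ∈ F, ∀ y ∈ F, ¬ (4 ^ k ≤ y - x ∧ y - x ≤ 4 ^ (k + r))) ∧
    ∀ (ε : ℝ) (L g : ℕ), 0 ≤ ε → ε * E.card ≤ (E \ F).card → 0 ≤ (L:ℝ) * log 4 - r * log 4 - 7 →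
    (1 - (1 - ε) ^ g) ^ (2 * 16 ^ L) * ((L:ℝ) * log 4 - r * log 4 - 7) ≤
      AA (k + r) L (un E ^ (g * (2 * 16 ^ L))) := by
  classical
  obtain ⟨F, hF, I, h1, h2, h3⟩ := matching (1 / (E.card : NNReal)) k r E
  refine ⟨F, hF, h3, fun ε L g h0 hε hB => ?_⟩
  have hu : un E = (∑ i ∈ I, pr i.2 * sg i.1 (2 * (1 / (E.card : NNReal)))) +
      ∑ x ∈ F, sg x (1 / (E.card : NNReal)) := by
    rw [← h1, un, Finset.sum_sdiff hF]
  have hmm := mass_un E hE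
  rw [hu] at hmm ⊢
  have hcp : (0:ℝ) < E.card := by exact_mod_cast hE.card_pos
  apply mix2 _ _ _ _ _ _ _ _ hB hmm _ h0
  · have := mix1 (k + r) L (2 * 16 ^ L) I (fun i => i.2) (fun i => i.1) (fun _ => 2 * (1 / (E.card : NNReal)))
      ((L:ℝ) * log 4 - r * log 4 - 7) (by
        intro p hp
        exact pair_aa L k r _ (fun j => (h2 _ (hp j)).2.1) (fun j => (h2 _ (hp j)).2.2))
    rw [mass_sum]
    simpa [mass_mul, mass_single] using this
  · rw [← h1, mass_sum]
    simp only [mass_single, Finset.sum_const, nsmul_eq_mul]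
    push_cast
    rw [mul_one_div, le_div_iff₀ hcp]
    exact hε

theorem tree (R : ℤ) (hR : 0 < R) (W : ℕ → ℤ → ℝ) (hW : ∀ b e, 0 ≤ W b e)
    (hs : ∀ b, ∀ T : Finset ℤ, ∀ d, (∀ e ∈ T, e / R = d) → ∑ e ∈ T, W b e ≤ 1) (B : ℕ) :
    ∀ (S : Finset ℤ) (d : ℤ), (∀ c ∈ S, c / R ^ B = d) →
      ∑ c ∈ S, ∏ b ∈ Finset.range B, W b (c / R ^ b) ≤ 1 := by
  classical
  induction B with
  | zero =>
    intro S d h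
    simp only [pow_zero, Int.ediv_one] at h
    have : S ⊆ {d} := fun c hc => by simp [h c hc]
    have := Finset.card_le_card this
    simp at this ⊢
    exact_mod_cast this
  | succ B ih =>
    intro S d h
    rw [← Finset.sum_fiberwise_of_maps_to (t := S.image (fun c => c / R ^ B)) (g := fun c => c / R ^ B)
      (fun x hx => Finset.mem_image_of_mem _ hx)]
    refine le_trans (Finset.sum_le_sum (g := fun e => W B e) ?_) (hs B _ d ?_)
    · intro e _
      have h1 := ih (S.filter (fun c => c / R ^ B = e)) e (fun c hc => (Finset.mem_filter.1 hc).2)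
      calc ∑ c ∈ S with c / R ^ B = e, ∏ b ∈ Finset.range (B+1), W b (c / R ^ b)
          = ∑ c ∈ S with c / R ^ B = e, (∏ b ∈ Finset.range B, W b (c / R ^ b)) * W B e := by
            refine Finset.sum_congr rfl fun c hc => ?_
            rw [Finset.prod_range_succ, (Finset.mem_filter.1 hc).2]
        _ = (∑ c ∈ S with c / R ^ B = e, (∏ b ∈ Finset.range B, W b (c / R ^ b))) * W B e := by
            rw [Finset.sum_mul]
        _ ≤ 1 * W B e := mul_le_mul_of_nonneg_right h1 (hW _ _)
        _ = W B e := one_mul _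
    · intro e he
      obtain ⟨c, hc, rfl⟩ := Finset.mem_image.1 he
      rw [Int.ediv_ediv_of_nonneg (by positivity), ← pow_succ]
      exact h c hc

theorem card_le_two (T : Finset ℤ) (h : ∀ e ∈ T, ∀ e' ∈ T, e' ≤ e + 1) : T.card ≤ 2 := by
  rcases T.eq_empty_or_nonempty with rfl | hne
  · simp
  · have : T ⊆ {T.min' hne, T.min' hne + 1} := by
      intro e he
      have h1 := T.min'_le e he
      have h2 := h _ (T.min'_mem hne) e he
      simp only [Finset.mem_insert, Finset.mem_singleton]
      omega
    exact (Finset.card_le_card this).trans (Finset.card_le_two)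

open Classical in
noncomputable def wt (F : Finset ℤ) (k r : ℕ) (e : ℤ) : ℝ :=
  if ∃ x ∈ F, x / 4 ^ k = e then 1/4 else 1/(2 * 4 ^ r)

theorem wt_pos (F : Finset ℤ) (k r : ℕ) (e : ℤ) : 0 < wt F k r e := by
  unfold wt; split_ifs <;> positivity

theorem wt_sum (F : Finset ℤ) (k r : ℕ)
    (hF : ∀ x ∈ F, ∀ y ∈ F, ¬ (4 ^ k ≤ y - x ∧ y - x ≤ 4 ^ (k + r))) (T : Finset ℤ) (d : ℤ)
    (hT : ∀ e ∈ T, e / (4 ^ r) = d) : ∑ e ∈ T, wt F k r e ≤ 1 := by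
  classical
  unfold wt
  rw [Finset.sum_ite, Finset.sum_const, Finset.sum_const, nsmul_eq_mul, nsmul_eq_mul]
  have h4k : (0:ℤ) < 4 ^ k := by positivity
  have h4r : (0:ℤ) < 4 ^ r := by positivity
  have h1 : (T.filter (fun e => ∃ x ∈ F, x / 4 ^ k = e)).card ≤ 2 := by
    apply card_le_two
    intro e he e' he'
    obtain ⟨heT, x, hx, rfl⟩ := Finset.mem_filter.1 he
    obtain ⟨heT', y, hy, rfl⟩ := Finset.mem_filter.1 he'
    have a1 := hT _ heT
    have a2 := hT _ heT'
    rw [Int.ediv_ediv_of_nonneg h4k.le, ← pow_add] at a1 a2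
    have h4kr : (0:ℤ) < 4 ^ (k+r) := by positivity
    have a3 : y - x ≤ 4 ^ (k + r) := by
      have b1 := Int.emod_add_mul_ediv x (4 ^ (k+r))
      have b2 := Int.emod_add_mul_ediv y (4 ^ (k+r))
      have b3 := Int.emod_nonneg x h4kr.ne'
      have b4 := Int.emod_lt_of_pos y h4kr
      rw [a1] at b1
      rw [a2] at b2
      linarith
    have a4 : y - x < 4 ^ k := by
      by_contra hc
      exact hF x hx y hy ⟨not_lt.1 hc, a3⟩
    have := Int.ediv_le_ediv h4k (by linarith : y ≤ x + 1 * 4 ^ k)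
    rwa [Int.add_mul_ediv_right _ _ h4k.ne'] at this
  have h2 : (T.filter (fun e => ¬ ∃ x ∈ F, x / 4 ^ k = e)).card ≤ 4 ^ r := by
    have : T ⊆ Finset.Ico (4 ^ r * d) (4 ^ r * d + 4 ^ r) := by
      intro e he
      have b1 := Int.emod_add_mul_ediv e (4 ^ r)
      have b3 := Int.emod_nonneg e h4r.ne'
      have b4 := Int.emod_lt_of_pos e h4r
      rw [hT e he] at b1
      rw [Finset.mem_Ico]
      constructor <;> linarith
    refine (Finset.card_filter_le _ _).trans ((Finset.card_le_card this).trans (le_of_eq ?_))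
    rw [Int.card_Ico, add_sub_cancel_left]; norm_cast
  have h1' : ((T.filter (fun e => ∃ x ∈ F, x / 4 ^ k = e)).card : ℝ) ≤ 2 := by exact_mod_cast h1
  have h2' : ((T.filter (fun e => ¬ ∃ x ∈ F, x / 4 ^ k = e)).card : ℝ) ≤ 4 ^ r := by exact_mod_cast h2
  have h3 : ((T.filter (fun e => ¬ ∃ x ∈ F, x / 4 ^ k = e)).card : ℝ) * (1 / (2 * 4 ^ r)) ≤ 1/2 := by
    rw [mul_one_div, div_le_iff₀ (by positivity)]; linarith
  linarith

theorem kraft (E : Finset ℤ) (hE : E.Nonempty) (p r B : ℕ) (F : ℕ → Finset ℤ)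
    (hF : ∀ b, ∀ x ∈ F b, ∀ y ∈ F b, ¬ (4 ^ (p + r * b) ≤ y - x ∧ y - x ≤ 4 ^ (p + r * b + r)))
    (hFE : ∀ b, F b ⊆ E)
    (hinj : ∀ x ∈ E, ∀ y ∈ E, x / 4 ^ p = y / 4 ^ p → x = y) (d : ℤ)
    (htop : ∀ x ∈ E, x / 4 ^ (p + r * B) = d) :
    (E.card : ℝ) * log E.card ≤ ∑ b ∈ Finset.range B, (E.card * log 4 + (E \ F b).card * (r * log 4)) := by
  classical
  have hcp : (0:ℝ) < E.card := by exact_mod_cast hE.card_pos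
  have h1 : ∑ x ∈ E, ∏ b ∈ Finset.range B, wt (F b) (p + r * b) r (x / 4 ^ (p + r * b)) ≤ 1 := by
    have := tree (4 ^ r) (by positivity) (fun b => wt (F b) (p + r * b) r) (fun b e => (wt_pos _ _ _ _).le)
      (fun b T d hT => wt_sum _ _ _ (hF b) T d hT) B (E.image (fun x => x / 4 ^ p)) d (by
        intro c hc
        obtain ⟨x, hx, rfl⟩ := Finset.mem_image.1 hc
        rw [Int.ediv_ediv_of_nonneg (by positivity), ← pow_mul, ← pow_add]
        exact htop x hx)
    rw [Finset.sum_image (fun x hx y hy h => hinj x hx y hy h)] at this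
    refine le_trans (le_of_eq ?_) this
    refine Finset.sum_congr rfl fun x _ => Finset.prod_congr rfl fun b _ => ?_
    rw [Int.ediv_ediv_of_nonneg (by positivity), ← pow_mul, ← pow_add]
  have hmu := mass_un E hE
  have hcf : ∀ x ∈ E, (un E).coeff x = 1 / (E.card : NNReal) := by
    intro x hx
    rw [un, coeff_sum']
    simp_rw [coeff_sg, Finsupp.single_apply]
    rw [Finset.sum_ite_eq' E x, if_pos hx]
  have hsup : (un E).coeff.support ⊆ E := by
    intro x hx
    by_contra hn
    rw [Finsupp.mem_support_iff] at hx
    apply hx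
    rw [un, coeff_sum']
    simp_rw [coeff_sg, Finsupp.single_apply]
    rw [Finset.sum_ite_eq' E x, if_neg hn]
  have hg := gibbs (un E) E hsup hmu _ (fun x _ => Finset.prod_pos fun b _ => wt_pos _ _ _ _) h1
  rw [ent_eq_sum _ _ hsup] at hg
  have e1 : ∑ x ∈ E, negMulLog ((un E).coeff x : ℝ) = log E.card := by
    rw [Finset.sum_congr rfl (g := fun _ => (1 / (E.card:ℝ)) * log E.card)]
    · rw [Finset.sum_const, nsmul_eq_mul]; field_simp
    · intro x hx
      rw [hcf x hx, negMulLog]; push_cast; rw [one_div, log_inv]; ring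
  rw [e1] at hg
  have e2 : ∑ x ∈ E, ((un E).coeff x : ℝ) * (-log (∏ b ∈ Finset.range B, wt (F b) (p + r * b) r (x / 4 ^ (p + r * b))))
      = (1 / E.card) * ∑ b ∈ Finset.range B, ∑ x ∈ E, - log (wt (F b) (p + r * b) r (x / 4 ^ (p + r * b))) := by
    rw [Finset.sum_comm, Finset.mul_sum]
    refine Finset.sum_congr rfl fun x hx => ?_
    rw [hcf x hx, log_prod (fun b _ => (wt_pos _ _ _ _).ne')]
    push_cast
    rw [Finset.sum_neg_distrib]
  rw [e2] at hg
  have hg' : (E.card : ℝ) * log E.card ≤ ∑ b ∈ Finset.range B, ∑ x ∈ E, - log (wt (F b) (p + r * b) r (x / 4 ^ (p + r * b))) := by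
    rw [one_div, ← div_eq_inv_mul, le_div_iff₀ hcp] at hg
    linarith
  refine hg'.trans (Finset.sum_le_sum fun b _ => ?_)
  rw [← Finset.sum_sdiff (hFE b)]
  have l4 : log 4 = 2 * log 2 := by rw [show (4:ℝ) = 2^2 by norm_num, log_pow]; norm_num
  have l2' := log_two_gt_d9
  have c1 : ∑ x ∈ F b, - log (wt (F b) (p + r * b) r (x / 4 ^ (p + r * b))) ≤ (F b).card * log 4 := by
    rw [← nsmul_eq_mul]
    refine Finset.sum_le_card_nsmul _ _ _ fun x hx => ?_
    rw [wt, if_pos ⟨x, hx, rfl⟩, one_div, log_inv, neg_neg]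
  have c2 : ∑ x ∈ E \ F b, - log (wt (F b) (p + r * b) r (x / 4 ^ (p + r * b))) ≤ (E \ F b).card * (log 4 + r * log 4) := by
    rw [← nsmul_eq_mul]
    refine Finset.sum_le_card_nsmul _ _ _ fun x hx => ?_
    have : (0:ℝ) ≤ r * log 4 := mul_nonneg (by positivity) (by rw [l4]; linarith)
    rw [wt]
    split_ifs
    · rw [one_div, log_inv, neg_neg]; linarith
    · rw [one_div, log_inv, neg_neg, log_mul (by norm_num) (by positivity), log_pow]
      linarith
  have c3 : ((E \ F b).card : ℝ) + (F b).card = E.card := by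
    exact_mod_cast Finset.card_sdiff_add_card_eq_card (hFE b)
  rw [← c3]
  linarith

end FC


namespace FC
open AddMonoidAlgebra Real

def AF : ℕ → Finset ℤ
  | 0 => {0}
  | n+1 => AF n ∪ (AF n).image (fun a => a + 4 ^ n)

theorem AF_bd (n : ℕ) : ∀ a ∈ AF n, 0 ≤ a ∧ 3 * a < 4 ^ n := by
  induction n with
  | zero => intro a ha; simp [AF] at ha; subst ha; simp
  | succ n ih =>
    intro a ha
    have h0 : (0:ℤ) < 4 ^ n := by positivity
    rw [AF, Finset.mem_union, Finset.mem_image] at ha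
    rw [pow_succ]
    rcases ha with ha | ⟨b, hb, rfl⟩
    · have := ih a ha; constructor <;> linarith
    · have := ih b hb; constructor <;> linarith

theorem AF_disj (n : ℕ) : Disjoint (AF n) ((AF n).image (fun a => a + 4 ^ n)) := by
  rw [Finset.disjoint_left]
  intro a ha hb'
  obtain ⟨b, hb, rfl⟩ := Finset.mem_image.1 hb'
  have h1 := AF_bd n _ ha
  have h2 := AF_bd n _ hb
  linarith

theorem AF_card (n : ℕ) : (AF n).card = 2 ^ n := by
  induction n with
  | zero => simp [AF]
  | succ n ih =>
    rw [AF, Finset.card_union_of_disjoint (AF_disj n), Finset.card_image_of_injective, ih]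
    · ring
    · intro a b h; simpa using h

theorem sum_AF {M : Type*} [AddCommMonoid M] (n : ℕ) (f : ℤ → M) :
    ∑ a ∈ AF (n+1), f a = ∑ a ∈ AF n, f a + ∑ a ∈ AF n, f (a + 4 ^ n) := by
  rw [AF, Finset.sum_union (AF_disj n), Finset.sum_image]
  intro a _ b _ h; simpa using h

theorem prod_pr_AF (c : ℤ) (n : ℕ) :
    ∏ j ∈ Finset.range n, pr (c * 4 ^ j) = ∑ a ∈ AF n, sg (c * a) (1 / 2 ^ n) := by
  induction n with
  | zero => simp [AF, sg_zero_one]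
  | succ n ih =>
    rw [Finset.prod_range_succ, ih, sum_AF, pr, mul_add, Finset.sum_mul, Finset.sum_mul]
    have : (1 / 2 ^ n * (1/2) : NNReal) = 1 / 2 ^ (n+1) := by rw [pow_succ]; field_simp
    simp_rw [sg_mul, this]
    simp [mul_add]

noncomputable def YY (K : ℕ) (T : ℤ) (P : ℕ) : Ms :=
  ∏ j ∈ Finset.range P, (pr (4 ^ K * 4 ^ j) * pr (T * 4 ^ j))

theorem YY_eq (K : ℕ) (T : ℤ) (n : ℕ) :
    YY K T n = ∑ ab ∈ AF n ×ˢ AF n, sg (4 ^ K * ab.1 + T * ab.2) (1 / 4 ^ n) := by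
  rw [YY, Finset.prod_mul_distrib, prod_pr_AF, prod_pr_AF, Finset.sum_mul_sum, Finset.sum_product]
  have : (1 / 2 ^ n * (1/2^n) : NNReal) = 1 / 4 ^ n := by
    rw [one_div_mul_one_div, ← mul_pow]; norm_num
  simp_rw [sg_mul, this]

@[simp] theorem mass_YY (K : ℕ) (T : ℤ) (P : ℕ) : mass (YY K T P) = 1 := by
  rw [YY, mass_prod]; simp

theorem ph_pr (s : ℤ) : ph (pr s) = pr (4 * s) := by
  rw [pr, pr, map_add ph, ph_sg, ph_sg]; simp

theorem YY_succ' (K : ℕ) (T : ℤ) (P : ℕ) : YY K T (P+1) = ph (YY K T P) * YY K T 1 := by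
  rw [YY, YY, YY, map_prod, Finset.prod_range_succ', Finset.prod_range_one]
  congr 1
  refine Finset.prod_congr rfl fun j _ => ?_
  rw [map_mul ph, ph_pr, ph_pr]
  congr 2 <;> ring

theorem YY_add (K : ℕ) (T : ℤ) (P n : ℕ) :
    YY K T (P + n) = YY K T P * ∑ ab ∈ AF n ×ˢ AF n, sg (4 ^ P * (4 ^ K * ab.1 + T * ab.2)) (1 / 4 ^ n) := by
  have h : YY K T (P + n) = YY K T P * (∏ j ∈ Finset.range n, (pr ((4 ^ P * 4 ^ K) * 4 ^ j) * pr ((4 ^ P * T) * 4 ^ j))) := by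
    rw [YY, Finset.prod_range_add, ← YY]
    congr 1
    refine Finset.prod_congr rfl fun j _ => ?_
    congr 2 <;> ring
  rw [h, Finset.prod_mul_distrib, prod_pr_AF, prod_pr_AF, Finset.sum_mul_sum, Finset.sum_product]
  have : (1 / 2 ^ n * (1/2^n) : NNReal) = 1 / 4 ^ n := by
    rw [one_div_mul_one_div, ← mul_pow]; norm_num
  simp_rw [sg_mul, this]
  congr 1
  refine Finset.sum_congr rfl fun a _ => Finset.sum_congr rfl fun b _ => ?_
  congr 1; ring

theorem cc_mono_i (K : ℕ) (T : ℤ) (k P i : ℕ) : aa (YY K T P) k ≤ aa (YY K T (P+i)) k := by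
  rw [YY_add]
  refine le_trans (le_of_eq ?_) (aa_mul _ _ _)
  have h : mass (YY K T (P + i)) = 1 := mass_YY _ _ _
  rw [YY_add, mass_mul, mass_YY, one_mul] at h
  rw [h]; simp

theorem cc_mono_i' (K : ℕ) (T : ℤ) (k : ℕ) {P Q : ℕ} (h : P ≤ Q) : aa (YY K T P) k ≤ aa (YY K T Q) k := by
  obtain ⟨i, rfl⟩ := Nat.exists_eq_add_of_le h
  exact cc_mono_i _ _ _ _ _

theorem cc_mono_P1 (K : ℕ) (T : ℤ) (P k : ℕ) : aa (YY K T P) k ≤ aa (YY K T (P+1)) (k+1) := by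
  rw [YY_succ', ← aa_ph]
  refine le_trans (le_of_eq ?_) (aa_mul _ _ _)
  simp

/-- the sequence c_P(i) -/
noncomputable def cc (K : ℕ) (T : ℤ) (i P : ℕ) : ℝ := aa (YY K T (P+i)) (K+P)

theorem cc_mono (K : ℕ) (T : ℤ) (i : ℕ) : Monotone (cc K T i) := by
  apply monotone_nat_of_le_succ
  intro P
  unfold cc
  have := cc_mono_P1 K T (P+i) (K+P)
  rwa [add_right_comm, add_assoc K P 1] at this

theorem cc_le (K : ℕ) (T : ℤ) (i P : ℕ) : cc K T i P ≤ log 4 := aa_le _ (by simp) _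

theorem cc_nonneg (K : ℕ) (T : ℤ) (i P : ℕ) : 0 ≤ cc K T i P := aa_nonneg _ _

theorem cc_mono2 (K : ℕ) (T : ℤ) {i j : ℕ} (h : i ≤ j) (P : ℕ) : cc K T i P ≤ cc K T j P :=
  cc_mono_i' _ _ _ (by omega)

noncomputable def ci (K : ℕ) (T : ℤ) (i : ℕ) : ℝ := ⨆ P, cc K T i P

theorem cc_bdd (K : ℕ) (T : ℤ) (i : ℕ) : BddAbove (Set.range (cc K T i)) :=
  ⟨log 4, by rintro _ ⟨P, rfl⟩; exact cc_le _ _ _ _⟩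

theorem cc_le_ci (K : ℕ) (T : ℤ) (i P : ℕ) : cc K T i P ≤ ci K T i := le_ciSup (cc_bdd K T i) P

theorem ci_le (K : ℕ) (T : ℤ) (i : ℕ) : ci K T i ≤ log 4 := ciSup_le fun P => cc_le _ _ _ _

theorem ci_nonneg (K : ℕ) (T : ℤ) (i : ℕ) : 0 ≤ ci K T i := (cc_nonneg K T i 0).trans (cc_le_ci _ _ _ _)

theorem ci_mono (K : ℕ) (T : ℤ) : Monotone (ci K T) := fun _ _ h =>
  ciSup_mono (cc_bdd _ _ _) (fun P => cc_mono2 _ _ h P)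

theorem cc_tendsto (K : ℕ) (T : ℤ) (i : ℕ) : Tendsto (cc K T i) atTop (𝓝 (ci K T i)) :=
  tendsto_atTop_ciSup (cc_mono K T i) (cc_bdd K T i)

theorem cc_close (K : ℕ) (T : ℤ) (D : ℕ) (τ : ℝ) (hτ : 0 < τ) :
    ∃ P, ∀ i ≤ D, ci K T i - τ ≤ cc K T i P := by
  have : ∀ᶠ P in atTop, ∀ i ∈ Finset.range (D+1), ci K T i - τ ≤ cc K T i P := by
    rw [Filter.eventually_all_finset]
    intro i _
    filter_upwards [(cc_tendsto K T i).eventually (lt_mem_nhds (show ci K T i - τ < ci K T i by linarith))] with P hP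
    exact hP.le
  obtain ⟨P, hP⟩ := this.exists
  exact ⟨P, fun i hi => hP i (by simp; omega)⟩

theorem gain (T : ℕ → ℤ) (s' : ℝ)
    (Hs : ∀ u : ℕ, ∃ I0 : ℕ, ∀ K ≥ I0, ∀ P, cc K (T K) u P ≤ s' * log 4)
    (Good : ℕ → Prop) (hG : ∀ n0, ∃ n ≥ n0, Good n) (D : ℕ → ℕ) (n0 : ℕ)
    (hD : ∀ n ≥ n0, D n ≤ 8 * n) (δ : ℝ) (hδ : 0 < δ) :
    ∃ n ≥ n0, Good n ∧ ∃ K ≥ 5 * n, ∃ P, 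
      (∀ h < D n, aa (YY K (T K) (P + D n)) (K + P + h) ≤ s' * log 4) ∧
      ∑ h ∈ Finset.range (D n), aa (YY K (T K) (P + D n + n)) (K + P + h) -
        ∑ h ∈ Finset.range (D n), aa (YY K (T K) (P + D n)) (K + P + h) ≤ δ * n := by
  have hl : 0 < log 4 := log_pos (by norm_num)
  obtain ⟨E, hE⟩ := exists_nat_gt (9 * log 4 / (δ / 3))
  have hE0 : 0 < E := by
    have : (0:ℝ) < E := lt_trans (by positivity) hE
    exact_mod_cast this
  obtain ⟨R, hR⟩ := exists_nat_gt (8 * log 4 / (δ / 3))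
  have hR0' : (0:ℝ) < R := lt_trans (by positivity) hR
  have hR0 : 0 < R := by exact_mod_cast hR0'
  choose f hf1 hf2 using hG
  obtain ⟨ns, ns0, ns1, ns2⟩ : ∃ ns : ℕ → ℕ, (∀ j, n0 + 1 ≤ ns j) ∧ (∀ j, E * ns j ≤ ns (j+1)) ∧
      (∀ j, Good (ns j)) := by
    refine ⟨fun j => Nat.rec (f (n0 + 1)) (fun _ m => f (n0 + 1 + E * m)) j, ?_, ?_, ?_⟩
    · intro j
      cases j with
      | zero => exact hf1 _
      | succ j => exact le_trans (by omega) (hf1 _)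
    · intro j
      exact le_trans (Nat.le_add_left _ _) (hf1 _)
    · intro j
      cases j with
      | zero => exact hf2 _
      | succ j => exact hf2 _
  choose I0 hI0 using Hs
  -- choose K
  obtain ⟨K, hK⟩ : ∃ K, ∀ j ∈ Finset.range (R+1), I0 (D (ns j)) ≤ K ∧ 5 * ns j ≤ K := by
    refine ⟨∑ j ∈ Finset.range (R+1), (I0 (D (ns j)) + 5 * ns j), fun j hj => ?_⟩
    have := Finset.single_le_sum (f := fun j => I0 (D (ns j)) + 5 * ns j) (fun _ _ => by positivity) hj
    constructor <;> omega
  obtain ⟨j, hj, hj2⟩ : ∃ j ∈ Finset.range R, ci K (T K) (9 * ns (j+1)) - ci K (T K) (9 * ns j) ≤ log 4 / R := by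
    apply Finset.exists_le_of_sum_le (by simp; omega)
    rw [Finset.sum_range_sub (fun j => ci K (T K) (9 * ns j)), Finset.sum_const, nsmul_eq_mul, Finset.card_range,
      mul_div_cancel₀ _ hR0'.ne']
    have h1 := ci_le K (T K) (9 * ns R)
    have h2 := ci_nonneg K (T K) (9 * ns 0)
    linarith
  rw [Finset.mem_range] at hj
  set n := ns (j+1) with hn
  have hn0 := ns0 (j+1)
  have hKj := hK (j+1) (by simp; omega)
  obtain ⟨P, hP⟩ := cc_close K (T K) (D n) (δ / 24) (by positivity)
  have hDn := hD n (by omega)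
  refine ⟨n, by omega, ns2 (j+1), K, hKj.2, P, ?_, ?_⟩
  · intro h hh
    have := hI0 (D n) K hKj.1 (P + h)
    refine le_trans ?_ this
    unfold cc
    rw [← add_assoc]
    exact cc_mono_i' _ _ _ (by omega)
  · rw [← Finset.sum_sub_distrib, ← Finset.sum_range_reflect]
    have hb : ∀ i ∈ Finset.range (D n), aa (YY K (T K) (P + D n + n)) (K + P + (D n - 1 - i)) -
        aa (YY K (T K) (P + D n)) (K + P + (D n - 1 - i)) ≤
        (if i < 9 * ns j then log 4 else 0) + log 4 / R + δ / 24 := by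
      intro i hi
      rw [Finset.mem_range] at hi
      have e1 : aa (YY K (T K) (P + D n + n)) (K + P + (D n - 1 - i)) = cc K (T K) (i + 1 + n) (P + (D n - 1 - i)) := by
        rw [cc, add_assoc K P]; congr 2; omega
      have e2 : aa (YY K (T K) (P + D n)) (K + P + (D n - 1 - i)) = cc K (T K) (i + 1) (P + (D n - 1 - i)) := by
        rw [cc, add_assoc K P]; congr 2; omega
      rw [e1, e2]
      have h1 := cc_le_ci K (T K) (i + 1 + n) (P + (D n - 1 - i))
      have h2 : cc K (T K) (i + 1) P ≤ cc K (T K) (i + 1) (P + (D n - 1 - i)) := cc_mono _ _ _ (by omega)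
      have h3 := hP (i+1) (by omega)
      have hpos : 0 ≤ log 4 / R := by positivity
      split_ifs with hc
      · have h4 := ci_le K (T K) (i + 1 + n)
        have h5 := cc_nonneg K (T K) (i + 1) (P + (D n - 1 - i))
        linarith
      · have h4 := ci_mono K (T K) (show i + 1 + n ≤ 9 * n by omega)
        have h5 := ci_mono K (T K) (show 9 * ns j ≤ i + 1 by omega)
        linarith
    refine (Finset.sum_le_sum hb).trans ?_
    rw [Finset.sum_add_distrib, Finset.sum_add_distrib, Finset.sum_const, Finset.sum_const, nsmul_eq_mul, nsmul_eq_mul,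
      Finset.card_range]
    have g1 : ∑ i ∈ Finset.range (D n), (if i < 9 * ns j then log 4 else 0) ≤ 9 * ((ns j : ℕ) : ℝ) * log 4 := by
      rw [← Finset.sum_filter, Finset.sum_const, nsmul_eq_mul]
      refine mul_le_mul_of_nonneg_right ?_ hl.le
      have : ((Finset.range (D n)).filter (fun i => i < 9 * ns j)).card ≤ 9 * ns j := by
        refine (Finset.card_le_card (t := Finset.range (9 * ns j)) ?_).trans (by simp)
        intro x hx; simp at hx ⊢; omega
      exact_mod_cast this
    have hDn' : (D n : ℝ) ≤ 8 * n := by exact_mod_cast hDn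
    have hEn : (E:ℝ) * ns j ≤ n := by exact_mod_cast ns1 j
    have g2 : 9 * ((ns j : ℕ) : ℝ) * log 4 ≤ δ / 3 * n := by
      rw [div_lt_iff₀ (by positivity)] at hE
      have : (0:ℝ) ≤ ns j := by positivity
      nlinarith
    have g3 : (D n : ℝ) * (log 4 / R) ≤ δ / 3 * n := by
      rw [div_lt_iff₀ (by positivity)] at hR
      calc (D n : ℝ) * (log 4 / R) ≤ 8 * n * (log 4 / R) := mul_le_mul_of_nonneg_right hDn' (by positivity)
        _ = n * (8 * log 4 / R) := by ring
        _ ≤ n * (δ / 3) := by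
          refine mul_le_mul_of_nonneg_left ?_ (by positivity)
          rw [div_le_iff₀ hR0']; linarith
        _ = _ := by ring
    have g4 : (D n : ℝ) * (δ / 24) ≤ δ / 3 * n := by nlinarith
    linarith

end FC


namespace FC
open AddMonoidAlgebra Real

theorem mem_supp_mul (μ ν : Ms) (z : ℤ) (h : z ∈ (μ * ν).coeff.support) :
    ∃ x ∈ μ.coeff.support, ∃ y ∈ ν.coeff.support, x + y = z := by
  classical
  have := AddMonoidAlgebra.support_coeff_mul_subset μ ν h
  exact Finset.mem_add.1 this

theorem mem_supp_sum {ι : Type*} (A : Finset ι) (f : ι → ℤ) (c : ι → NNReal) (z : ℤ)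
    (h : z ∈ (∑ i ∈ A, sg (f i) (c i)).coeff.support) : ∃ i ∈ A, f i = z := by
  rw [Finsupp.mem_support_iff, coeff_sum'] at h
  obtain ⟨i, hi, h⟩ := Finset.exists_ne_zero_of_sum_ne_zero h
  rw [coeff_sg, Finsupp.single_apply] at h
  refine ⟨i, hi, ?_⟩
  by_contra hne
  simp [hne] at h

theorem mem_supp_ZZ (k : ℕ) (z : ℤ) (h : z ∈ (ZZ k).coeff.support) : 0 ≤ z ∧ z < 4 ^ k := by
  rw [ZZ_eq] at h
  obtain ⟨i, hi, rfl⟩ := mem_supp_sum _ _ _ _ h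
  rw [Finset.mem_range] at hi
  exact ⟨by positivity, by exact_mod_cast hi⟩

theorem mem_supp_YY (K : ℕ) (T : ℤ) (hT0 : 0 ≤ T) (hT : T ≤ 4 ^ K) (P : ℕ) (z : ℤ)
    (h : z ∈ (YY K T P).coeff.support) : 0 ≤ z ∧ z < 4 ^ (K + P) := by
  rw [YY_eq] at h
  obtain ⟨⟨a, b⟩, hi, rfl⟩ := mem_supp_sum _ _ _ _ h
  rw [Finset.mem_product] at hi
  have h1 := AF_bd P a hi.1
  have h2 := AF_bd P b hi.2
  have h4 : (0:ℤ) < 4 ^ K := by positivity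
  refine ⟨?_, ?_⟩
  · have := mul_nonneg h4.le h1.1
    have := mul_nonneg hT0 h2.1
    simp only; linarith
  · rw [pow_add]
    simp only
    have e1 : (4:ℤ) ^ K * (3 * a) < 4 ^ K * 4 ^ P := by apply mul_lt_mul_of_pos_left h1.2 h4
    have e2 : T * b ≤ 4 ^ K * b := mul_le_mul_of_nonneg_right hT h2.1
    have e3 : (4:ℤ) ^ K * (3 * b) < 4 ^ K * 4 ^ P := by apply mul_lt_mul_of_pos_left h2.2 h4
    nlinarith [mul_pos h4 (show (0:ℤ) < 4 ^ P by positivity)]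

noncomputable def FL (t : ℝ) (n : ℕ) : Finset ℤ :=
  (AF n ×ˢ AF n).image (fun ab => ⌊(ab.1:ℝ) + t * ab.2⌋)

noncomputable def TT (t : ℝ) (K : ℕ) : ℤ := ⌊t * 4 ^ K⌋

theorem TT_nonneg (t : ℝ) (ht : t ∈ Set.Ioo (0:ℝ) 1) (K : ℕ) : 0 ≤ TT t K :=
  Int.floor_nonneg.2 (mul_nonneg ht.1.le (by positivity))

theorem TT_le (t : ℝ) (ht : t ∈ Set.Ioo (0:ℝ) 1) (K : ℕ) : TT t K ≤ 4 ^ K := by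
  have h1 := Int.floor_le (t * 4 ^ K)
  have h2 : t * 4 ^ K ≤ 4 ^ K := by
    have : (0:ℝ) < 4 ^ K := by positivity
    nlinarith [ht.2]
  have : ((TT t K : ℤ) : ℝ) ≤ ((4 ^ K : ℤ) : ℝ) := by push_cast; exact h1.trans h2
  exact_mod_cast this

theorem cell_bd (t : ℝ) (I K : ℕ) (hIK : I ≤ K) (a b : ℤ) (hb : b ∈ AF I) :
    4 ^ K * (⌊(a:ℝ) + t * b⌋ - 1) ≤ 4 ^ K * a + TT t K * b ∧
    4 ^ K * a + TT t K * b < 4 ^ K * (⌊(a:ℝ) + t * b⌋ + 1) := by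
  have hb' := AF_bd I b hb
  have hb0 : (0:ℝ) ≤ b := by exact_mod_cast hb'.1
  have hb1 : (b:ℝ) ≤ 4 ^ K := by
    have h1 : (4:ℤ) ^ I ≤ 4 ^ K := pow_le_pow_right₀ (by norm_num) hIK
    have : b ≤ 4 ^ K := by linarith
    exact_mod_cast this
  have h1 : ((TT t K : ℤ) : ℝ) ≤ t * 4 ^ K := Int.floor_le (t * 4 ^ K)
  have h2 : t * 4 ^ K < (TT t K : ℤ) + 1 := Int.lt_floor_add_one (t * 4 ^ K)
  have f1 := Int.floor_le ((a:ℝ) + t * b)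
  have f2 := Int.lt_floor_add_one ((a:ℝ) + t * b)
  have h4 : (0:ℝ) < 4 ^ K := by positivity
  have g1 : ((TT t K : ℤ) : ℝ) * b ≤ t * 4 ^ K * b := mul_le_mul_of_nonneg_right h1 hb0
  have g2 : t * 4 ^ K * b ≤ ((TT t K : ℤ) + 1) * b := mul_le_mul_of_nonneg_right h2.le hb0
  have g3 := mul_le_mul_of_nonneg_left f1 h4.le
  have g4 := mul_lt_mul_of_pos_left f2 h4
  constructor
  · have : ((4 ^ K * (⌊(a:ℝ) + t * b⌋ - 1) : ℤ) : ℝ) ≤ ((4 ^ K * a + TT t K * b : ℤ) : ℝ) := by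
      push_cast; nlinarith
    exact_mod_cast this
  · have : ((4 ^ K * a + TT t K * b : ℤ) : ℝ) < ((4 ^ K * (⌊(a:ℝ) + t * b⌋ + 1) : ℤ) : ℝ) := by
      push_cast; nlinarith
    exact_mod_cast this

theorem FL_pos (t : ℝ) (n : ℕ) : 0 < (FL t n).card := by
  rw [Finset.card_pos, FL, Finset.image_nonempty]
  have : (AF n).Nonempty := by rw [← Finset.card_pos, AF_card]; positivity
  exact this.product this

theorem sum_bound (t : ℝ) (ht : t ∈ Set.Ioo (0:ℝ) 1) (I K P : ℕ) (hIK : I ≤ K) :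
    ∑ h ∈ Finset.range I, aa (YY K (TT t K) (P + I)) (K + P + h) ≤ log 4 + log (FL t I).card := by
  classical
  rw [aa_tele, mass_YY]
  have h1 := ent_mul_ZZ_ge (YY K (TT t K) (P + I)) (by simp) (K + P + I)
  let S : Finset ℤ := (FL t I).biUnion (fun f => Finset.Ico (4 ^ (K+P) * (f - 1)) (4 ^ (K+P) * (f - 1) + 4 * 4 ^ (K+P)))
  have h2 := ent_le_log_card (YY K (TT t K) (P + I) * ZZ (K + P)) S (by
    intro z hz
    obtain ⟨x, hx, y, hy, rfl⟩ := mem_supp_mul _ _ _ hz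
    rw [YY_add] at hx
    obtain ⟨u, hu, v, hv, rfl⟩ := mem_supp_mul _ _ _ hx
    have hy' := mem_supp_ZZ _ _ hy
    have hu' := mem_supp_YY K _ (TT_nonneg t ht K) (TT_le t ht K) P u hu
    obtain ⟨⟨a, b⟩, hab, rfl⟩ := mem_supp_sum _ _ _ _ hv
    have hab' := Finset.mem_product.1 hab
    have hc := cell_bd t I K hIK a b hab'.2
    rw [Finset.mem_biUnion]
    refine ⟨⌊(a:ℝ) + t * b⌋, Finset.mem_image.2 ⟨(a,b), hab, rfl⟩, ?_⟩
    rw [Finset.mem_Ico]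
    have h4 : (0:ℤ) < 4 ^ P := by positivity
    have c1 := mul_le_mul_of_nonneg_left hc.1 h4.le
    have c2 := mul_lt_mul_of_pos_left hc.2 h4
    rw [pow_add] at *
    simp only
    constructor <;> nlinarith) (by simp)
  have hS : S.card ≤ (FL t I).card * (4 * 4 ^ (K+P)) := by
    refine Finset.card_biUnion_le_card_mul _ _ _ fun f _ => ?_
    rw [Int.card_Ico, add_sub_cancel_left]
    apply le_of_eq; norm_cast
  have hpos := FL_pos t I
  have h3 : log S.card ≤ log ((FL t I).card) + (log 4 + (K+P : ℕ) * log 4) := by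
    have hf : (0:ℝ) < (FL t I).card := by exact_mod_cast hpos
    rw [← log_pow, ← log_mul (by norm_num) (by positivity), ← log_mul (by positivity) (by positivity)]
    rcases Nat.eq_zero_or_pos S.card with h0 | h0
    · rw [h0]
      simp only [Nat.cast_zero, log_zero]
      apply log_nonneg
      have : (1:ℝ) ≤ (FL t I).card := by exact_mod_cast hpos
      have : (1:ℝ) ≤ 4 ^ (K+P) := one_le_pow₀ (by norm_num)
      nlinarith
    · apply log_le_log (by exact_mod_cast h0)
      exact_mod_cast hS
  push_cast at *
  linarith

theorem Hs_bound (t : ℝ) (ht : t ∈ Set.Ioo (0:ℝ) 1) (s Λ s' : ℝ) (hss : s < s')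
    (HN : ∀ n : ℕ, log (FL t n).card ≤ Λ + s * n * log 4) :
    ∀ u : ℕ, ∃ I0 : ℕ, ∀ K ≥ I0, ∀ P, cc K (TT t K) u P ≤ s' * log 4 := by
  intro u
  have hl : 0 < log 4 := log_pos (by norm_num)
  obtain ⟨j, hj⟩ := exists_nat_gt ((log 4 + Λ + s * u * log 4) / ((s' - s) * log 4))
  refine ⟨u + (j + 1), fun K hK P => ?_⟩
  have h1 := sum_bound t ht (u + (j + 1)) K P hK
  have h2 := HN (u + (j+1))
  have h3 : ((j+1 : ℕ) : ℝ) * cc K (TT t K) u P ≤ ∑ h ∈ Finset.range (u + (j+1)), aa (YY K (TT t K) (P + (u + (j+1)))) (K + P + h) := by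
    calc ((j+1 : ℕ) : ℝ) * cc K (TT t K) u P = ∑ h ∈ Finset.range (j+1), cc K (TT t K) u P := by
          rw [Finset.sum_const, nsmul_eq_mul, Finset.card_range]
      _ ≤ ∑ h ∈ Finset.range (j+1), aa (YY K (TT t K) (P + (u + (j+1)))) (K + P + h) := by
          refine Finset.sum_le_sum fun h hh => ?_
          rw [Finset.mem_range] at hh
          have e1 : cc K (TT t K) u P ≤ cc K (TT t K) u (P + h) := cc_mono _ _ _ (by omega)
          refine e1.trans ?_
          unfold cc
          rw [← add_assoc K]
          exact cc_mono_i' _ _ _ (by omega)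
      _ ≤ _ := Finset.sum_le_sum_of_subset_of_nonneg (Finset.range_subset_range.2 (by omega))
          (fun _ _ _ => aa_nonneg _ _)
  rw [div_lt_iff₀ (mul_pos (by linarith) hl)] at hj
  have hjp : (0:ℝ) < ((j+1:ℕ):ℝ) := by positivity
  by_contra hc
  push Not at hc
  have h4 := mul_lt_mul_of_pos_left hc hjp
  push_cast at *
  nlinarith [mul_pos (show 0 < s' - s by linarith) hl]

theorem copies (V U : Ms) (hV : mass V = 1) (hU : mass U = 1) (p D m : ℕ) (Γ C1 : ℝ)
    (h1 : ∑ h ∈ Finset.range D, aa (V * U) (p + h) - ∑ h ∈ Finset.range D, aa V (p + h) ≤ Γ)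
    (h2 : ent (V * U * ZZ (p + D)) ≤ (p + D : ℕ) * log 4 + C1) :
    ∑ h ∈ Finset.range D, aa (V * U ^ m) (p + h) - ∑ h ∈ Finset.range D, aa V (p + h) ≤ m * (Γ + C1) := by
  rw [aa_tele, aa_tele, mass_mul, hV, hU] at h1
  rw [aa_tele, aa_tele, mass_mul, hV, mass_pow, hU]
  have h3 := ent_mul_ZZ_ge V hV (p + D)
  have h4 := ent_mul_pow (V * ZZ p) U hU m
  have h5 := ent_mul_ge (V * ZZ (p + D)) (U ^ m) (by simp [hU]) (by simp [hV])
  rw [mul_right_comm V (ZZ p), mul_right_comm V (ZZ p)] at h4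
  rw [mul_right_comm V (ZZ (p + D))] at h5
  have h6 : ent (V * U * ZZ p) - ent (V * ZZ p) ≤ Γ + C1 := by
    push_cast at *
    linarith
  have h7 := mul_le_mul_of_nonneg_left h6 (show (0:ℝ) ≤ m by positivity)
  push_cast at *
  simp only [one_pow, mul_one, one_mul] at *
  linarith

theorem blocks (E : Finset ℤ) (hE : E.Nonempty) (V : Ms) (hV : mass V = 1) (p r B : ℕ) (hr : 0 < r)
    (hinj : ∀ x ∈ E, ∀ y ∈ E, x / 4 ^ p = y / 4 ^ p → x = y) (d : ℤ)
    (htop : ∀ x ∈ E, x / 4 ^ (p + r * B) = d) (L g : ℕ) (hL : 0 < L) (s' s'' Δ : ℝ) (hs : s' < s'')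
    (h0 : 0 ≤ (L:ℝ) * log 4 - r * log 4 - 7)
    (hLg : (L:ℝ) * (s'' * log 4) ≤ (1 - (1 - 1/(r:ℝ)) ^ g) ^ (2 * 16 ^ L) * ((L:ℝ) * log 4 - r * log 4 - 7))
    (h1 : ∀ h < r * B, aa V (p + h) ≤ s' * log 4)
    (h2 : ∑ h ∈ Finset.range (r * B), aa (V * un E ^ (g * (2 * 16 ^ L))) (p + h)
      - ∑ h ∈ Finset.range (r * B), aa V (p + h) ≤ Δ) :
    (log E.card - 2 * B * log 4 - r * L * log 4) * (s'' - s') ≤ r * Δ := by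
  classical
  have hl : 0 < log 4 := log_pos (by norm_num)
  have hr' : (0:ℝ) < r := by exact_mod_cast hr
  have hcp : (0:ℝ) < E.card := by exact_mod_cast hE.card_pos
  set m := g * (2 * 16 ^ L) with hm
  have hb := fun b => block E hE (p + r * b) r
  choose F hFE hF hFb using hb
  let NC := (Finset.range B).filter (fun b => 1/(r:ℝ) * E.card ≤ (E \ F b).card)
  have hk := kraft E hE p r B F hF hFE hinj d htop
  have hk2 : ∑ b ∈ Finset.range B, ((E.card:ℝ) * log 4 + (E \ F b).card * (r * log 4)) ≤
      B * (2 * (E.card * log 4)) + NC.card * (E.card * (r * log 4)) := by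
    have : ∀ b ∈ Finset.range B, ((E.card:ℝ) * log 4 + (E \ F b).card * (r * log 4)) ≤
        2 * (E.card * log 4) + if 1/(r:ℝ) * E.card ≤ (E \ F b).card then E.card * (r * log 4) else 0 := by
      intro b _
      split_ifs with hc
      · have : ((E \ F b).card : ℝ) ≤ E.card := by exact_mod_cast Finset.card_le_card Finset.sdiff_subset
        have := mul_le_mul_of_nonneg_right this (show 0 ≤ r * log 4 by positivity)
        have : 0 ≤ E.card * log 4 := by positivity
        linarith
      · push Not at hc
        have := mul_le_mul_of_nonneg_right hc.le (show 0 ≤ r * log 4 by positivity)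
        have e : 1/(r:ℝ) * E.card * (r * log 4) = E.card * log 4 := by field_simp
        linarith
    refine (Finset.sum_le_sum this).trans (le_of_eq ?_)
    rw [Finset.sum_add_distrib, Finset.sum_const, nsmul_eq_mul, Finset.card_range, ← Finset.sum_filter,
      Finset.sum_const, nsmul_eq_mul]
  have hNC : log E.card - 2 * B * log 4 ≤ NC.card * (r * log 4) := by
    have := hk.trans hk2
    by_contra hc
    push Not at hc
    have := mul_lt_mul_of_pos_left hc hcp
    linarith
  let NC' := NC.filter (fun b => b + L < B)
  have hNC' : NC.card ≤ NC'.card + L := by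
    have : NC ⊆ NC' ∪ Finset.Ico (B - L) B := by
      intro b hb
      have hbB : b < B := by simpa using (Finset.mem_filter.1 hb).1
      rw [Finset.mem_union]
      by_cases hc : b + L < B
      · left; exact Finset.mem_filter.2 ⟨hb, hc⟩
      · right; rw [Finset.mem_Ico]; omega
    have h1 := Finset.card_le_card this
    have h2 := Finset.card_union_le NC' (Finset.Ico (B - L) B)
    rw [Nat.card_Ico] at h2
    omega
  let e : ℕ → ℝ := fun h => aa (V * un E ^ m) (p + h) - aa V (p + h)
  have hmu := mass_un E hE
  have he0 : ∀ h, 0 ≤ e h := by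
    intro h
    have := aa_mul V (un E ^ m) (p + h)
    rw [mass_pow, hmu] at this
    simp only [one_pow, NNReal.coe_one, one_mul] at this
    exact sub_nonneg.2 this
  have hmain : ∀ b ∈ NC', (L:ℝ) * ((s'' - s') * log 4) ≤ ∑ l ∈ Finset.range L, e (r * (b+1) + l) := by
    intro b hb
    have hb1 := (Finset.mem_filter.1 hb).1
    have hb2 := (Finset.mem_filter.1 hb).2
    have hb3 := (Finset.mem_filter.1 hb1).2
    have h3 := hFb b (1/r) L g (by positivity) hb3 h0
    have h4 : AA (p + r * b + r) L (un E ^ m) ≤ ∑ l ∈ Finset.range L, (s' * log 4 + e (r * (b+1) + l)) := by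
      unfold AA
      refine Finset.sum_le_sum fun l hl' => ?_
      rw [Finset.mem_range] at hl'
      have e1 : p + r * b + r + l = p + (r * (b+1) + l) := by ring
      have h5 := aa_mul (un E ^ m) V (p + (r * (b+1) + l))
      rw [hV, mul_comm (un E ^ m)] at h5
      simp only [NNReal.coe_one, one_mul] at h5
      have h6 := h1 (r * (b+1) + l) (by
        calc r * (b + 1) + l < r * (b+1) + r * L := by nlinarith
          _ = r * (b + L + 1) := by ring
          _ ≤ r * B := Nat.mul_le_mul_left _ hb2)
      rw [e1]
      have : e (r * (b+1) + l) = aa (V * un E ^ m) (p + (r * (b+1) + l)) - aa V (p + (r * (b+1) + l)) := rfl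
      linarith
    rw [Finset.sum_add_distrib, Finset.sum_const, nsmul_eq_mul, Finset.card_range] at h4
    linarith
  have hsum := Finset.sum_le_sum hmain
  rw [Finset.sum_const, nsmul_eq_mul, Finset.sum_comm] at hsum
  have hl2 : ∀ l ∈ Finset.range L, ∑ b ∈ NC', e (r * (b+1) + l) ≤ Δ := by
    intro l hl'
    rw [Finset.mem_range] at hl'
    refine le_trans ?_ h2
    rw [← Finset.sum_sub_distrib]
    rw [← Finset.sum_image (f := e) (g := fun b => r * (b+1) + l) (s := NC') (by
      intro x _ y _ hxy
      simp only [Nat.add_right_cancel_iff] at hxy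
      have := Nat.eq_of_mul_eq_mul_left hr hxy
      omega)]
    refine Finset.sum_le_sum_of_subset_of_nonneg ?_ (fun h _ _ => he0 h)
    intro x hx
    obtain ⟨b, hb, rfl⟩ := Finset.mem_image.1 hx
    have hb2 := (Finset.mem_filter.1 hb).2
    rw [Finset.mem_range]
    calc r * (b + 1) + l < r * (b+1) + r * L := by nlinarith
      _ = r * (b + L + 1) := by ring
      _ ≤ r * B := Nat.mul_le_mul_left _ hb2
  have hsum2 := hsum.trans (Finset.sum_le_sum hl2)
  rw [Finset.sum_const, nsmul_eq_mul, Finset.card_range] at hsum2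
  have hL' : (0:ℝ) < L := by exact_mod_cast hL
  have hfin : (NC'.card : ℝ) * ((s'' - s') * log 4) ≤ Δ := by
    by_contra hc
    push Not at hc
    have := mul_lt_mul_of_pos_left hc hL'
    linarith
  have hNC'' : (NC.card : ℝ) ≤ NC'.card + L := by exact_mod_cast hNC'
  have q1 : log E.card - 2 * B * log 4 - r * L * log 4 ≤ NC'.card * (r * log 4) := by
    have := mul_le_mul_of_nonneg_right hNC'' (show 0 ≤ r * log 4 by positivity)
    linarith
  have q2 := mul_le_mul_of_nonneg_right q1 (show 0 ≤ s'' - s' by linarith)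
  have q3 := mul_le_mul_of_nonneg_left hfin hr'.le
  linarith

end FC

namespace FC
open AddMonoidAlgebra Real

theorem theta (V : Ms) (hV : mass V = 1) (S : Finset ℤ) (hS : S.Nonempty) (q p D N : ℕ) (hN : 0 < N)
    (hc : (S.image (fun x => x / (4:ℤ) ^ q)).card ≤ 2 * N) (Γ : ℝ) (hΓ : 0 < Γ)
    (h : ∑ h ∈ Finset.range D, aa (V * un S) (p + h) - ∑ h ∈ Finset.range D, aa V (p + h) ≤ Γ) :
    ∃ (E : Finset ℤ) (θ : ℤ), E ⊆ S ∧ E.Nonempty ∧ (∀ x ∈ E, x / 4 ^ q = θ) ∧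
      (∑ h ∈ Finset.range D, aa (V * un E) (p + h) - ∑ h ∈ Finset.range D, aa V (p + h) ≤ 2 * Γ) ∧
      S.card ≤ 4 * N * E.card := by
  classical
  set Θ := S.image (fun x => x / (4:ℤ) ^ q) with hΘ
  set Ef : ℤ → Finset ℤ := fun θ => S.filter (fun x => x / (4:ℤ) ^ q = θ) with hEf
  have hne : ∀ θ ∈ Θ, (Ef θ).Nonempty := by
    intro θ hθ
    obtain ⟨x, hx, rfl⟩ := Finset.mem_image.1 hθ
    exact ⟨x, Finset.mem_filter.2 ⟨hx, rfl⟩⟩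
  have hSp : 0 < S.card := hS.card_pos
  set w : ℤ → NNReal := fun θ => (Ef θ).card / S.card with hw
  have hcard : ∑ θ ∈ Θ, (Ef θ).card = S.card :=
    (Finset.card_eq_sum_card_image (fun x => x / (4:ℤ) ^ q) S).symm
  have hw1 : ∑ θ ∈ Θ, w θ = 1 := by
    rw [hw, ← Finset.sum_div, ← Nat.cast_sum, hcard, div_self]
    exact_mod_cast hSp.ne'
  have hun : un S = ∑ θ ∈ Θ, un (Ef θ) * sg 0 (w θ) := by
    unfold un
    rw [← Finset.sum_fiberwise_of_maps_to (g := fun x => x / (4:ℤ) ^ q) (t := Θ)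
      (fun x hx => Finset.mem_image_of_mem _ hx)]
    refine Finset.sum_congr rfl fun θ hθ => ?_
    rw [Finset.sum_mul]
    refine Finset.sum_congr rfl fun x hx => ?_
    rw [sg_mul, add_zero]
    congr 1
    have h1 : ((Ef θ).card : NNReal) ≠ 0 := by exact_mod_cast (hne θ hθ).card_pos.ne'
    have h2 : (S.card : NNReal) ≠ 0 := by exact_mod_cast hSp.ne'
    simp only [hw]
    field_simp
  set G : Ms → ℝ := fun μ => ∑ h ∈ Finset.range D, aa μ (p + h) with hG
  have hsup : ∑ θ ∈ Θ, (w θ : ℝ) * G (V * un (Ef θ)) ≤ G (V * un S) := by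
    simp only [hG, Finset.mul_sum]
    rw [Finset.sum_comm]
    refine Finset.sum_le_sum fun h _ => ?_
    rw [hun, Finset.mul_sum]
    refine le_trans (le_of_eq ?_) (aa_sum _ _ _)
    refine Finset.sum_congr rfl fun θ _ => ?_
    rw [← mul_assoc, aa_shift]
  have hg0 : ∀ θ ∈ Θ, 0 ≤ G (V * un (Ef θ)) - G V := by
    intro θ hθ
    rw [sub_nonneg]
    refine Finset.sum_le_sum fun h _ => ?_
    have := aa_mul V (un (Ef θ)) (p + h)
    rw [mass_un _ (hne θ hθ)] at this
    simpa using this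
  by_contra hcon
  have hlt : ∀ θ ∈ Θ, (w θ : ℝ) < (w θ : ℝ) * (G (V * un (Ef θ)) - G V) / (2 * Γ) + 1 / (4 * N) := by
    intro θ hθ
    by_contra hle
    rw [not_lt] at hle
    have hNp : (0:ℝ) < N := by exact_mod_cast hN
    have hwp : (0:ℝ) < w θ := by
      have : 0 < w θ := by
        simp only [hw]
        have h1 := (hne θ hθ).card_pos
        positivity
      exact_mod_cast this
    have h1 : 0 ≤ (w θ : ℝ) * (G (V * un (Ef θ)) - G V) / (2 * Γ) := by
      have := hg0 θ hθ
      positivity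
    have h2 : 0 < 1 / (4 * (N:ℝ)) := by positivity
    apply hcon
    refine ⟨Ef θ, θ, Finset.filter_subset _ _, hne θ hθ, fun x hx => (Finset.mem_filter.1 hx).2, ?_, ?_⟩
    · have h3 : (w θ : ℝ) * (G (V * un (Ef θ)) - G V) / (2 * Γ) ≤ w θ := by linarith
      rw [div_le_iff₀ (by positivity)] at h3
      exact le_of_mul_le_mul_left h3 hwp
    · have h3 : 1 / (4 * (N:ℝ)) ≤ w θ := by linarith
      simp only [hw] at h3
      push_cast at h3
      rw [div_le_div_iff₀ (by positivity) (by exact_mod_cast hSp)] at h3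
      have : (S.card : ℝ) ≤ 4 * N * (Ef θ).card := by linarith
      exact_mod_cast this
  have hΘne : Θ.Nonempty := hS.image _
  have hs := Finset.sum_lt_sum_of_nonempty hΘne hlt
  have hw1' : ∑ θ ∈ Θ, (w θ : ℝ) = 1 := by exact_mod_cast hw1
  rw [hw1', Finset.sum_add_distrib, ← Finset.sum_div, Finset.sum_const, nsmul_eq_mul] at hs
  have e1 : ∑ θ ∈ Θ, (w θ : ℝ) * (G (V * un (Ef θ)) - G V) ≤ Γ := by
    simp_rw [mul_sub]
    rw [Finset.sum_sub_distrib, ← Finset.sum_mul, hw1', one_mul]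
    linarith
  have e2 : (∑ θ ∈ Θ, (w θ : ℝ) * (G (V * un (Ef θ)) - G V)) / (2 * Γ) ≤ 1 / 2 := by
    rw [div_le_iff₀ (by positivity)]; linarith
  have e3 : (Θ.card : ℝ) * (1 / (4 * N)) ≤ 1 / 2 := by
    have hNp : (0:ℝ) < N := by exact_mod_cast hN
    have : (Θ.card : ℝ) ≤ 2 * N := by exact_mod_cast hc
    rw [mul_one_div, div_le_iff₀ (by positivity)]; linarith
  linarith

end FC

namespace FC
open AddMonoidAlgebra Real

def sep (t : ℝ) (n : ℕ) : Prop := ∀ a ∈ AF n, ∀ b ∈ AF n, ∀ a' ∈ AF n, ∀ b' ∈ AF n,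
  (a, b) ≠ (a', b') → (1/4 : ℝ) ^ (3 * n) ≤ |((a:ℝ) - a') + t * ((b:ℝ) - b')|

theorem abs_lt_of_div_eq (x y c : ℤ) (hc : 0 < c) (h : x / c = y / c) : |x - y| < c := by
  have h1 := Int.emod_add_mul_ediv x c
  have h2 := Int.emod_add_mul_ediv y c
  have h3 := Int.emod_nonneg x hc.ne'
  have h4 := Int.emod_nonneg y hc.ne'
  have h5 := Int.emod_lt_of_pos x hc
  have h6 := Int.emod_lt_of_pos y hc
  rw [h] at h1
  rw [abs_lt]; constructor <;> linarith

theorem pts_inj (t : ℝ) (n K P D : ℕ) (hn : 1 ≤ n) (hK : 5 * n ≤ K) (hD : 4 * n ≤ D)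
    (hsep : sep t n) (a b a' b' : ℤ) (ha : a ∈ AF n) (hb : b ∈ AF n) (ha' : a' ∈ AF n) (hb' : b' ∈ AF n)
    (h : (4 ^ (P + D) * (4 ^ K * a + TT t K * b)) / (4:ℤ) ^ (K + P) =
      (4 ^ (P + D) * (4 ^ K * a' + TT t K * b')) / (4:ℤ) ^ (K + P)) : (a, b) = (a', b') := by
  by_contra hne
  have h1 := hsep a ha b hb a' ha' b' hb' hne
  have h2 := abs_lt_of_div_eq _ _ _ (by positivity) h
  have h2' : |(4:ℝ) ^ (P + D) * (4 ^ K * a + TT t K * b) - 4 ^ (P + D) * (4 ^ K * a' + TT t K * b')|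
      < 4 ^ (K + P) := by exact_mod_cast h2
  obtain ⟨k, rfl⟩ := Nat.exists_eq_add_of_le hK
  obtain ⟨j, rfl⟩ := Nat.exists_eq_add_of_le hD
  set T : ℝ := ((TT t (5 * n + k) : ℤ) : ℝ) with hT
  set X : ℝ := 4 ^ n with hX
  have hX4 : 4 ≤ X := by
    calc (4:ℝ) = 4 ^ 1 := by norm_num
      _ ≤ 4 ^ n := pow_le_pow_right₀ (by norm_num) hn
  have hk : (1:ℝ) ≤ 4 ^ k := one_le_pow₀ (by norm_num)
  have hj : (1:ℝ) ≤ 4 ^ j := one_le_pow₀ (by norm_num)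
  have hPp : (0:ℝ) < 4 ^ P := by positivity
  have T1 : T ≤ t * 4 ^ (5 * n + k) := Int.floor_le (t * 4 ^ (5*n+k))
  have T2 : t * 4 ^ (5 * n + k) < T + 1 := Int.lt_floor_add_one (t * 4 ^ (5*n+k))
  have e5 : (4:ℝ) ^ (5 * n + k) = X ^ 5 * 4 ^ k := by rw [pow_add, mul_comm 5 n, pow_mul]
  have e4 : (4:ℝ) ^ (P + (4 * n + j)) = 4 ^ P * (X ^ 4 * 4 ^ j) := by
    rw [pow_add, pow_add, mul_comm 4 n, pow_mul]
  have e3 : (1/4:ℝ) ^ (3 * n) = 1 / X ^ 3 := by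
    rw [one_div, inv_pow, mul_comm 3 n, pow_mul, one_div]
  rw [e5] at T1 T2
  rw [pow_add 4 (5 * n + k) P, e5, e4, ← mul_sub, abs_mul, abs_of_pos (by positivity)] at h2'
  rw [e3] at h1
  have hbb : |(b:ℝ) - b'| ≤ X := by
    have q1 := AF_bd n b hb
    have q2 := AF_bd n b' hb'
    have : |b - b'| ≤ 4 ^ n := by rw [abs_le]; constructor <;> linarith
    rw [hX]
    exact_mod_cast this
  set Y := X ^ 5 * (4:ℝ) ^ k with hY
  have id1 : (Y * a + T * b) - (Y * a' + T * b') = Y * (((a:ℝ) - a') + t * ((b:ℝ) - b')) - (t * Y - T) * ((b:ℝ) - b') := by ring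
  have hYp : 0 < Y := by positivity
  have l1 : Y * (1 / X ^ 3) ≤ |Y * (((a:ℝ) - a') + t * ((b:ℝ) - b'))| := by
    rw [abs_mul, abs_of_pos hYp]
    exact mul_le_mul_of_nonneg_left h1 hYp.le
  have l2 : |(t * Y - T) * ((b:ℝ) - b')| ≤ X := by
    rw [abs_mul]
    have : |t * Y - T| ≤ 1 := by rw [abs_le]; constructor <;> linarith
    calc _ ≤ 1 * X := mul_le_mul this hbb (abs_nonneg _) (by norm_num)
      _ = X := one_mul _
  have l3 := abs_sub_abs_le_abs_sub (Y * (((a:ℝ) - a') + t * ((b:ℝ) - b'))) ((t * Y - T) * ((b:ℝ) - b'))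
  rw [← id1] at l3
  have l4 : Y * (1 / X ^ 3) = X ^ 2 * 4 ^ k := by rw [hY]; field_simp
  have l5 : X * 4 ^ k ≤ X ^ 2 * 4 ^ k - X := by
    have g1 : (4:ℝ) ^ k + 1 ≤ X * 4 ^ k := by nlinarith
    have g2 := mul_le_mul_of_nonneg_left g1 (show 0 ≤ X by linarith)
    linarith
  have l6 : X * 4 ^ k ≤ |(Y * a + T * b) - (Y * a' + T * b')| := by linarith
  have l7 : 4 ^ P * (X ^ 4 * 4 ^ j) * (X * 4 ^ k) ≤ 4 ^ P * (X ^ 4 * 4 ^ j) * |(Y * a + T * b) - (Y * a' + T * b')| :=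
    mul_le_mul_of_nonneg_left l6 (by positivity)
  have l8 : Y * 4 ^ P ≤ 4 ^ P * (X ^ 4 * 4 ^ j) * (X * 4 ^ k) := by
    have : 4 ^ P * (X ^ 4 * 4 ^ j) * (X * 4 ^ k) = Y * 4 ^ P * 4 ^ j := by rw [hY]; ring
    rw [this]
    exact le_mul_of_one_le_right (by positivity) hj
  linarith

theorem pts_card (t : ℝ) (n K Q : ℕ) (hK : n ≤ K) :
    (((AF n ×ˢ AF n).image (fun ab : ℤ × ℤ => (4:ℤ) ^ Q * (4 ^ K * ab.1 + TT t K * ab.2))).image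
      (fun x => x / (4:ℤ) ^ (K + Q))).card ≤ 2 * (FL t n).card := by
  classical
  have : (((AF n ×ˢ AF n).image (fun ab : ℤ × ℤ => (4:ℤ) ^ Q * (4 ^ K * ab.1 + TT t K * ab.2))).image
      (fun x => x / (4:ℤ) ^ (K + Q))) ⊆ FL t n ∪ (FL t n).image (fun x => x - 1) := by
    intro z hz
    obtain ⟨x, hx, rfl⟩ := Finset.mem_image.1 hz
    obtain ⟨⟨a, b⟩, hab, rfl⟩ := Finset.mem_image.1 hx
    have hab' := Finset.mem_product.1 hab
    obtain ⟨c1, c2⟩ := cell_bd t n K hK a b hab'.2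
    have hF : ⌊(a:ℝ) + t * b⌋ ∈ FL t n := Finset.mem_image.2 ⟨(a, b), hab, rfl⟩
    have h4 : (0:ℤ) < 4 ^ K := by positivity
    have e : (4:ℤ) ^ Q * (4 ^ K * a + TT t K * b) / 4 ^ (K + Q) = (4 ^ K * a + TT t K * b) / 4 ^ K := by
      rw [pow_add, mul_comm ((4:ℤ)^K) (4 ^ Q), Int.mul_ediv_mul_of_pos _ _ (by positivity)]
    simp only [e]
    have g1 : ⌊(a:ℝ) + t * b⌋ - 1 ≤ (4 ^ K * a + TT t K * b) / 4 ^ K := by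
      rw [Int.le_ediv_iff_mul_le h4]; linarith
    have g2 : (4 ^ K * a + TT t K * b) / 4 ^ K < ⌊(a:ℝ) + t * b⌋ + 1 := by
      rw [Int.ediv_lt_iff_lt_mul h4]; linarith
    rw [Finset.mem_union, Finset.mem_image]
    by_cases hh : (4 ^ K * a + TT t K * b) / 4 ^ K = ⌊(a:ℝ) + t * b⌋
    · left; rw [hh]; exact hF
    · right; exact ⟨_, hF, by omega⟩
  calc _ ≤ _ := Finset.card_le_card this
    _ ≤ _ := Finset.card_union_le _ _
    _ ≤ (FL t n).card + (FL t n).card := Nat.add_le_add_left Finset.card_image_le _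
    _ = _ := by ring

theorem un_image (n : ℕ) (f : ℤ × ℤ → ℤ) (hf : ∀ x ∈ AF n ×ˢ AF n, ∀ y ∈ AF n ×ˢ AF n, f x = f y → x = y) :
    ((AF n ×ˢ AF n).image f).card = 4 ^ n ∧
    un ((AF n ×ˢ AF n).image f) = ∑ ab ∈ AF n ×ˢ AF n, sg (f ab) (1 / 4 ^ n) := by
  classical
  have hc : ((AF n ×ˢ AF n).image f).card = 4 ^ n := by
    rw [Finset.card_image_of_injOn (fun x hx y hy h => hf x hx y hy h), Finset.card_product, AF_card, ← mul_pow]; norm_num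
  refine ⟨hc, ?_⟩
  rw [un, hc, Finset.sum_image (fun x hx y hy h => hf x hx y hy h)]
  push_cast; rfl

theorem ent_top (V : Ms) (hV : mass V = 1) (E : Finset ℤ) (hE : E.Nonempty) (q : ℕ) (θ : ℤ)
    (hVs : ∀ z ∈ V.coeff.support, 0 ≤ z ∧ z < 4 ^ q) (hθ : ∀ x ∈ E, x / 4 ^ q = θ) :
    ent (V * un E * ZZ q) ≤ (q : ℕ) * log 4 + log 4 := by
  have h := ent_le_log_card (V * un E * ZZ q) (Finset.Ico (4 ^ q * θ) (4 ^ q * θ + 4 * 4 ^ q)) (by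
    intro z hz
    obtain ⟨x, hx, y, hy, rfl⟩ := mem_supp_mul _ _ _ hz
    obtain ⟨u, hu, v, hv, rfl⟩ := mem_supp_mul _ _ _ hx
    obtain ⟨i, hi, rfl⟩ := mem_supp_sum _ _ _ _ hv
    have hy' := mem_supp_ZZ _ _ hy
    have hu' := hVs u hu
    have h1 := Int.emod_add_mul_ediv i (4 ^ q)
    have h3 := Int.emod_nonneg i (show (4:ℤ) ^ q ≠ 0 by positivity)
    have h5 := Int.emod_lt_of_pos i (show (0:ℤ) < 4 ^ q by positivity)
    rw [hθ i hi] at h1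
    rw [Finset.mem_Ico]; constructor <;> linarith) (by simp [hV, mass_un E hE])
  refine h.trans (le_of_eq ?_)
  rw [Int.card_Ico]
  have : (4 ^ q * θ + 4 * 4 ^ q - 4 ^ q * θ : ℤ).toNat = 4 ^ (q + 1) := by
    rw [show (4 ^ q * θ + 4 * 4 ^ q - 4 ^ q * θ : ℤ) = ((4 ^ (q+1) : ℕ) : ℤ) by push_cast; ring]
    exact Int.toNat_natCast _
  rw [this]; push_cast; rw [log_pow]; push_cast; ring

end FC

namespace FC
open AddMonoidAlgebra Real

set_option maxHeartbeats 1000000 in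
theorem core (t : ℝ) (ht : t ∈ Set.Ioo (0:ℝ) 1) (s Λ : ℝ) (hs0 : 0 ≤ s) (hs1 : s < 1)
    (HN : ∀ n : ℕ, log (FL t n).card ≤ Λ + s * n * log 4)
    (hG : ∀ n0, ∃ n ≥ n0, sep t n) : False := by
  have hl : 0 < log 4 := log_pos (by norm_num)
  obtain ⟨s', hs', hs'1⟩ := exists_between hs1
  obtain ⟨s'', hs'', hs''1⟩ := exists_between hs'1
  obtain ⟨ρ, hρ⟩ := exists_nat_gt (4 / (1 - s))
  have h1s : 0 < 1 - s := by linarith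
  have hρ0 : (0:ℝ) < ρ := lt_trans (by positivity) hρ
  have hρ0' : 0 < ρ := by exact_mod_cast hρ0
  have hρ1 : 4 < ρ * (1 - s) := by rwa [div_lt_iff₀ h1s] at hρ
  set r := 4 * ρ with hr
  have hr0 : 0 < r := by omega
  have hr0' : (0:ℝ) < r := by exact_mod_cast hr0
  obtain ⟨L, hL⟩ := exists_nat_gt ((r * log 4 + 7) / ((1 - s'') * log 4))
  have hs2 : 0 < 1 - s'' := by linarith
  have hL0 : (0:ℝ) < L := lt_trans (by positivity) hL
  have hL0' : 0 < L := by exact_mod_cast hL0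
  rw [div_lt_iff₀ (by positivity)] at hL
  set A : ℝ := (L:ℝ) * log 4 - r * log 4 - 7 with hA
  have hA1 : (L:ℝ) * (s'' * log 4) < A := by rw [hA]; linarith
  have hA0 : 0 ≤ A := by
    have : 0 ≤ (L:ℝ) * (s'' * log 4) := by
      have : 0 ≤ s'' := by linarith
      positivity
    linarith
  obtain ⟨g, hg⟩ : ∃ g : ℕ, (L:ℝ) * (s'' * log 4) < (1 - (1 - 1/(r:ℝ)) ^ g) ^ (2 * 16 ^ L) * A := by
    have h1 : Tendsto (fun g : ℕ => (1 - 1/(r:ℝ)) ^ g) atTop (𝓝 0) := by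
      apply tendsto_pow_atTop_nhds_zero_of_lt_one
      · rw [sub_nonneg, div_le_one hr0']; exact_mod_cast hr0
      · have : 0 < 1 / (r:ℝ) := by positivity
        linarith
    have h2 := (((tendsto_const_nhds (x := (1:ℝ))).sub h1).pow (2 * 16 ^ L)).mul_const A
    rw [sub_zero, one_pow, one_mul] at h2
    exact (h2.eventually (lt_mem_nhds hA1)).exists
  set m := g * (2 * 16 ^ L) with hm
  set δ : ℝ := (1 - s) * log 4 * (s'' - s') / (8 * r * (m + 1)) with hδ
  have hss : 0 < s'' - s' := by linarith
  have hδ0 : 0 < δ := by positivity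
  set C2 : ℝ := Λ + log 4 + 2 * log 4 + r * L * log 4 with hC2
  obtain ⟨n1, hn1⟩ := exists_nat_gt (4 * (C2 * (s'' - s') + r * m * log 4) / ((1 - s) * log 4 * (s'' - s')))
  set n0 := max (max ρ 1) n1 with hn0
  set D : ℕ → ℕ := fun n => r * (n / ρ + 1) with hD
  obtain ⟨n, hn, hsep, K, hK, P, hV1, hgain⟩ := gain (TT t) s' (Hs_bound t ht s Λ s' hs' HN) (sep t) hG D n0 (by
    intro n hn
    have h1 : ρ ≤ n := le_trans (by simp [hn0]) hn
    have h2 := Nat.mul_div_le n ρ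
    simp only [hD, hr]
    nlinarith) δ hδ0
  have hn_ρ : ρ ≤ n := le_trans (by simp [hn0]) hn
  have hn_1 : 1 ≤ n := le_trans (by simp [hn0]) hn
  have hn_n1 : n1 ≤ n := le_trans (by simp [hn0]) hn
  have hDn : 4 * n ≤ D n := by
    have := Nat.lt_mul_div_succ n hρ0'
    simp only [hD, hr]
    nlinarith
  set V := YY K (TT t K) (P + D n) with hV
  set f : ℤ × ℤ → ℤ := fun ab => (4:ℤ) ^ (P + D n) * (4 ^ K * ab.1 + TT t K * ab.2) with hf
  have hinj : ∀ x ∈ AF n ×ˢ AF n, ∀ y ∈ AF n ×ˢ AF n, f x / 4 ^ (K + P) = f y / 4 ^ (K + P) → x = y := by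
    rintro ⟨a, b⟩ hx ⟨a', b'⟩ hy h
    rw [Finset.mem_product] at hx hy
    exact pts_inj t n K P (D n) hn_1 hK hDn hsep a b a' b' hx.1 hx.2 hy.1 hy.2 h
  obtain ⟨hSc, hSu⟩ := un_image n f (fun x hx y hy h => hinj x hx y hy (by rw [h]))
  set S := (AF n ×ˢ AF n).image f with hS
  have hSne : S.Nonempty := by rw [← Finset.card_pos, hSc]; positivity
  have hcd := pts_card t n K (P + D n) (by omega)
  rw [YY_add, ← hV] at hgain
  change ∑ h ∈ Finset.range (D n), aa (V * ∑ ab ∈ AF n ×ˢ AF n, sg (f ab) (1 / 4 ^ n)) (K + P + h) - _ ≤ _ at hgain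
  rw [← hSu] at hgain
  have hnp : (0:ℝ) < n := by exact_mod_cast hn_1
  obtain ⟨E, θ, hES, hEne, hEθ, hEg, hEc⟩ := theta V (mass_YY _ _ _) S hSne (K + (P + D n)) (K + P) (D n)
    (FL t n).card (FL_pos t n) hcd (δ * n) (by positivity) hgain
  have hent := ent_top V (mass_YY _ _ _) E hEne (K + (P + D n)) θ
    (mem_supp_YY K _ (TT_nonneg t ht K) (TT_le t ht K) (P + D n)) hEθ
  rw [← add_assoc] at hent hEθ
  have hcop := copies V (un E) (mass_YY _ _ _) (mass_un E hEne) (K + P) (D n) m _ _ hEg hent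
  have hbl := blocks E hEne V (mass_YY _ _ _) (K + P) r (n / ρ + 1) hr0 (by
    intro x hx y hy h
    obtain ⟨u, hu, rfl⟩ := Finset.mem_image.1 (hES hx)
    obtain ⟨v, hv, rfl⟩ := Finset.mem_image.1 (hES hy)
    rw [hinj u hu v hv h]) θ hEθ L g hL0' s' s'' _ hs'' hA0 hg.le hV1 hcop
  have hEp : (0:ℝ) < E.card := by exact_mod_cast hEne.card_pos
  have hNp : (0:ℝ) < (FL t n).card := by exact_mod_cast FL_pos t n
  have hlog : (n:ℝ) * log 4 ≤ log 4 + log (FL t n).card + log E.card := by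
    rw [hSc] at hEc
    have : (4:ℝ) ^ n ≤ 4 * (FL t n).card * E.card := by exact_mod_cast hEc
    have := log_le_log (by positivity) this
    rw [log_pow, log_mul (by positivity) (by positivity), log_mul (by positivity) (by positivity)] at this
    exact this
  have hN := HN n
  have hB : (2:ℝ) * ((n / ρ + 1 : ℕ) : ℝ) ≤ (1 - s) * n / 2 + 2 := by
    have h1 : ((n / ρ : ℕ) : ℝ) ≤ n / ρ := Nat.cast_div_le
    have h2 : (n:ℝ) / ρ ≤ (1 - s) * n / 4 := by
      have h3 := mul_le_mul_of_nonneg_left hρ1.le hnp.le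
      rw [div_le_iff₀ hρ0]; linarith only [h3]
    push_cast; linarith
  have hn2 : 4 * (C2 * (s'' - s') + r * m * log 4) < (1 - s) * log 4 * (s'' - s') * n := by
    rw [div_lt_iff₀ (by positivity)] at hn1
    have h1 : (n1:ℝ) ≤ n := by exact_mod_cast hn_n1
    have h2 := mul_le_mul_of_nonneg_right h1 (show 0 ≤ (1 - s) * log 4 * (s'' - s') by positivity)
    linarith
  have hδm : r * (m * (2 * δ * n)) ≤ (1 - s) * log 4 * (s'' - s') * n / 4 := by
    have h1 : (8 * r * (m + 1)) * δ = (1 - s) * log 4 * (s'' - s') := by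
      rw [hδ]; field_simp
    rw [← h1]
    have h3 : 0 ≤ r * δ * n := by positivity
    linarith only [h3]
  have hX : (1 - s) * n * log 4 / 2 - C2 ≤ log E.card - 2 * ((n / ρ + 1 : ℕ) : ℝ) * log 4 - r * L * log 4 := by
    have := mul_le_mul_of_nonneg_right hB hl.le
    rw [hC2]; linarith
  have hY := mul_le_mul_of_nonneg_right hX hss.le
  have hZ : ((1 - s) * n * log 4 / 2 - C2) * (s'' - s') ≤ r * (m * (2 * (δ * n) + log 4)) := hY.trans hbl
  linarith only [hZ, hn2, hδm]

end FC

namespace FC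
open AddMonoidAlgebra Real

theorem AF_dig (n : ℕ) : ∀ a ∈ AF n, ∃ ε : ℕ → ℤ, (∀ i, ε i = 0 ∨ ε i = 1) ∧
    a = ∑ i ∈ Finset.range n, ε i * 4 ^ i := by
  induction n with
  | zero => intro a ha; simp [AF] at ha; exact ⟨0, by simp, by simp [ha]⟩
  | succ n ih =>
    intro a ha
    rw [AF, Finset.mem_union, Finset.mem_image] at ha
    rcases ha with ha | ⟨b, hb, rfl⟩
    · obtain ⟨ε, h1, h2⟩ := ih a ha
      refine ⟨fun i => if i = n then 0 else ε i, fun i => ?_, ?_⟩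
      · by_cases h : i = n
        · simp [h]
        · simpa [h] using h1 i
      · rw [Finset.sum_range_succ, h2]
        simp only [if_true, zero_mul, add_zero]
        refine Finset.sum_congr rfl fun i hi => ?_
        rw [if_neg (Finset.mem_range.1 hi).ne]
    · obtain ⟨ε, h1, h2⟩ := ih b hb
      refine ⟨fun i => if i = n then 1 else ε i, fun i => ?_, ?_⟩
      · by_cases h : i = n
        · simp [h]
        · simpa [h] using h1 i
      · rw [Finset.sum_range_succ, h2]
        simp only [if_true, one_mul]
        congr 1
        refine Finset.sum_congr rfl fun i hi => ?_
        rw [if_neg (Finset.mem_range.1 hi).ne]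

theorem word_val (t : ℝ) (n : ℕ) (ε η : ℕ → ℤ) :
    ∑ j ∈ Finset.range n, (3 * (ε (n - 1 - j) : ℝ) + 3 * t * η (n - 1 - j)) / 4 ^ (j + 1) =
    3 / 4 ^ n * (((∑ i ∈ Finset.range n, ε i * 4 ^ i : ℤ) : ℝ) + t * ((∑ i ∈ Finset.range n, η i * 4 ^ i : ℤ) : ℝ)) := by
  rw [← Finset.sum_range_reflect]
  push_cast
  rw [Finset.mul_sum, ← Finset.sum_add_distrib, Finset.mul_sum]
  refine Finset.sum_congr rfl fun j hj => ?_
  rw [Finset.mem_range] at hj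
  have e1 : n - 1 - (n - 1 - j) = j := by omega
  have e2 : (4:ℝ) ^ n = 4 ^ (n - 1 - j + 1) * 4 ^ j := by rw [← pow_add]; congr 1; omega
  rw [e1, e2]
  field_simp

theorem dig_mem (t : ℝ) (x y : ℤ) (hx : x = 0 ∨ x = 1) (hy : y = 0 ∨ y = 1) :
    3 * (x : ℝ) + 3 * t * y ∈ Omega t := by
  rcases hx with rfl | rfl <;> rcases hy with rfl | rfl <;> simp [Omega]
  right; right; ring

theorem dig_inj (t : ℝ) (ht : t ∈ Set.Ioo (0:ℝ) 1) (x y x' y' : ℤ) (hx : x = 0 ∨ x = 1) (hy : y = 0 ∨ y = 1)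
    (hx' : x' = 0 ∨ x' = 1) (hy' : y' = 0 ∨ y' = 1)
    (h : 3 * (x : ℝ) + 3 * t * y = 3 * (x' : ℝ) + 3 * t * y') : x = x' ∧ y = y' := by
  have h1 := ht.1
  have h2 := ht.2
  rcases hx with rfl | rfl <;> rcases hy with rfl | rfl <;> rcases hx' with rfl | rfl <;>
    rcases hy' with rfl | rfl <;> simp at h ⊢ <;> linarith

theorem overlap_of_AF (t : ℝ) (ht : t ∈ Set.Ioo (0:ℝ) 1) (n : ℕ) (a b a' b' : ℤ)
    (ha : a ∈ AF n) (hb : b ∈ AF n) (ha' : a' ∈ AF n) (hb' : b' ∈ AF n) (hne : (a, b) ≠ (a', b'))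
    (h : ((a:ℝ) - a') + t * ((b:ℝ) - b') = 0) : HasExactOverlap t := by
  obtain ⟨ε, e1, e2⟩ := AF_dig n a ha
  obtain ⟨η, f1, f2⟩ := AF_dig n b hb
  obtain ⟨ε', e1', e2'⟩ := AF_dig n a' ha'
  obtain ⟨η', f1', f2'⟩ := AF_dig n b' hb'
  have hn : 0 < n := by
    rcases Nat.eq_zero_or_pos n with rfl | h
    · simp at e2 f2 e2' f2'
      simp [e2, f2, e2', f2'] at hne
    · exact h
  refine ⟨n, hn, fun j => 3 * (ε (n - 1 - j) : ℝ) + 3 * t * η (n - 1 - j),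
    fun j => 3 * (ε' (n - 1 - j) : ℝ) + 3 * t * η' (n - 1 - j), fun j => dig_mem _ _ _ (e1 _) (f1 _),
    fun j => dig_mem _ _ _ (e1' _) (f1' _), ?_, ?_⟩
  · intro hcd
    have key : ∀ i < n, ε i = ε' i ∧ η i = η' i := by
      intro i hi
      have := congrFun hcd ⟨n - 1 - i, by omega⟩
      have e : n - 1 - (n - 1 - i) = i := by omega
      simp only [e] at this
      exact dig_inj t ht _ _ _ _ (e1 _) (f1 _) (e1' _) (f1' _) this
    apply hne
    rw [e2, f2, e2', f2', Prod.mk.injEq]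
    constructor <;> refine Finset.sum_congr rfl fun i hi => ?_
    · rw [(key i (Finset.mem_range.1 hi)).1]
    · rw [(key i (Finset.mem_range.1 hi)).2]
  · rw [Fin.sum_univ_eq_sum_range (fun j => (3 * (ε (n - 1 - j) : ℝ) + 3 * t * η (n - 1 - j)) / 4 ^ (j + 1)),
      Fin.sum_univ_eq_sum_range (fun j => (3 * (ε' (n - 1 - j) : ℝ) + 3 * t * η' (n - 1 - j)) / 4 ^ (j + 1)),
      word_val, word_val, ← e2, ← f2, ← e2', ← f2']
    congr 1
    linarith

theorem sep_of_no_overlap (t : ℝ) (ht : t ∈ Set.Ioo (0:ℝ) 1) (hno : ¬ HasExactOverlap t) :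
    ∀ n0, ∃ n ≥ n0, sep t n := by
  intro n0
  by_contra hcon
  push Not at hcon
  have key : ∀ n ≥ n0 + 2, ∃ d e : ℤ, (d:ℝ) + t * e ≠ 0 ∧ |(d:ℝ)| ≤ 4 ^ n ∧ |(e:ℝ)| ≤ 4 ^ n ∧ e ≠ 0 ∧
      |(d:ℝ) + t * e| < (1/4) ^ (3 * n) := by
    intro n hn
    have h1 := hcon n (by omega)
    unfold sep at h1
    push Not at h1
    obtain ⟨a, ha, b, hb, a', ha', b', hb', hne, h⟩ := h1
    have q1 := AF_bd n a ha
    have q2 := AF_bd n b hb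
    have q3 := AF_bd n a' ha'
    have q4 := AF_bd n b' hb'
    refine ⟨a - a', b - b', ?_, ?_, ?_, ?_, ?_⟩
    · intro h0
      push_cast at h0
      exact hno (overlap_of_AF t ht n a b a' b' ha hb ha' hb' hne h0)
    · have : |a - a'| ≤ 4 ^ n := by rw [abs_le]; constructor <;> linarith
      exact_mod_cast this
    · have : |b - b'| ≤ 4 ^ n := by rw [abs_le]; constructor <;> linarith
      exact_mod_cast this
    · intro h0
      have hb0 : b = b' := by omega
      subst hb0
      have h3 : |(a:ℝ) - a'| < 1 := by
        have : (1/4:ℝ) ^ (3 * n) ≤ 1 := pow_le_one₀ (by norm_num) (by norm_num)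
        simp only [sub_self, mul_zero, add_zero] at h
        linarith
      have h4 : |a - a'| < 1 := by exact_mod_cast h3
      rw [Int.abs_lt_one_iff] at h4
      apply hne
      rw [show a = a' by omega]
    · push_cast; exact h
  choose! d e h0 hd he hen hlt using key
  have hq : ∀ n ≥ n0 + 2, (d n : ℝ) / e n = (d (n+1) : ℝ) / e (n+1) := by
    intro n hn
    have hn' : n + 1 ≥ n0 + 2 := by omega
    have i1 := hlt n hn
    have i2 := hlt (n+1) hn'
    have i3 := he n hn
    have i4 := he (n+1) hn'
    have hz : d n * e (n+1) - d (n+1) * e n = 0 := by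
      rw [← Int.abs_lt_one_iff]
      have id : ((d n : ℝ)) * e (n+1) - d (n+1) * e n = (d n + t * e n) * e (n+1) - (d (n+1) + t * e (n+1)) * e n := by ring
      have : |((d n : ℝ)) * e (n+1) - d (n+1) * e n| < 1 := by
        rw [id]
        refine (abs_sub _ _).trans_lt ?_
        rw [abs_mul, abs_mul]
        have j1 : |(d n : ℝ) + t * e n| * |(e (n+1) : ℝ)| ≤ (1/4) ^ (3 * n) * 4 ^ (n+1) :=
          mul_le_mul i1.le i4 (abs_nonneg _) (by positivity)
        have j2 : |(d (n+1) : ℝ) + t * e (n+1)| * |(e n : ℝ)| ≤ (1/4) ^ (3 * (n+1)) * 4 ^ n :=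
          mul_le_mul i2.le i3 (abs_nonneg _) (by positivity)
        have hX : (1/4:ℝ) ^ (2 * n) ≤ (1/4) ^ 4 := pow_le_pow_of_le_one (by norm_num) (by norm_num) (by omega)
        have k0 : (1/4:ℝ) ^ n * 4 ^ n = 1 := by rw [← mul_pow]; norm_num
        have k1 : (1/4:ℝ) ^ (3 * n) * 4 ^ (n+1) = 4 * (1/4) ^ (2 * n) := by
          rw [show 3 * n = 2 * n + n by ring, pow_add, pow_succ (4:ℝ) n]
          linear_combination 4 * (1/4:ℝ) ^ (2 * n) * k0
        have k2 : (1/4:ℝ) ^ (3 * (n+1)) * 4 ^ n = 1/64 * (1/4) ^ (2 * n) := by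
          rw [show 3 * (n+1) = 2 * n + n + 3 by ring, pow_add, pow_add]
          linear_combination 1/64 * (1/4:ℝ) ^ (2 * n) * k0
        norm_num at hX
        norm_num at *
        linarith
      exact_mod_cast this
    have e1 : (e n : ℝ) ≠ 0 := by exact_mod_cast hen n hn
    have e2 : (e (n+1) : ℝ) ≠ 0 := by exact_mod_cast hen (n+1) hn'
    rw [div_eq_div_iff e1 e2]
    have : d n * e (n+1) = d (n+1) * e n := by omega
    exact_mod_cast this
  set x := (d (n0+2) : ℝ) / e (n0+2) with hx
  have hqa : ∀ j, (d (n0+2+j) : ℝ) / e (n0+2+j) = x := by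
    intro j
    induction j with
    | zero => rfl
    | succ j ih => rw [← ih]; exact (hq (n0+2+j) (by omega)).symm
  have hbd : ∀ j, |x + t| ≤ (1/4:ℝ) ^ j := by
    intro j
    have hn : n0 + 2 + j ≥ n0 + 2 := by omega
    have e1 : (e (n0+2+j) : ℝ) ≠ 0 := by exact_mod_cast hen _ hn
    have e2 : (1:ℝ) ≤ |(e (n0+2+j) : ℝ)| := by
      have := Int.one_le_abs (hen _ hn)
      exact_mod_cast this
    have i1 := hlt _ hn
    have : (d (n0+2+j) : ℝ) + t * e (n0+2+j) = (x + t) * e (n0+2+j) := by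
      rw [← hqa j]; field_simp
    rw [this, abs_mul] at i1
    calc |x + t| ≤ |x + t| * |(e (n0+2+j) : ℝ)| := le_mul_of_one_le_right (abs_nonneg _) e2
      _ ≤ _ := i1.le
      _ ≤ _ := pow_le_pow_of_le_one (by norm_num) (by norm_num) (by omega)
  have hxt : |x + t| ≤ 0 := ge_of_tendsto' (tendsto_pow_atTop_nhds_zero_of_lt_one (by norm_num) (by norm_num)) hbd
  have hxt' : x + t = 0 := abs_nonpos_iff.1 hxt
  apply h0 (n0+2) le_rfl
  have e1 : (e (n0+2) : ℝ) ≠ 0 := by exact_mod_cast hen _ le_rfl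
  have : (d (n0+2) : ℝ) + t * e (n0+2) = (x + t) * e (n0+2) := by
    rw [hx]; field_simp
  rw [this, hxt', zero_mul]

end FC

namespace FC
open AddMonoidAlgebra Real

theorem Om_bd (t : ℝ) (ht : t ∈ Set.Ioo (0:ℝ) 1) (x : ℝ) (hx : x ∈ Omega t) : 0 ≤ x ∧ x ≤ 6 := by
  have h1 := ht.1
  have h2 := ht.2
  simp only [Omega, Set.mem_insert_iff, Set.mem_singleton_iff] at hx
  rcases hx with rfl | rfl | rfl | rfl <;> constructor <;> linarith

theorem summ_dig (d : ℕ → ℝ) (C : ℝ) (hd : ∀ i, 0 ≤ d i ∧ d i ≤ C) : Summable (fun i => d i / 4 ^ (i+1)) := by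
  have h1 : Summable (fun i : ℕ => C * (1/4:ℝ) ^ i) :=
    (summable_geometric_of_lt_one (by norm_num) (by norm_num)).mul_left C
  refine Summable.of_nonneg_of_le (fun i => div_nonneg (hd i).1 (by positivity)) (fun i => ?_) h1
  rw [div_eq_mul_inv, one_div, inv_pow]
  have h0 : 0 ≤ C := (hd i).1.trans (hd i).2
  have : ((4:ℝ) ^ (i+1))⁻¹ ≤ (4 ^ i)⁻¹ := by
    apply inv_anti₀ (by positivity)
    exact pow_le_pow_right₀ (by norm_num) (by omega)
  exact mul_le_mul (hd i).2 this (by positivity) h0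

theorem regroup (n : ℕ) (hn : 0 < n) (d : ℕ → ℝ) (C : ℝ) (hd : ∀ i, 0 ≤ d i ∧ d i ≤ C) :
    HasSum (fun j : ℕ => ((1/4:ℝ) ^ n) ^ j * ∑ p : Fin n, d (n * j + p) / 4 ^ ((p:ℕ) + 1))
      (∑' i, d i / 4 ^ (i+1)) := by
  have : NeZero n := ⟨hn.ne'⟩
  have h := (summ_dig d C hd).hasSum
  rw [← (Nat.divModEquiv n).symm.hasSum_iff] at h
  refine h.prod_fiberwise fun j => ?_
  have h2 := hasSum_fintype (fun p : Fin n => ((fun i => d i / 4 ^ (i + 1)) ∘ (Nat.divModEquiv n).symm) (j, p))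
  convert h2 using 1
  rw [Finset.mul_sum]
  refine Finset.sum_congr rfl fun p _ => ?_
  simp only [Function.comp, Nat.divModEquiv_symm_apply]
  rw [mul_comm j n, add_assoc, pow_add 4 (n * j), pow_mul, one_div, inv_pow, inv_pow]
  field_simp

theorem part1 (t : ℝ) (ht : t ∈ Set.Ioo (0:ℝ) 1) (h : HasExactOverlap t) : dimH (cornerC t) < 1 := by
  classical
  obtain ⟨k, hk, u, v, hu, hv, huv, heq⟩ := h
  set O : Finset ℝ := {0, 3*t, 3, 3*t+3} with hO
  have hOm : ∀ x, x ∈ Omega t ↔ x ∈ O := by intro x; simp [Omega, hO]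
  have hOc : O.card ≤ 4 := Finset.card_le_four
  set Wd : Finset (Fin k → ℝ) := Fintype.piFinset (fun _ => O) with hWd
  have hWc : Wd.card ≤ 4 ^ k := by
    rw [hWd, Fintype.card_piFinset]
    simpa using Nat.pow_le_pow_left hOc k
  set val : (Fin k → ℝ) → ℝ := fun w => ∑ p, w p / 4 ^ ((p:ℕ)+1) with hval
  set Vs : Finset ℝ := Wd.image val with hVs
  have huW : u ∈ Wd := by rw [hWd, Fintype.mem_piFinset]; exact fun p => (hOm _).1 (hu p)
  have hvW : v ∈ Wd := by rw [hWd, Fintype.mem_piFinset]; exact fun p => (hOm _).1 (hv p)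
  have hlt : Vs.card < 4 ^ k := by
    refine lt_of_lt_of_le (lt_of_le_of_ne Finset.card_image_le ?_) hWc
    intro hc
    have := Finset.card_image_iff.1 hc
    exact huv (this huW hvW heq)
  have hMp : 0 < Vs.card := Finset.card_pos.2 ⟨_, Finset.mem_image_of_mem val huW⟩
  have hVb : ∀ y ∈ Vs, 0 ≤ y ∧ y ≤ 6 * k := by
    intro y hy
    obtain ⟨w, hw, rfl⟩ := Finset.mem_image.1 hy
    rw [hWd, Fintype.mem_piFinset] at hw
    have hb := fun p => Om_bd t ht (w p) ((hOm _).2 (hw p))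
    refine ⟨Finset.sum_nonneg fun p _ => div_nonneg (hb p).1 (by positivity), ?_⟩
    calc ∑ p, w p / 4 ^ ((p:ℕ)+1) ≤ ∑ p : Fin k, (6:ℝ) := by
          refine Finset.sum_le_sum fun p _ => ?_
          refine (div_le_self (hb p).1 (one_le_pow₀ (by norm_num))).trans (hb p).2
      _ = 6 * k := by simp; ring
  set r : ℝ := (1/4:ℝ) ^ k with hr
  have hr0 : 0 < r := by positivity
  have hr1 : r ≤ 1/2 := by
    calc r ≤ (1/4) ^ 1 := pow_le_pow_of_le_one (by norm_num) (by norm_num) hk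
      _ ≤ 1/2 := by norm_num
  set M := Vs.card with hM
  have hM1 : (1:ℝ) ≤ M := by exact_mod_cast hMp
  have hl : 0 < log 4 := log_pos (by norm_num)
  have hk0 : (0:ℝ) < k := by exact_mod_cast hk
  set dd : ℝ := log M / (k * log 4) with hdd
  have hdd0 : 0 ≤ dd := div_nonneg (log_nonneg hM1) (by positivity)
  have hdd1 : dd < 1 := by
    rw [hdd, div_lt_one (by positivity), ← log_pow]
    exact log_lt_log (by linarith) (by exact_mod_cast hlt)
  have hrM : r ^ dd = (M:ℝ)⁻¹ := by
    rw [rpow_def_of_pos hr0, hr, log_pow, one_div, log_inv, hdd]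
    rw [show (k:ℝ) * -log 4 * (log M / (k * log 4)) = - log M by field_simp]
    rw [exp_neg, exp_log (by linarith)]
  set c : ℝ := 12 * k with hc
  have hcov : ∀ j : ℕ, cornerC t ⊆ ⋃ y : Fin j → Vs, Metric.closedBall (∑ i : Fin j, r ^ (i:ℕ) * (y i : ℝ)) (c * r ^ j) := by
    rintro j x ⟨d, hd, rfl⟩
    have hs := regroup k hk d 6 (fun i => Om_bd t ht _ (hd i))
    set yy : ℕ → ℝ := fun j => ∑ p : Fin k, d (k * j + p) / 4 ^ ((p:ℕ) + 1) with hyy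
    have hyV : ∀ j, yy j ∈ Vs := by
      intro j
      refine Finset.mem_image.2 ⟨fun p => d (k * j + p), ?_, rfl⟩
      rw [hWd, Fintype.mem_piFinset]; exact fun p => (hOm _).1 (hd _)
    rw [Set.mem_iUnion]
    refine ⟨fun i => ⟨yy i, hyV i⟩, ?_⟩
    rw [Metric.mem_closedBall, Real.dist_eq]
    rw [Fin.sum_univ_eq_sum_range (fun i => r ^ i * yy i), ← hs.tsum_eq,
      ← hs.summable.sum_add_tsum_nat_add j, add_sub_cancel_left]
    have hg : HasSum (fun i : ℕ => (6 * k * r ^ j) * r ^ i) ((6 * k * r ^ j) * (1 - r)⁻¹) :=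
      (hasSum_geometric_of_lt_one hr0.le (by linarith)).mul_left _
    have h1 := tsum_of_norm_bounded hg (f := fun i => r ^ (i + j) * yy (i + j)) (by
      intro i
      have := hVb _ (hyV (i + j))
      rw [Real.norm_eq_abs, abs_of_nonneg (mul_nonneg (by positivity) this.1), pow_add]
      have h2 := mul_le_mul_of_nonneg_left this.2 (show 0 ≤ r ^ i * r ^ j by positivity)
      linarith)
    rw [Real.norm_eq_abs] at h1
    refine h1.trans ?_
    have h3 : (1 - r)⁻¹ ≤ 2 := by
      rw [inv_le_comm₀ (by linarith) (by norm_num)]; linarith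
    have h4 := mul_le_mul_of_nonneg_left h3 (show 0 ≤ 6 * k * r ^ j by positivity)
    rw [hc]; linarith
  have hdi : ∀ (j : ℕ) (y : Fin j → Vs), Metric.ediam (Metric.closedBall (∑ i : Fin j, r ^ (i:ℕ) * (y i : ℝ)) (c * r ^ j)) ≤ ENNReal.ofReal (2 * c * r ^ j) := by
    intro j y
    rw [Real.closedBall_eq_Icc, Real.ediam_Icc]
    apply ENNReal.ofReal_le_ofReal
    linarith
  have hmeas : MeasureTheory.Measure.hausdorffMeasure dd (cornerC t) ≤ ENNReal.ofReal ((2 * c) ^ dd) := by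
    refine (MeasureTheory.Measure.hausdorffMeasure_le_liminf_sum dd (cornerC t) (l := atTop)
      (fun j : ℕ => ENNReal.ofReal (2 * c * r ^ j)) ?_
      (fun j (y : Fin j → Vs) => Metric.closedBall (∑ i : Fin j, r ^ (i:ℕ) * (y i : ℝ)) (c * r ^ j))
      (Eventually.of_forall hdi) (Eventually.of_forall hcov)).trans ?_
    · rw [← ENNReal.ofReal_zero]
      refine ENNReal.tendsto_ofReal ?_
      have := (tendsto_pow_atTop_nhds_zero_of_lt_one hr0.le (by linarith : r < 1)).const_mul (2 * c)
      simpa using this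
    · refine liminf_le_of_le (by isBoundedDefault) ?_
      intro b hb
      obtain ⟨j, hj⟩ := hb.exists
      refine hj.trans ?_
      calc _ ≤ ∑ y : Fin j → Vs, ENNReal.ofReal (2 * c * r ^ j) ^ dd :=
            Finset.sum_le_sum fun y _ => ENNReal.rpow_le_rpow (hdi j y) hdd0
        _ = _ := by
          rw [Finset.sum_const, Finset.card_univ, Fintype.card_fun, Fintype.card_coe, Fintype.card_fin, nsmul_eq_mul,
            ENNReal.ofReal_rpow_of_nonneg (by positivity) hdd0]
          rw [← ENNReal.ofReal_natCast, ← ENNReal.ofReal_mul (by positivity)]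
          congr 1
          rw [mul_rpow (by positivity) (by positivity), ← rpow_natCast r j, ← rpow_mul hr0.le, mul_comm (j:ℝ) dd, rpow_mul hr0.le, hrM, rpow_natCast, ← hM]
          push_cast
          rw [inv_pow]
          have : (M:ℝ) ^ j ≠ 0 := by positivity
          field_simp
  have hfin : dimH (cornerC t) ≤ ((dd.toNNReal : NNReal) : ENNReal) := by
    apply dimH_le_of_hausdorffMeasure_ne_top
    rw [coe_toNNReal dd hdd0]
    exact (hmeas.trans_lt ENNReal.ofReal_lt_top).ne
  refine hfin.trans_lt ?_
  have : dd.toNNReal < 1 := by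
    rw [← NNReal.coe_lt_coe, coe_toNNReal dd hdd0]; exact hdd1
  exact_mod_cast this

end FC

namespace FC
open AddMonoidAlgebra Real

theorem holder_dim (M n : ℕ) (hM : 1 < M) (hn : 0 < n) (Φ : (ℕ → Fin M) → ℝ)
    (hsep : ∀ x x' k, (∀ i < k, x i = x' i) → x k ≠ x' k → ((1/4:ℝ) ^ n) ^ (k+1) ≤ |Φ x - Φ x'|) :
    ENNReal.ofReal (log M / (n * log 4)) ≤ dimH (Set.range Φ) := by
  have hl : 0 < log 4 := log_pos (by norm_num)
  have hn0 : (0:ℝ) < n := by exact_mod_cast hn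
  have hM1 : (1:ℝ) < M := by exact_mod_cast hM
  set σ : ℝ := log M / (n * log 4) with hσ
  have hσ0 : 0 < σ := div_pos (log_pos hM1) (by positivity)
  set r : ℝ := (1/4:ℝ) ^ n with hr
  have hr0 : 0 < r := by positivity
  have hrM : r ^ σ = (M:ℝ)⁻¹ := by
    rw [rpow_def_of_pos hr0, hr, log_pow, one_div, log_inv, hσ]
    rw [show (n:ℝ) * -log 4 * (log M / (n * log 4)) = - log M by field_simp]
    rw [exp_neg, exp_log (by linarith)]
  have hne : Nonempty (ℕ → Fin M) := ⟨fun _ => ⟨0, by omega⟩⟩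
  have hfirst : ∀ x x' : ℕ → Fin M, x ≠ x' → ∃ k, (∀ i < k, x i = x' i) ∧ x k ≠ x' k := by
    intro x x' hxx
    have hex : ∃ k, x k ≠ x' k := by
      by_contra hcon
      push Not at hcon
      exact hxx (funext hcon)
    classical
    refine ⟨Nat.find hex, fun i hi => ?_, Nat.find_spec hex⟩
    by_contra h
    exact Nat.find_min hex hi h
  have hinj : Function.Injective Φ := by
    intro x x' h
    by_contra hxx
    obtain ⟨k, h1, h2⟩ := hfirst x x' hxx
    have := hsep x x' k h1 h2
    rw [h, sub_self, abs_zero] at this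
    have : 0 < r ^ (k+1) := by positivity
    linarith
  set f : ℝ → ℝ := fun z => ofDigits (Function.invFun Φ z) with hf
  have hfΦ : ∀ x, f (Φ x) = ofDigits x := by
    intro x; simp only [hf]; rw [Function.leftInverse_invFun hinj]
  have hH : HolderOnWith (M : NNReal) σ.toNNReal f (Set.range Φ) := by
    rintro _ ⟨x, rfl⟩ _ ⟨x', rfl⟩
    rw [hfΦ, hfΦ, edist_dist, edist_dist, coe_toNNReal _ hσ0.le,
      ENNReal.ofReal_rpow_of_nonneg dist_nonneg hσ0.le]
    rw [show ((M : NNReal) : ENNReal) = ENNReal.ofReal (M:ℝ) by simp,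
      ← ENNReal.ofReal_mul (by positivity)]
    apply ENNReal.ofReal_le_ofReal
    rw [Real.dist_eq, Real.dist_eq]
    by_cases hxx : x = x'
    · rw [hxx]; simp only [sub_self, abs_zero]; positivity
    obtain ⟨k, h1, h2⟩ := hfirst x x' hxx
    have h3 := hsep x x' k h1 h2
    have h4 : |ofDigits x - ofDigits x'| ≤ ((M:ℝ) ^ k)⁻¹ := abs_ofDigits_sub_ofDigits_le h1
    have h5 := rpow_le_rpow (by positivity) h3 hσ0.le
    rw [← rpow_natCast r (k+1), ← rpow_mul hr0.le, mul_comm _ σ, rpow_mul hr0.le, hrM, rpow_natCast] at h5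
    have h6 := mul_le_mul_of_nonneg_left h5 (show (0:ℝ) ≤ M by linarith)
    refine h4.trans (le_trans (le_of_eq ?_) h6)
    rw [inv_pow, pow_succ]
    field_simp
  have hd := hH.dimH_image_le (by simpa using hσ0)
  have himg : Set.Icc (0:ℝ) 1 ⊆ f '' Set.range Φ := by
    intro z hz
    obtain ⟨x, _, hx⟩ := ofDigits_SurjOn hM hz
    exact ⟨Φ x, ⟨x, rfl⟩, by rw [hfΦ, hx]⟩
  have h1 : dimH (Set.Icc (0:ℝ) 1) = 1 := by
    rw [Real.dimH_of_nonempty_interior (by rw [interior_Icc]; exact ⟨1/2, by norm_num, by norm_num⟩)]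
    simp
  have h2 := (dimH_mono himg).trans hd
  rw [h1] at h2
  rw [ENNReal.le_div_iff_mul_le (Or.inl (by simpa using hσ0)) (Or.inl ENNReal.coe_ne_top), one_mul] at h2
  exact h2

end FC

namespace FC
open AddMonoidAlgebra Real

theorem blocks_mem (t : ℝ) (ht : t ∈ Set.Ioo (0:ℝ) 1) (n : ℕ) (hn : 0 < n) (a b : ℕ → ℤ)
    (ha : ∀ j, a j ∈ AF n) (hb : ∀ j, b j ∈ AF n) :
    ∃ z ∈ cornerC t, HasSum (fun j : ℕ => ((1/4:ℝ) ^ n) ^ j * (3 / 4 ^ n * ((a j : ℝ) + t * b j))) z := by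
  choose ε e1 e2 using fun j => AF_dig n (a j) (ha j)
  choose η f1 f2 using fun j => AF_dig n (b j) (hb j)
  set d : ℕ → ℝ := fun i => 3 * (ε (i / n) (n - 1 - i % n) : ℝ) + 3 * t * η (i / n) (n - 1 - i % n) with hd
  have hdO : ∀ i, d i ∈ Omega t := fun i => dig_mem t _ _ (e1 _ _) (f1 _ _)
  refine ⟨∑' i, d i / 4 ^ (i+1), ⟨d, hdO, rfl⟩, ?_⟩
  have h := regroup n hn d 6 (fun i => Om_bd t ht _ (hdO i))
  convert h using 3 with j
  have h2 := word_val t n (ε j) (η j)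
  rw [← e2 j, ← f2 j] at h2
  rw [← h2, ← Fin.sum_univ_eq_sum_range (fun p => (3 * (ε j (n - 1 - p) : ℝ) + 3 * t * η j (n - 1 - p)) / 4 ^ (p + 1))]
  refine Finset.sum_congr rfl fun p _ => ?_
  have g1 : (n * j + p) / n = j := by
    rw [Nat.mul_add_div hn, Nat.div_eq_of_lt p.2, add_zero]
  have g2 : (n * j + p) % n = p := by
    rw [Nat.mul_add_mod, Nat.mod_eq_of_lt p.2]
  simp only [hd, g1, g2]

theorem fl_bound (t : ℝ) (ht : t ∈ Set.Ioo (0:ℝ) 1) (s : ℝ) (hs0 : 0 ≤ s)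
    (hdim : dimH (cornerC t) < ENNReal.ofReal s) (n : ℕ) :
    log (FL t n).card ≤ log 4 + s * n * log 4 := by
  classical
  by_contra hcon
  rw [not_le] at hcon
  have hl : 0 < log 4 := log_pos (by norm_num)
  have hN0 : (0:ℝ) < (FL t n).card := by exact_mod_cast FL_pos t n
  have hn : 0 < n := by
    rcases Nat.eq_zero_or_pos n with rfl | h
    · have h1 : (FL t 0).card ≤ 1 := by
        refine Finset.card_image_le.trans ?_
        rw [Finset.card_product, AF_card]; norm_num
      have h2 : ((FL t 0).card : ℝ) ≤ 1 := by exact_mod_cast h1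
      have h3 := log_nonpos hN0.le h2
      simp at hcon
      linarith
    · exact h
  obtain ⟨c, hc, hG⟩ := Finset.exists_le_card_fiber_of_nsmul_le_card_of_maps_to
    (s := FL t n) (t := Finset.Ico (0:ℤ) 4) (f := fun x => x % 4) (b := ((FL t n).card : ℝ) / 4)
    (by
      intro x _
      rw [Finset.mem_Ico]
      exact ⟨Int.emod_nonneg _ (by norm_num), Int.emod_lt_of_pos _ (by norm_num)⟩)
    ⟨0, by simp⟩ (by simp; linarith)
  set G := (FL t n).filter (fun x => x % 4 = c) with hGdef
  set M := G.card with hM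
  have hlM : s * n * log 4 < log M := by
    have h1 := log_le_log (by positivity) hG
    rw [log_div hN0.ne' (by norm_num)] at h1
    linarith
  have hM1 : 1 < M := by
    by_contra h
    have h1 : (M:ℝ) ≤ 1 := by exact_mod_cast not_lt.1 h
    have h2 := log_nonpos (by positivity) h1
    have : 0 ≤ s * n * log 4 := by positivity
    linarith
  let e : Fin M ≃ G := G.equivFin.symm
  have hex : ∀ i : Fin M, ∃ a b : ℤ, a ∈ AF n ∧ b ∈ AF n ∧ ⌊(a:ℝ) + t * b⌋ = (e i : ℤ) := by
    intro i
    have h1 := (Finset.mem_filter.1 (e i).2).1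
    obtain ⟨⟨a, b⟩, hab, h⟩ := Finset.mem_image.1 h1
    have := Finset.mem_product.1 hab
    exact ⟨a, b, this.1, this.2, h⟩
  choose a b ha hb hab using hex
  set y : Fin M → ℝ := fun i => (a i : ℝ) + t * b i with hy
  have hys : ∀ i j, i ≠ j → 3 ≤ |y i - y j| := by
    intro i j hij
    have h1 : (e i : ℤ) ≠ e j := fun h => hij (e.injective (Subtype.ext h))
    have h2 := (Finset.mem_filter.1 (e i).2).2
    have h3 := (Finset.mem_filter.1 (e j).2).2
    have f1 := Int.floor_le (y i)
    have f2 := Int.lt_floor_add_one (y i)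
    have f3 := Int.floor_le (y j)
    have f4 := Int.lt_floor_add_one (y j)
    have g1 : ⌊y i⌋ = (e i : ℤ) := hab i
    have g2 : ⌊y j⌋ = (e j : ℤ) := hab j
    rw [g1] at f1 f2
    rw [g2] at f3 f4
    generalize (e i : ℤ) = p at *
    generalize (e j : ℤ) = q at *
    rw [le_abs]
    have : p + 4 ≤ q ∨ q + 4 ≤ p := by omega
    rcases this with h | h
    · right
      have : (p:ℝ) + 4 ≤ q := by exact_mod_cast h
      linarith
    · left
      have : (q:ℝ) + 4 ≤ p := by exact_mod_cast h
      linarith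
  set r : ℝ := (1/4:ℝ) ^ n with hr
  have hr0 : 0 < r := by positivity
  have hr1 : r ≤ 1/2 := by
    calc r ≤ (1/4) ^ 1 := pow_le_pow_of_le_one (by norm_num) (by norm_num) hn
      _ ≤ 1/2 := by norm_num
  have h34 : (3:ℝ) / 4 ^ n = 3 * r := by rw [hr, one_div, inv_pow]; rfl
  have hyb : ∀ i, 0 ≤ 3 * r * y i ∧ 3 * r * y i ≤ 2 := by
    intro i
    have q1 := AF_bd n (a i) (ha i)
    have q2 := AF_bd n (b i) (hb i)
    have q3 : (0:ℝ) ≤ a i := by exact_mod_cast q1.1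
    have q4 : (0:ℝ) ≤ b i := by exact_mod_cast q2.1
    have q5 : 3 * (a i : ℝ) ≤ 4 ^ n := by exact_mod_cast q1.2.le
    have q6 : 3 * (b i : ℝ) ≤ 4 ^ n := by exact_mod_cast q2.2.le
    have k0 : r * 4 ^ n = 1 := by rw [hr, ← mul_pow]; norm_num
    have q7 : t * b i ≤ b i := by nlinarith [ht.2]
    have q8 : 0 ≤ t * b i := mul_nonneg ht.1.le q4
    have q9 : 3 * y i ≤ 2 * 4 ^ n := by simp only [hy]; linarith
    have q10 : 0 ≤ y i := by simp only [hy]; linarith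
    refine ⟨by positivity, ?_⟩
    have := mul_le_mul_of_nonneg_left q9 hr0.le
    linarith
  choose Φ hΦC hΦs using fun x : ℕ → Fin M => blocks_mem t ht n hn (fun j => a (x j)) (fun j => b (x j))
    (fun j => ha _) (fun j => hb _)
  have hsep : ∀ x x' k, (∀ i < k, x i = x' i) → x k ≠ x' k → r ^ (k+1) ≤ |Φ x - Φ x'| := by
    intro x x' k h1 h2
    have hs := (hΦs x).sub (hΦs x')
    rw [h34] at hs
    change HasSum (fun j => r ^ j * (3 * r * y (x j)) - r ^ j * (3 * r * y (x' j))) _ at hs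
    rw [← hs.tsum_eq, ← hs.summable.sum_add_tsum_nat_add (k+1), Finset.sum_range_succ,
      Finset.sum_eq_zero (fun i hi => by rw [h1 i (Finset.mem_range.1 hi), sub_self]), zero_add]
    have hg : HasSum (fun i : ℕ => (2 * r ^ (k+1)) * r ^ i) ((2 * r ^ (k+1)) * (1 - r)⁻¹) :=
      (hasSum_geometric_of_lt_one hr0.le (by linarith)).mul_left _
    have h3 := tsum_of_norm_bounded hg (f := fun i => r ^ (i + (k+1)) * (3 * r * y (x (i + (k+1)))) - r ^ (i + (k+1)) * (3 * r * y (x' (i + (k+1))))) (by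
      intro i
      have b1 := hyb (x (i + (k+1)))
      have b2 := hyb (x' (i + (k+1)))
      rw [Real.norm_eq_abs, ← mul_sub, abs_mul, abs_of_pos (by positivity), pow_add]
      have h4 : |3 * r * y (x (i + (k+1))) - 3 * r * y (x' (i + (k+1)))| ≤ 2 := by
        rw [abs_le]; constructor <;> linarith
      have h5 := mul_le_mul_of_nonneg_left h4 (show 0 ≤ r ^ i * r ^ (k+1) by positivity)
      linarith)
    rw [Real.norm_eq_abs] at h3
    have h6 : (1 - r)⁻¹ ≤ 2 := by
      rw [inv_le_comm₀ (by linarith) (by norm_num)]; linarith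
    have h7 := mul_le_mul_of_nonneg_left h6 (show 0 ≤ 2 * r ^ (k+1) by positivity)
    have h8 : 9 * r ^ (k+1) ≤ |r ^ k * (3 * r * y (x k)) - r ^ k * (3 * r * y (x' k))| := by
      have : r ^ k * (3 * r * y (x k)) - r ^ k * (3 * r * y (x' k)) = (3 * r ^ (k+1)) * (y (x k) - y (x' k)) := by
        rw [pow_succ]; ring
      rw [this, abs_mul, abs_of_pos (by positivity)]
      have := mul_le_mul_of_nonneg_left (hys _ _ h2) (show 0 ≤ 3 * r ^ (k+1) by positivity)
      linarith
    have h9 := abs_sub_abs_le_abs_add (r ^ k * (3 * r * y (x k)) - r ^ k * (3 * r * y (x' k)))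
      (∑' i, (r ^ (i + (k+1)) * (3 * r * y (x (i + (k+1)))) - r ^ (i + (k+1)) * (3 * r * y (x' (i + (k+1))))))
    have h10 : 0 < r ^ (k+1) := by positivity
    linarith
  have hd := holder_dim M n hM1 hn Φ hsep
  have hsub : Set.range Φ ⊆ cornerC t := by rintro _ ⟨x, rfl⟩; exact hΦC x
  have h1 := (hd.trans (dimH_mono hsub)).trans_lt hdim
  have hn0 : (0:ℝ) < n := by exact_mod_cast hn
  have h2 : s ≤ log M / (n * log 4) := by
    rw [le_div_iff₀ (by positivity)]; linarith
  exact absurd (ENNReal.ofReal_le_ofReal h2) (not_le.2 h1)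

end FC

theorem dimH_lt_one_iff_overlap (t : ℝ) (ht : t ∈ Set.Ioo (0:ℝ) 1) :
    dimH (cornerC t) < 1 ↔ HasExactOverlap t := by
  refine ⟨fun h => ?_, FC.part1 t ht⟩
  by_contra hno
  obtain ⟨s, hs1, hs2⟩ := ENNReal.lt_iff_exists_nnreal_btwn.1 h
  have hs3 : (s:ℝ) < 1 := by exact_mod_cast hs2
  refine FC.core t ht s (Real.log 4) s.2 hs3 (FC.fl_bound t ht s s.2 ?_) (FC.sep_of_no_overlap t ht hno)
  rwa [ENNReal.ofReal_coe_nnreal]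
end

section
/- Let t = p/q ∈ (0,1) with p, q coprime positive integers, p < q. Then C_t has no exact overlaps if and only if there exists a positive integer ℓ such that the polynomial 1 + X^{2^{2ℓ-1}} divides the polynomial 1 + X^{3p} + X^{3q} + X^{3p+3q} in ℤ[X]. -/
open Filter Topology Polynomial

/-- Horner evaluation in base 4. -/
def horner4 (e : ℕ → ℤ) : ℕ → ℤ
  | 0 => 0
  | k + 1 => 4 * horner4 e k + e k

lemma horner4_cast (e : ℕ → ℤ) (k : ℕ) :
    ∑ n ∈ Finset.range k, (e n : ℝ) / 4 ^ (n + 1) = (horner4 e k : ℝ) / 4 ^ k := by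
  induction k with
  | zero => simp [horner4]
  | succ k ih =>
    rw [Finset.sum_range_succ, ih, horner4]
    push_cast
    field_simp
    ring

lemma horner4_val (e : ℕ → ℤ) (he : ∀ n, e n = 0 ∨ e n = 1 ∨ e n = -1) (k : ℕ) :
    (∀ i < k, e i = 0) ∨ ∃ (j : ℕ) (m : ℤ), Odd m ∧ horner4 e k = 4 ^ j * m := by
  induction k with
  | zero => left; simp
  | succ k ih =>
    by_cases h : e k = 0
    · rcases ih with ih | ⟨j, m, hm, hj⟩
      · left
        intro i hi
        rcases Nat.lt_succ_iff_lt_or_eq.mp hi with hi | rfl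
        · exact ih i hi
        · exact h
      · right
        refine ⟨j + 1, m, hm, ?_⟩
        rw [horner4, hj, h]; ring
    · right
      refine ⟨0, horner4 e (k + 1), ?_, by simp⟩
      rw [horner4]
      rcases he k with h' | h' | h'
      · exact absurd h' h
      · exact ⟨2 * horner4 e k, by rw [h']; ring⟩
      · exact ⟨2 * horner4 e k - 1, by rw [h']; ring⟩

lemma horner4_zero (e : ℕ → ℤ) (he : ∀ n, e n = 0 ∨ e n = 1 ∨ e n = -1) (k : ℕ)
    (h : horner4 e k = 0) : ∀ i < k, e i = 0 := by
  rcases horner4_val e he k with h' | ⟨j, m, hm, hj⟩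
  · exact h'
  · exfalso
    rw [h] at hj
    have : m = 0 := by
      rcases mul_eq_zero.mp hj.symm with h | h
      · exact absurd h (by positivity)
      · exact h
    subst this
    simp at hm

/-- parity of 2-adic valuation -/
lemma val_aux (a b : ℕ) (j j' : ℕ) (m m' : ℤ) (l : ℕ) (hl : 0 < l) (u : ℕ) (hu : Odd u)
    (hm : Odd m) (hm' : Odd m') (ha : a = 2 ^ (2 * l - 1) * u) (hb : Odd b)
    (h : (a : ℤ) * (4 ^ j * m) + b * (4 ^ j' * m') = 0) : False := by
  have e1 : (a : ℤ) * (4 ^ j * m) = 2 ^ (2 * l - 1 + 2 * j) * (u * m) := by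
    rw [ha]; push_cast; rw [pow_add, pow_mul 2 2 j]; norm_num; ring
  have e2 : (b : ℤ) * (4 ^ j' * m') = 2 ^ (2 * j') * (b * m') := by
    rw [pow_mul 2 2 j']; norm_num; ring
  have o1 : Odd ((u : ℤ) * m) := ((Int.odd_coe_nat u).mpr hu).mul hm
  have o2 : Odd ((b : ℤ) * m') := ((Int.odd_coe_nat b).mpr hb).mul hm'
  rw [e1, e2] at h
  generalize (u : ℤ) * m = x at *
  generalize (b : ℤ) * m' = y at *
  rcases lt_trichotomy (2 * l - 1 + 2 * j) (2 * j') with hlt | heq | hlt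
  · obtain ⟨d, hd⟩ := Nat.exists_eq_add_of_lt hlt
    rw [hd] at h
    have : (2 : ℤ) ^ (2 * l - 1 + 2 * j) * (x + 2 * (2 ^ d * y)) = 0 := by
      rw [← h]; ring
    rcases mul_eq_zero.mp this with h0 | h0
    · exact absurd h0 (by positivity)
    · obtain ⟨z, hz⟩ := o1
      omega
  · omega
  · obtain ⟨d, hd⟩ := Nat.exists_eq_add_of_lt hlt
    rw [hd] at h
    have : (2 : ℤ) ^ (2 * j') * (y + 2 * (2 ^ d * x)) = 0 := by
      rw [← h]; ring
    rcases mul_eq_zero.mp this with h0 | h0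
    · exact absurd h0 (by positivity)
    · obtain ⟨z, hz⟩ := o2
      omega

lemma omega_digits (p q : ℕ) (hq : 0 < q) (x : ℝ) (hx : x ∈ Omega ((p : ℝ) / q)) :
    ∃ a b : ℤ, (a = 0 ∨ a = 1) ∧ (b = 0 ∨ b = 1) ∧ x * q = 3 * (p * a + q * b) := by
  have hq' : (q : ℝ) ≠ 0 := by positivity
  simp only [Omega, Set.mem_insert_iff, Set.mem_singleton_iff] at hx
  rcases hx with rfl | rfl | rfl | rfl
  · exact ⟨0, 0, by simp, by simp, by simp⟩
  · exact ⟨1, 0, by simp, by simp, by field_simp; simp⟩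
  · exact ⟨0, 1, by simp, by simp, by simp⟩
  · exact ⟨1, 1, by simp, by simp, by field_simp; simp⟩

lemma overlap_digits (p q : ℕ) (hq : 0 < q) (h : HasExactOverlap ((p : ℝ) / q)) :
    ∃ (k : ℕ) (e f : ℕ → ℤ), (∀ n, e n = 0 ∨ e n = 1 ∨ e n = -1) ∧
      (∀ n, f n = 0 ∨ f n = 1 ∨ f n = -1) ∧ (∃ i < k, e i ≠ 0 ∨ f i ≠ 0) ∧
      (p : ℤ) * horner4 e k + q * horner4 f k = 0 := by
  obtain ⟨k, hk, c, d, hc, hd, hne, hs⟩ := h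
  have hq' : (q : ℝ) ≠ 0 := by positivity
  choose a b ha hb hab using fun n => omega_digits p q hq (c n) (hc n)
  choose a' b' ha' hb' hab' using fun n => omega_digits p q hq (d n) (hd n)
  let e : ℕ → ℤ := fun n => if hn : n < k then a ⟨n, hn⟩ - a' ⟨n, hn⟩ else 0
  let f : ℕ → ℤ := fun n => if hn : n < k then b ⟨n, hn⟩ - b' ⟨n, hn⟩ else 0
  have hcd : ∀ n : Fin k, (c n - d n) * q = 3 * (p * (e n : ℝ) + q * (f n : ℝ)) := by
    intro n
    simp only [e, f, n.2, dif_pos]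
    push_cast
    rw [sub_mul, hab, hab']; ring
  refine ⟨k, e, f, ?_, ?_, ?_, ?_⟩
  · intro n
    by_cases hn : n < k
    · simp only [e, hn, dif_pos]
      rcases ha ⟨n, hn⟩ with h | h <;> rcases ha' ⟨n, hn⟩ with h' | h' <;> rw [h, h'] <;> simp
    · simp [e, hn]
  · intro n
    by_cases hn : n < k
    · simp only [f, hn, dif_pos]
      rcases hb ⟨n, hn⟩ with h | h <;> rcases hb' ⟨n, hn⟩ with h' | h' <;> rw [h, h'] <;> simp
    · simp [f, hn]
  · by_contra hcon
    push Not at hcon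
    apply hne
    funext n
    have h1 := hcd n
    rw [(hcon n n.2).1, (hcon n n.2).2] at h1
    simp [hq'] at h1
    linarith
  · have h0 : ∑ n : Fin k, (p * ((e n : ℝ) / 4 ^ ((n : ℕ) + 1)) + q * ((f n : ℝ) / 4 ^ ((n : ℕ) + 1))) = 0 := by
      have : ∀ n : Fin k, (p * ((e n : ℝ) / 4 ^ ((n : ℕ) + 1)) + q * ((f n : ℝ) / 4 ^ ((n : ℕ) + 1)))
          = (q / 3) * (c n / 4 ^ ((n : ℕ) + 1) - d n / 4 ^ ((n : ℕ) + 1)) := by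
        intro n
        have := hcd n
        field_simp
        linarith
      simp_rw [this]
      rw [← Finset.mul_sum, Finset.sum_sub_distrib, hs]; simp
    rw [Finset.sum_add_distrib, ← Finset.mul_sum, ← Finset.mul_sum,
      Fin.sum_univ_eq_sum_range (fun n => (e n : ℝ) / 4 ^ (n + 1)),
      Fin.sum_univ_eq_sum_range (fun n => (f n : ℝ) / 4 ^ (n + 1)), horner4_cast, horner4_cast] at h0
    field_simp at h0
    exact_mod_cast h0

lemma no_overlap_of_val (p q : ℕ) (hp : 0 < p) (hq : 0 < q) (hco : Nat.Coprime p q) (l u : ℕ)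
    (hl : 0 < l) (hu : Odd u)
    (h : p = 2 ^ (2 * l - 1) * u ∨ q = 2 ^ (2 * l - 1) * u) :
    ¬ HasExactOverlap ((p : ℝ) / q) := by
  intro ho
  obtain ⟨k, e, f, he, hf, ⟨i, hi, hne⟩, h0⟩ := overlap_digits p q hq ho
  have hp' : (p : ℤ) ≠ 0 := by positivity
  have hq' : (q : ℤ) ≠ 0 := by positivity
  rcases horner4_val e he k with h1 | ⟨j, m, hm, hj⟩
  · rcases horner4_val f hf k with h2 | ⟨j', m', hm', hj'⟩
    · rcases hne with h | h
      · exact h (h1 i hi)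
      · exact h (h2 i hi)
    · have : horner4 e k = 0 := by
        clear * - h1
        induction k with
        | zero => rfl
        | succ k ih => rw [horner4, ih (fun i hi => h1 i (by omega)), h1 k (by omega)]; simp
      rw [this] at h0
      have h3 : horner4 f k = 0 := by simpa [hq.ne'] using h0
      rw [h3] at hj'
      have : m' = 0 := by simpa using hj'.symm
      subst this
      simp at hm'
  · rcases horner4_val f hf k with h2 | ⟨j', m', hm', hj'⟩
    · have : horner4 f k = 0 := by
        clear * - h2
        induction k with
        | zero => rfl
        | succ k ih => rw [horner4, ih (fun i hi => h2 i (by omega)), h2 k (by omega)]; simp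
      rw [this] at h0
      have h3 : horner4 e k = 0 := by simpa [hp.ne'] using h0
      rw [h3] at hj
      have : m = 0 := by simpa using hj.symm
      subst this
      simp at hm
    · rw [hj, hj'] at h0
      have h2 : 2 ∣ 2 ^ (2 * l - 1) * u := Dvd.dvd.mul_right (dvd_pow_self 2 (by omega)) u
      rcases h with h | h
      · have : Odd q := by
          rw [← Nat.not_even_iff_odd, even_iff_two_dvd]
          intro h3
          exact absurd (Nat.eq_one_of_dvd_coprimes hco (h ▸ h2) h3) (by norm_num)
        exact val_aux p q j j' m m' l hl u hu hm hm' h this h0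
      · have : Odd p := by
          rw [← Nat.not_even_iff_odd, even_iff_two_dvd]
          intro h3
          exact absurd (Nat.eq_one_of_dvd_coprimes hco h3 (h ▸ h2)) (by norm_num)
        exact val_aux q p j' j m' m l hl u hu hm' hm h this (by rw [add_comm]; exact h0)

lemma val_of_root (p l : ℕ)
    (h : Complex.exp (Real.pi * Complex.I / 2 ^ (2 * l - 1)) ^ (3 * p) = -1) :
    ∃ u, Odd u ∧ p = 2 ^ (2 * l - 1) * u := by
  rw [← Complex.exp_nat_mul, ← Complex.exp_pi_mul_I, Complex.exp_eq_exp_iff_exists_int] at h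
  obtain ⟨n, hn⟩ := h
  have hpi : (Real.pi : ℂ) * Complex.I ≠ 0 := by simp [Real.pi_ne_zero]
  have h1 : (3 * p : ℂ) = 2 ^ (2 * l - 1) * (1 + 2 * n) := by
    have h2 : ((Real.pi : ℂ) * Complex.I) * (3 * p) = (Real.pi * Complex.I) * (2 ^ (2 * l - 1) * (1 + 2 * n)) := by
      field_simp at hn
      push_cast at hn
      linear_combination (Real.pi * Complex.I) * hn
    exact mul_left_cancel₀ hpi h2
  have h3 : (3 * p : ℤ) = 2 ^ (2 * l - 1) * (1 + 2 * n) := by exact_mod_cast h1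
  have h4 : (2 : ℤ) ^ (2 * l - 1) ∣ p := by
    have : IsCoprime ((2 : ℤ) ^ (2 * l - 1)) 3 := IsCoprime.pow_left (by norm_num)
    exact this.dvd_of_dvd_mul_left ⟨_, h3⟩
  obtain ⟨u, hu⟩ : 2 ^ (2 * l - 1) ∣ p := by exact_mod_cast h4
  refine ⟨u, ?_, hu⟩
  rw [hu] at h3
  push_cast at h3
  have h5 : (3 * u : ℤ) = 1 + 2 * n := by
    have : (2 : ℤ) ^ (2 * l - 1) ≠ 0 := by positivity
    apply mul_left_cancel₀ this
    linarith
  rw [← Nat.not_even_iff_odd]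
  rintro ⟨w, hw⟩
  omega

lemma val_of_dvd (p q l : ℕ)
    (h : (1 + X ^ (2 ^ (2 * l - 1)) : Polynomial ℤ) ∣
          (1 + X ^ (3 * p) + X ^ (3 * q) + X ^ (3 * p + 3 * q))) :
    ∃ u, Odd u ∧ (p = 2 ^ (2 * l - 1) * u ∨ q = 2 ^ (2 * l - 1) * u) := by
  obtain ⟨r, hr⟩ := h
  have h1 := congrArg (Polynomial.aeval (Complex.exp (Real.pi * Complex.I / 2 ^ (2 * l - 1)))) hr
  simp only [map_add, map_mul, map_one, map_pow, aeval_X] at h1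
  have h2 : Complex.exp (Real.pi * Complex.I / 2 ^ (2 * l - 1)) ^ (2 ^ (2 * l - 1)) = -1 := by
    rw [← Complex.exp_nat_mul, ← Complex.exp_pi_mul_I]
    congr 1
    push_cast
    field_simp
  rw [h2] at h1
  have h3 : (1 + Complex.exp (Real.pi * Complex.I / 2 ^ (2 * l - 1)) ^ (3 * p)) *
    (1 + Complex.exp (Real.pi * Complex.I / 2 ^ (2 * l - 1)) ^ (3 * q)) = 0 := by
    rw [pow_add] at h1
    linear_combination h1
  rcases mul_eq_zero.mp h3 with h | h
  · obtain ⟨u, hu, h⟩ := val_of_root p l (by linear_combination h)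
    exact ⟨u, hu, Or.inl h⟩
  · obtain ⟨u, hu, h⟩ := val_of_root q l (by linear_combination h)
    exact ⟨u, hu, Or.inr h⟩

/-- The root of unity `exp (2πi p / 4^n)`. -/
noncomputable def wexp (p n : ℕ) : ℂ := Complex.exp (2 * Real.pi * Complex.I * p / 4 ^ n)

lemma norm_wexp (p n : ℕ) : ‖wexp p n‖ = 1 := by
  have : (2 * Real.pi * Complex.I * p / 4 ^ n : ℂ) = ((2 * Real.pi * p / 4 ^ n : ℝ) : ℂ) * Complex.I := by
    push_cast; ring
  rw [wexp, this, Complex.norm_exp_ofReal_mul_I]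

lemma norm_wexp_sub (p n : ℕ) : ‖wexp p n - 1‖ ≤ 2 * Real.pi * p / 4 ^ n := by
  have : (2 * Real.pi * Complex.I * p / 4 ^ n : ℂ) = Complex.I * ((2 * Real.pi * p / 4 ^ n : ℝ) : ℂ) := by
    push_cast; ring
  rw [wexp, this]
  refine Real.norm_exp_I_mul_ofReal_sub_one_le.trans ?_
  rw [Real.norm_of_nonneg (by positivity)]

lemma prod_lower (p : ℕ) (h : ∀ n, 1 + wexp p (n + 1) ≠ 0) :
    ∃ c : ℝ, 0 < c ∧ ∀ m, c ≤ ∏ i ∈ Finset.range m, (‖1 + wexp p (i + 1)‖ / 2) := by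
  set f : ℕ → ℝ := fun i => ‖1 + wexp p (i + 1)‖ / 2 - 1 with hf
  have hff : ∀ i, ‖1 + wexp p (i + 1)‖ / 2 = 1 + f i := fun i => by simp [hf]
  have hpos : ∀ i, 0 < 1 + f i := fun i => by
    rw [← hff]; have := norm_pos_iff.mpr (h i); positivity
  have hle : ∀ i, 1 + f i ≤ 1 := fun i => by
    rw [← hff]
    have := norm_add_le 1 (wexp p (i + 1))
    rw [norm_wexp, norm_one] at this
    linarith
  have hs : Summable (fun i => ‖f i‖) := by
    have hg : Summable (fun i : ℕ => (Real.pi * p) * (1 / 4 : ℝ) ^ i) :=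
      (summable_geometric_of_lt_one (by norm_num) (by norm_num)).mul_left _
    refine hg.of_nonneg_of_le (fun i => norm_nonneg _) (fun i => ?_)
    rw [Real.norm_eq_abs, abs_of_nonpos (by linarith [hle i])]
    have h1 : (2 : ℝ) ≤ ‖1 + wexp p (i + 1)‖ + ‖wexp p (i + 1) - 1‖ := by
      have := norm_sub_le (1 + wexp p (i + 1)) (wexp p (i + 1) - 1)
      have e : (1 + wexp p (i + 1)) - (wexp p (i + 1) - 1) = 2 := by ring
      rw [e] at this
      simpa using this
    have h2 := norm_wexp_sub p (i + 1)
    have h3 : 2 * Real.pi * p / 4 ^ (i + 1) ≤ 2 * ((Real.pi * p) * (1 / 4 : ℝ) ^ i) := by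
      rw [one_div, inv_pow, pow_succ, mul_assoc, mul_div_assoc]
      gcongr
      rw [← div_eq_mul_inv]
      gcongr
      nlinarith [show (0 : ℝ) < 4 ^ i by positivity]
    have h4 := hff i
    linarith
  have hm : Multipliable (fun i => 1 + f i) := Real.multipliable_one_add_of_summable (by
    simpa using hs.of_norm)
  have hne := tprod_one_add_ne_zero_of_summable (f := f) (fun i => (hpos i).ne') hs
  have ht := hm.hasProd.tendsto_prod_nat
  have ha : Antitone (fun n => ∏ i ∈ Finset.range n, (1 + f i)) := by
    apply antitone_nat_of_succ_le
    intro n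
    rw [Finset.prod_range_succ]
    exact mul_le_of_le_one_right (Finset.prod_nonneg fun i _ => (hpos i).le) (hle n)
  refine ⟨∏' i, (1 + f i), lt_of_le_of_ne ?_ hne.symm, fun m => ?_⟩
  · exact ge_of_tendsto' ht (fun n => Finset.prod_nonneg fun i _ => (hpos i).le)
  · simp_rw [hff]
    exact ha.le_of_tendsto ht m

lemma val_of_wexp (p n : ℕ) (h : 1 + wexp p (n + 1) = 0) :
    ∃ u, Odd u ∧ p = 2 ^ (2 * (n + 1) - 1) * u := by
  have h' : wexp p (n + 1) = -1 := by linear_combination h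
  rw [wexp, ← Complex.exp_pi_mul_I, Complex.exp_eq_exp_iff_exists_int] at h'
  obtain ⟨m, hm⟩ := h'
  have hpi : (Real.pi : ℂ) * Complex.I ≠ 0 := by simp [Real.pi_ne_zero]
  have h1 : (2 * p : ℂ) = 4 ^ (n + 1) * (1 + 2 * m) := by
    apply mul_left_cancel₀ hpi
    rw [div_eq_iff (pow_ne_zero _ (by norm_num))] at hm
    linear_combination hm
  have h2 : (2 * p : ℤ) = 4 ^ (n + 1) * (1 + 2 * m) := by exact_mod_cast h1
  have h3 : (p : ℤ) = 2 ^ (2 * (n + 1) - 1) * (1 + 2 * m) := by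
    have e : (4 : ℤ) ^ (n + 1) = 2 * 2 ^ (2 * (n + 1) - 1) := by
      rw [← pow_succ', show 2 * (n + 1) - 1 + 1 = 2 * (n + 1) by omega, pow_mul]; norm_num
    rw [e] at h2
    linarith
  have h4 : 0 ≤ 1 + 2 * m := by
    by_contra hneg
    push Not at hneg
    have : (2 : ℤ) ^ (2 * (n + 1) - 1) * (1 + 2 * m) < 0 := mul_neg_of_pos_of_neg (by positivity) hneg
    omega
  refine ⟨(1 + 2 * m).toNat, ⟨m.toNat, by omega⟩, ?_⟩
  zify
  rw [Int.toNat_of_nonneg h4, h3]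

lemma dvd_of_val (p q l u : ℕ) (hu : Odd u)
    (h : p = 2 ^ (2 * l - 1) * u ∨ q = 2 ^ (2 * l - 1) * u) :
    (1 + X ^ (2 ^ (2 * l - 1)) : Polynomial ℤ) ∣
          (1 + X ^ (3 * p) + X ^ (3 * q) + X ^ (3 * p + 3 * q)) := by
  have e : (1 + X ^ (3 * p) + X ^ (3 * q) + X ^ (3 * p + 3 * q) : Polynomial ℤ)
    = (1 + X ^ (3 * p)) * (1 + X ^ (3 * q)) := by rw [pow_add]; ring
  have key : (1 + X ^ (2 ^ (2 * l - 1)) : Polynomial ℤ) ∣ 1 + X ^ (3 * (2 ^ (2 * l - 1) * u)) := by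
    have h3 : Odd (3 * u) := Odd.mul (by decide) hu
    have := h3.add_dvd_pow_add_pow (1 : Polynomial ℤ) (X ^ (2 ^ (2 * l - 1)))
    rw [one_pow, ← pow_mul] at this
    rwa [show 3 * (2 ^ (2 * l - 1) * u) = 2 ^ (2 * l - 1) * (3 * u) by ring]
  rw [e]
  rcases h with h | h
  · exact Dvd.dvd.mul_right (h ▸ key) _
  · exact Dvd.dvd.mul_left (h ▸ key) _

/-- the base-4 number attached to a subset of `range k` -/
def sub4 (k : ℕ) (s : Finset ℕ) : ℕ := ∑ i ∈ s, 4 ^ (k - 1 - i)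

lemma sub4_lt (k : ℕ) (s : Finset ℕ) (hs : s ⊆ Finset.range k) : sub4 k s < 4 ^ k := by
  have h1 : sub4 k s ≤ ∑ i ∈ Finset.range k, 4 ^ (k - 1 - i) :=
    Finset.sum_le_sum_of_subset hs
  rw [Finset.sum_range_reflect (fun i => 4 ^ i) k] at h1
  have h2 : ∀ k, ∑ i ∈ Finset.range k, 4 ^ i < 4 ^ k := by
    intro k
    induction k with
    | zero => simp
    | succ k ih => rw [Finset.sum_range_succ, pow_succ]; omega
  exact h1.trans_lt (h2 k)

lemma prod_sub4 (k p : ℕ) (z : ℂ) :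
    ∏ i ∈ Finset.range k, (1 + z ^ (p * 4 ^ (k - 1 - i))) =
      ∑ s ∈ (Finset.range k).powerset, z ^ (p * sub4 k s) := by
  rw [Finset.prod_one_add]
  refine Finset.sum_congr rfl fun s _ => ?_
  rw [Finset.prod_pow_eq_pow_sum, sub4, Finset.mul_sum]

lemma sub4_real (k : ℕ) (s : Finset ℕ) (hs : s ⊆ Finset.range k) :
    ∑ n : Fin k, (if (n : ℕ) ∈ s then (1 : ℝ) else 0) / 4 ^ ((n : ℕ) + 1) = sub4 k s / 4 ^ k := by
  rw [Fin.sum_univ_eq_sum_range (fun n => (if n ∈ s then (1 : ℝ) else 0) / 4 ^ (n + 1)), sub4]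
  push_cast
  rw [Finset.sum_div, ← Finset.sum_subset hs]
  · refine Finset.sum_congr rfl fun i hi => ?_
    have : i < k := Finset.mem_range.mp (hs hi)
    rw [if_pos hi, div_eq_div_iff (by positivity) (by positivity), one_mul, ← pow_add]
    congr 1
    omega
  · intro i _ hi
    simp [hi]

lemma overlap_of_collision (p q : ℕ) (hp : 0 < p) (hpq : p < q) (k : ℕ)
    (s t s' t' : Finset ℕ) (hs : s ⊆ Finset.range k) (ht : t ⊆ Finset.range k)
    (hs' : s' ⊆ Finset.range k) (ht' : t' ⊆ Finset.range k)
    (h : p * sub4 k s + q * sub4 k t = p * sub4 k s' + q * sub4 k t') (hne : ¬ (s = s' ∧ t = t')) :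
    HasExactOverlap ((p : ℝ) / q) := by
  have hq' : (0 : ℝ) < q := by exact_mod_cast (hp.trans hpq)
  have hp' : (0 : ℝ) < p := by exact_mod_cast hp
  have hpq' : (p : ℝ) < q := by exact_mod_cast hpq
  let c : Finset ℕ → Finset ℕ → Fin k → ℝ := fun s t n =>
    (3 * ((p : ℝ) / q)) * (if (n : ℕ) ∈ s then 1 else 0) + 3 * (if (n : ℕ) ∈ t then 1 else 0)
  have hc : ∀ s t n, c s t n ∈ Omega ((p : ℝ) / q) := by
    intro s t n
    simp only [c, Omega, Set.mem_insert_iff, Set.mem_singleton_iff]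
    by_cases h1 : (n : ℕ) ∈ s <;> by_cases h2 : (n : ℕ) ∈ t <;> simp [h1, h2]
  have hsum : ∀ s t, s ⊆ Finset.range k → t ⊆ Finset.range k →
      ∑ n : Fin k, c s t n / 4 ^ ((n : ℕ) + 1) =
        (3 / (q * 4 ^ k)) * ((p * sub4 k s + q * sub4 k t : ℕ) : ℝ) := by
    intro s t hs ht
    have e1 := sub4_real k s hs
    have e2 := sub4_real k t ht
    simp only [c, add_div, Finset.sum_add_distrib]
    have e3 : ∀ (A : ℝ) (x : Fin k → ℝ),
        ∑ n : Fin k, A * x n / 4 ^ ((n : ℕ) + 1) = A * ∑ n : Fin k, x n / 4 ^ ((n : ℕ) + 1) := by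
      intro A x
      rw [Finset.mul_sum]
      exact Finset.sum_congr rfl fun n _ => mul_div_assoc _ _ _
    rw [e3, e3, e1, e2]
    push_cast
    field_simp
  have hneq : c s t ≠ c s' t' := by
    intro heq
    apply hne
    have key : ∀ n, n < k → ((n ∈ s ↔ n ∈ s') ∧ (n ∈ t ↔ n ∈ t')) := by
      intro n hn
      have h1 := congrFun heq ⟨n, hn⟩
      simp only [c] at h1
      have hr : 0 < (p : ℝ) / q := by positivity
      have hr1 : (p : ℝ) / q < 1 := (div_lt_one hq').mpr hpq'
      generalize (p : ℝ) / q = r at *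
      by_cases a1 : n ∈ s <;> by_cases a2 : n ∈ t <;> by_cases a3 : n ∈ s' <;> by_cases a4 : n ∈ t' <;>
        simp only [a1, a2, a3, a4, if_true, if_false, true_iff, false_iff, not_true, and_self, iff_self] at h1 ⊢ <;> linarith
    constructor
    · ext n
      by_cases hn : n < k
      · exact (key n hn).1
      · exact ⟨fun h => absurd (Finset.mem_range.mp (hs h)) hn, fun h => absurd (Finset.mem_range.mp (hs' h)) hn⟩
    · ext n
      by_cases hn : n < k
      · exact (key n hn).2
      · exact ⟨fun h => absurd (Finset.mem_range.mp (ht h)) hn, fun h => absurd (Finset.mem_range.mp (ht' h)) hn⟩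
  refine ⟨k, ?_, c s t, c s' t', hc s t, hc s' t', hneq, ?_⟩
  · rcases Nat.eq_zero_or_pos k with rfl | h
    · exact absurd (_root_.funext fun n : Fin 0 => n.elim0) hneq
    · exact h
  · rw [hsum s t hs ht, hsum s' t' hs' ht', h]

lemma parseval_aux {ι : Type*} [DecidableEq ι] (N : ℕ) (hN : 0 < N) (w : ℂ) (hw : IsPrimitiveRoot w N) (I : Finset ι)
    (g : ι → ℕ) :
    ∑ r ∈ Finset.range N, ‖∑ x ∈ I, (w ^ r) ^ g x‖ ^ 2 =
      N * (((I ×ˢ I).filter (fun z => g z.1 ≡ g z.2 [MOD N])).card : ℝ) := by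
  have hn : ‖w‖ = 1 := hw.norm'_eq_one hN.ne'
  have hw0 : w ≠ 0 := by intro h; rw [h] at hn; simp at hn
  have hconj : (starRingEnd ℂ) w = w⁻¹ := by
    rw [Complex.inv_eq_conj hn]
  have h1 : ∀ x y : ι, ∑ r ∈ Finset.range N, (w ^ g x * (w ^ g y)⁻¹) ^ r =
      if g x ≡ g y [MOD N] then (N : ℂ) else 0 := by
    intro x y
    have hiff : w ^ g x * (w ^ g y)⁻¹ = 1 ↔ g x ≡ g y [MOD N] := by
      rw [mul_inv_eq_one₀ (pow_ne_zero _ hw0), hw.eq_orderOf]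
      have hu := pow_eq_pow_iff_modEq (x := Units.mk0 w hw0) (n := g x) (m := g y)
      rw [← orderOf_units, Units.val_mk0, Units.ext_iff, Units.val_pow_eq_pow_val, Units.val_pow_eq_pow_val, Units.val_mk0] at hu
      exact hu
    split_ifs with h
    · rw [hiff.mpr h]; simp
    · rw [geom_sum_eq (fun h' => h (hiff.mp h'))]
      rw [mul_pow, inv_pow, ← pow_mul, ← pow_mul, mul_comm, mul_comm (g x), mul_comm (g y), pow_mul w N, pow_mul w N, hw.pow_eq_one]
      simp
  have h2 : (∑ r ∈ Finset.range N, ((‖∑ x ∈ I, (w ^ r) ^ g x‖ ^ 2 : ℝ) : ℂ)) =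
      N * (((I ×ˢ I).filter (fun z => g z.1 ≡ g z.2 [MOD N])).card : ℂ) := by
    have : ∀ r, ((‖∑ x ∈ I, (w ^ r) ^ g x‖ ^ 2 : ℝ) : ℂ) =
        ∑ z ∈ I ×ˢ I, (w ^ g z.1 * (w ^ g z.2)⁻¹) ^ r := by
      intro r
      push_cast
      rw [← Complex.mul_conj', map_sum, Finset.sum_mul_sum, Finset.sum_product]
      refine Finset.sum_congr rfl fun x _ => Finset.sum_congr rfl fun y _ => ?_
      rw [map_pow, map_pow, hconj, mul_pow, inv_pow, inv_pow, inv_pow, ← pow_mul, ← pow_mul, ← pow_mul, ← pow_mul, mul_comm r, mul_comm r]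
    simp_rw [this]
    rw [Finset.sum_comm]
    simp_rw [h1]
    rw [← Finset.sum_filter, Finset.sum_const, nsmul_eq_mul, mul_comm]
  exact_mod_cast h2

lemma count_aux {ι : Type*} [DecidableEq ι] (N M : ℕ) (hN : 0 < N) (I : Finset ι) (g : ι → ℕ)
    (hg : Set.InjOn g I) (hM : ∀ x ∈ I, g x < M * N) :
    ((I ×ˢ I).filter (fun z => g z.1 ≡ g z.2 [MOD N])).card ≤ I.card * M := by
  have : I.card * M = (I ×ˢ Finset.range M).card := by simp
  rw [this]
  apply Finset.card_le_card_of_injOn (fun z => (z.1, g z.2 / N))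
  · intro z hz
    simp only [Finset.coe_filter, Finset.mem_product, Set.mem_ofPred_eq] at hz
    simp only [Finset.coe_product, Set.mem_prod, Finset.mem_coe, Finset.mem_range]
    exact ⟨hz.1.1, Nat.div_lt_of_lt_mul (by rw [mul_comm]; exact hM _ hz.1.2)⟩
  · rintro ⟨x, y⟩ hz ⟨x', y'⟩ hz' heq
    simp only [Finset.coe_filter, Finset.mem_product, Set.mem_ofPred_eq] at hz hz'
    simp only [Prod.mk.injEq] at heq
    obtain ⟨rfl, h⟩ := heq
    have h2 : g y % N = g y' % N := hz.2.symm.trans hz'.2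
    have h3 : g y = g y' := by rw [← Nat.div_add_mod (g y) N, ← Nat.div_add_mod (g y') N, h, h2]
    rw [hg hz.1.2 hz'.1.2 h3]

lemma factor_aux (p j m : ℕ) :
    ∏ i ∈ Finset.range (j + m), ‖1 + ((Complex.exp (2 * Real.pi * Complex.I / (4 ^ (j + m) : ℕ)) ^ 4 ^ j) ^
      (p * 4 ^ (j + m - 1 - i)))‖ = 2 ^ (j + m) * ∏ i ∈ Finset.range m, (‖1 + wexp p (i + 1)‖ / 2) := by
  rw [Finset.prod_range_add, Finset.prod_div_distrib, Finset.prod_const, Finset.card_range]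
  have h1 : ∀ i ∈ Finset.range j, ‖1 + ((Complex.exp (2 * Real.pi * Complex.I / (4 ^ (j + m) : ℕ)) ^ 4 ^ j) ^
      (p * 4 ^ (j + m - 1 - i)))‖ = 2 := by
    intro i hi
    have hi := Finset.mem_range.mp hi
    have hdvd : 4 ^ (j + m) ∣ 4 ^ j * (p * 4 ^ (j + m - 1 - i)) := by
      rw [pow_add]
      exact mul_dvd_mul_left _ (Dvd.dvd.mul_left (pow_dvd_pow _ (by omega)) _)
    obtain ⟨d, hd⟩ := hdvd
    rw [← pow_mul, hd, pow_mul,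
      (Complex.isPrimitiveRoot_exp (4 ^ (j + m)) (by positivity)).pow_eq_one, one_pow]
    norm_num
  have h2 : ∀ i ∈ Finset.range m, ‖1 + ((Complex.exp (2 * Real.pi * Complex.I / (4 ^ (j + m) : ℕ)) ^ 4 ^ j) ^
      (p * 4 ^ (j + m - 1 - (j + i))))‖ = ‖1 + wexp p (i + 1)‖ := by
    intro i hi
    have hi := Finset.mem_range.mp hi
    obtain ⟨d, rfl⟩ := Nat.exists_eq_add_of_lt hi
    rw [← pow_mul, ← Complex.exp_nat_mul, wexp]
    congr 3
    rw [show j + (i + d + 1) - 1 - (j + i) = d by omega]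
    push_cast
    have h4 : ∀ n, (4 : ℂ) ^ n ≠ 0 := fun n => pow_ne_zero _ (by norm_num)
    have := h4 j; have := h4 i; have := h4 d
    simp only [pow_add, pow_one]
    field_simp
  rw [Finset.prod_congr rfl h1, Finset.prod_congr rfl h2, Finset.prod_const, Finset.card_range, pow_add]
  field_simp

lemma overlap_of_nonvanish (p q : ℕ) (hp : 0 < p) (hpq : p < q)
    (h1 : ∀ n, 1 + wexp p (n + 1) ≠ 0) (h2 : ∀ n, 1 + wexp q (n + 1) ≠ 0) :
    HasExactOverlap ((p : ℝ) / q) := by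
  by_contra hno
  obtain ⟨c, hc, hcp⟩ := prod_lower p h1
  obtain ⟨c', hc', hcq⟩ := prod_lower q h2
  obtain ⟨k, hk⟩ := exists_nat_gt (((p + q : ℕ) : ℝ) / (c * c') ^ 2)
  rw [div_lt_iff₀ (by positivity)] at hk
  set N := 4 ^ k with hN
  have hN0 : 0 < N := by positivity
  set w := Complex.exp (2 * Real.pi * Complex.I / (N : ℕ)) with hw
  have hprim : IsPrimitiveRoot w N := Complex.isPrimitiveRoot_exp N hN0.ne'
  set I := (Finset.range k).powerset ×ˢ (Finset.range k).powerset with hI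
  set g : Finset ℕ × Finset ℕ → ℕ := fun z => p * sub4 k z.1 + q * sub4 k z.2 with hg
  have hinj : Set.InjOn g I := by
    rintro ⟨s, t⟩ hst ⟨s', t'⟩ hst' heq
    simp only [hI, Finset.coe_product, Set.mem_prod, Finset.mem_coe, Finset.mem_powerset] at hst hst'
    by_contra hne
    exact hno (overlap_of_collision p q hp hpq k s t s' t' hst.1 hst.2 hst'.1 hst'.2 heq
      (fun h => hne (Prod.ext h.1 h.2)))
  have hlt : ∀ x ∈ I, g x < (p + q) * N := by
    rintro ⟨s, t⟩ hst
    simp only [hI, Finset.mem_product, Finset.mem_powerset] at hst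
    have e1 := sub4_lt k s hst.1
    have e2 := sub4_lt k t hst.2
    simp only [hg]
    rw [add_mul]
    exact add_lt_add (Nat.mul_lt_mul_of_pos_left e1 hp) (Nat.mul_lt_mul_of_pos_left e2 (hp.trans hpq))
  have hcard : I.card = N := by
    simp only [hI, Finset.card_product, Finset.card_powerset, Finset.card_range, hN]
    rw [← mul_pow]; norm_num
  have hP := parseval_aux N hN0 w hprim I g
  have hC := count_aux N (p + q) hN0 I g hinj hlt
  rw [hcard] at hC
  have hup : ∑ r ∈ Finset.range N, ‖∑ x ∈ I, (w ^ r) ^ g x‖ ^ 2 ≤ (N : ℝ) * (N * (p + q : ℕ)) := by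
    rw [hP]
    gcongr
    exact_mod_cast hC
  have hlow : ∀ j ∈ Finset.range k, ((N : ℝ) * (c * c')) ^ 2 ≤ ‖∑ x ∈ I, (w ^ (4 ^ j)) ^ g x‖ ^ 2 := by
    intro j hj
    obtain ⟨m, hm⟩ := Nat.exists_eq_add_of_le (Finset.mem_range.mp hj).le
    have e : ∑ x ∈ I, (w ^ (4 ^ j)) ^ g x =
        (∏ i ∈ Finset.range k, (1 + (w ^ (4 ^ j)) ^ (p * 4 ^ (k - 1 - i)))) *
        (∏ i ∈ Finset.range k, (1 + (w ^ (4 ^ j)) ^ (q * 4 ^ (k - 1 - i)))) := by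
      rw [prod_sub4, prod_sub4, Finset.sum_mul_sum, hI, Finset.sum_product]
      simp only [hg, pow_add]
    have f1 := factor_aux p j m
    have f2 := factor_aux q j m
    rw [← hm, ← hN, ← hw] at f1 f2
    rw [e, norm_mul, norm_prod, norm_prod, f1, f2]
    have hNk : (N : ℝ) = 2 ^ k * 2 ^ k := by
      rw [hN, ← mul_pow]; norm_num
    rw [hNk]
    have g1 := hcp m
    have g2 := hcq m
    calc (2 ^ k * 2 ^ k * (c * c')) ^ 2 = ((2 ^ k * c) * (2 ^ k * c')) ^ 2 := by ring
      _ ≤ _ := by gcongr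
  have hlow2 : (k : ℝ) * ((N : ℝ) * (c * c')) ^ 2 ≤ ∑ r ∈ Finset.range N, ‖∑ x ∈ I, (w ^ r) ^ g x‖ ^ 2 := by
    have hin : Set.InjOn (fun j : ℕ => 4 ^ j) (Finset.range k : Set ℕ) :=
      (Nat.pow_right_injective (by norm_num : 2 ≤ 4)).injOn
    have s1 := Finset.sum_le_sum hlow
    rw [Finset.sum_const, Finset.card_range, nsmul_eq_mul] at s1
    refine s1.trans ?_
    rw [← Finset.sum_image (f := fun r => ‖∑ x ∈ I, (w ^ r) ^ g x‖ ^ 2) hin]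
    apply Finset.sum_le_sum_of_subset_of_nonneg
    · intro r hr
      obtain ⟨j, hj, rfl⟩ := Finset.mem_image.mp hr
      exact Finset.mem_range.mpr (Nat.pow_lt_pow_right (by norm_num) (Finset.mem_range.mp hj))
    · intros; positivity
  have hfin := hlow2.trans hup
  have hNr : (0 : ℝ) < N := by exact_mod_cast hN0
  have : (N : ℝ) ^ 2 * (k * (c * c') ^ 2) ≤ (N : ℝ) ^ 2 * (p + q : ℕ) := by
    calc _ = (k : ℝ) * ((N : ℝ) * (c * c')) ^ 2 := by ring
      _ ≤ _ := hfin
      _ = _ := by ring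
  have := le_of_mul_le_mul_left this (by positivity)
  linarith

theorem no_overlap_iff_divisible (p q : ℕ) (hp : 0 < p) (hpq : p < q)
    (hco : Nat.Coprime p q) :
    ¬ HasExactOverlap ((p : ℝ) / q) ↔
      ∃ l : ℕ, 0 < l ∧
        ((1 + X ^ (2 ^ (2 * l - 1)) : Polynomial ℤ) ∣
          (1 + X ^ (3 * p) + X ^ (3 * q) + X ^ (3 * p + 3 * q))) := by
  constructor
  · intro hno
    by_contra hcon
    push Not at hcon
    apply hno
    apply overlap_of_nonvanish p q hp hpq
    · intro n h
      obtain ⟨u, hu, h⟩ := val_of_wexp p n h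
      exact hcon (n + 1) (by omega) (dvd_of_val p q (n + 1) u hu (Or.inl h))
    · intro n h
      obtain ⟨u, hu, h⟩ := val_of_wexp q n h
      exact hcon (n + 1) (by omega) (dvd_of_val p q (n + 1) u hu (Or.inr h))
  · rintro ⟨l, hl, h⟩
    obtain ⟨u, hu, h⟩ := val_of_dvd p q l h
    exact no_overlap_of_val p q hp (hp.trans hpq) hco l u hl hu h
end
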